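/- arXiv:0909.4258 — 6 statements merged into one kernel-verified Lean document; each statement's English description precedes it below -/
import Mathlib

section
/- Assume P ∈ C²(ℝⁿ,ℝⁿ), Q ∈ C¹(ℝⁿ×[0,1],ℝⁿ), v₀ ∈ ℝⁿ satisfies P(v₀)=0, and Π : ℝⁿ → ℝⁿ is a linear projector with ΠP'(v₀) = 0 and ΠQ(v₀,0) = 0. Define Ψ(w,ε) for ε > 0 by Ψ(w,ε) = (1/ε)(Φ(v₀+εw,ε) − ΠΦ(v₀+εw,ε)) + (1/ε²)ΠΦ(v₀+εw,ε) where Φ(v,ε) = P(v)+εQ(v,ε), and define Ψ(w,0) = (1/2)ΠP''(v₀)[w,w] + ΠQ'_v(v₀,0)w + ΠQ'_ε(v₀,0) + (I−Π)P'(v₀)w + (I−Π)Q(v₀,0). Then Ψ is continuous on ℝⁿ×[0,1]; in particular Ψ(w,ε) → Ψ(w₀,0) as (w,ε) → (w₀,0) with ε > 0, for every w₀ ∈ ℝⁿ. -/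
open Set Filter Topology

theorem aux_taylor2 {E F : Type*} [NormedAddCommGroup E] [NormedSpace ℝ E]
    [NormedAddCommGroup F] [NormedSpace ℝ F] (P : E → F) (hP : ContDiff ℝ 2 P) (v : E) :
    (fun h : E => P (v + h) - P v - fderiv ℝ P v h - (1/2 : ℝ) • fderiv ℝ (fderiv ℝ P) v h h)
      =o[𝓝 0] fun h : E => ‖h‖ ^ 2 := by
  have hsymm : IsSymmSndFDerivAt ℝ P v := hP.contDiffAt.isSymmSndFDerivAt (by simp)
  have hd : Differentiable ℝ P := hP.differentiable (by norm_num)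
  have hP1 : ContDiff ℝ 1 (fderiv ℝ P) := hP.fderiv_right (by norm_num)
  have hd2 : HasFDerivAt (fderiv ℝ P) (fderiv ℝ (fderiv ℝ P) v) v :=
    (hP1.differentiable (by norm_num) v).hasFDerivAt
  set D := fderiv ℝ (fderiv ℝ P) v with hD
  set R : E → F := fun h => P (v + h) - P v - fderiv ℝ P v h - (1/2 : ℝ) • D h h with hR
  have hder : ∀ h : E, HasFDerivAt R (fderiv ℝ P (v + h) - fderiv ℝ P v - D h) h := by
    intro h
    have h1 : HasFDerivAt (fun h => P (v + h)) (fderiv ℝ P (v + h)) h := by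
      have := (hd (v + h)).hasFDerivAt.comp h ((hasFDerivAt_id h).const_add v)
      simpa [Function.comp_def] using this
    have h2 : HasFDerivAt (fun h => D h h) (D h + D.flip h) h := by
      have := D.hasFDerivAt (x := h) |>.clm_apply (hasFDerivAt_id h)
      simpa using this
    have h3 := ((h1.sub_const (P v)).sub (fderiv ℝ P v).hasFDerivAt).sub (h2.const_smul (1/2 : ℝ))
    refine h3.congr_fderiv ?_
    ext k
    have : D k h = D h k := hsymm k h
    simp [this]
    module
  rw [Asymptotics.isLittleO_iff]
  intro c hc
  have ho := (hasFDerivAt_iff_isLittleO_nhds_zero.1 hd2)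
  rw [Asymptotics.isLittleO_iff] at ho
  obtain ⟨δ, hδ, hb⟩ := Metric.eventually_nhds_iff_ball.1 (ho hc)
  refine Metric.eventually_nhds_iff_ball.2 ⟨δ, hδ, fun h hh => ?_⟩
  have key := (convex_closedBall (0 : E) ‖h‖).norm_image_sub_le_of_norm_hasFDerivWithin_le
    (f := R) (f' := fun h => fderiv ℝ P (v + h) - fderiv ℝ P v - D h) (C := c * ‖h‖)
    (x := 0) (y := h) (fun x _ => (hder x).hasFDerivWithinAt) (fun x hx => ?_) (by simp) (by simp)
  · have h0 : R 0 = 0 := by simp [hR]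
    rw [h0, sub_zero, sub_zero] at key
    simpa [pow_two, mul_assoc] using key
  · have hx' : ‖x‖ ≤ ‖h‖ := by simpa using hx
    have hh' : ‖h‖ < δ := by simpa using hh
    refine (hb x (by simpa using hx'.trans_lt hh')).trans ?_
    gcongr

/-- first assertion of Lemma 1: with `ΠP'(v₀) = 0`, `ΠQ(v₀,0) = 0`, the map
`Ψ` (defined by the scaled formula for `ε > 0` and by
`Ψ(w,0) = ½ΠP''(v₀)[w,w] + ΠQ'_v(v₀,0)w + ΠQ'_ε(v₀,0) + (I−Π)P'(v₀)w + (I−Π)Q(v₀,0)`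
at `ε = 0`) is continuous on `ℝⁿ × [0,1]`; in particular
`Ψ(w,ε) → Ψ(w₀,0)` as `(w,ε) → (w₀,0)` with `ε > 0`. -/
theorem stmt_1 {n : ℕ}
    (P : EuclideanSpace ℝ (Fin n) → EuclideanSpace ℝ (Fin n))
    (Q : EuclideanSpace ℝ (Fin n) → ℝ → EuclideanSpace ℝ (Fin n))
    (hP : ContDiff ℝ 2 P)
    (hQ : ContDiff ℝ 1 fun p : EuclideanSpace ℝ (Fin n) × ℝ => Q p.1 p.2)
    (v₀ : EuclideanSpace ℝ (Fin n)) (hv₀ : P v₀ = 0)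
    (Pr : EuclideanSpace ℝ (Fin n) →L[ℝ] EuclideanSpace ℝ (Fin n))
    (hPr : ∀ x, Pr (Pr x) = Pr x)
    (hPrP' : ∀ x, Pr (fderiv ℝ P v₀ x) = 0)
    (hPrQ : Pr (Q v₀ 0) = 0)
    (Ψ : EuclideanSpace ℝ (Fin n) → ℝ → EuclideanSpace ℝ (Fin n))
    (hΨpos : ∀ w : EuclideanSpace ℝ (Fin n), ∀ ε > (0:ℝ), Ψ w ε =
      ε⁻¹ • ((P (v₀ + ε • w) + ε • Q (v₀ + ε • w) ε)
          - Pr (P (v₀ + ε • w) + ε • Q (v₀ + ε • w) ε)) +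
        (ε ^ 2)⁻¹ • Pr (P (v₀ + ε • w) + ε • Q (v₀ + ε • w) ε))
    (hΨ0 : ∀ w : EuclideanSpace ℝ (Fin n), Ψ w 0 =
      (1/2 : ℝ) • Pr (fderiv ℝ (fderiv ℝ P) v₀ w w)
        + Pr (fderiv ℝ (fun v => Q v 0) v₀ w)
        + Pr (deriv (fun e => Q v₀ e) 0)
        + (fderiv ℝ P v₀ w - Pr (fderiv ℝ P v₀ w))
        + (Q v₀ 0 - Pr (Q v₀ 0))) :
    ContinuousOn (fun p : EuclideanSpace ℝ (Fin n) × ℝ => Ψ p.1 p.2)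
        (univ ×ˢ Icc (0:ℝ) 1) ∧
      ∀ w₀ : EuclideanSpace ℝ (Fin n),
        Tendsto (fun p : EuclideanSpace ℝ (Fin n) × ℝ => Ψ p.1 p.2)
          ((𝓝 w₀) ×ˢ (𝓝[>] (0:ℝ))) (𝓝 (Ψ w₀ 0)) := by
  have hPd : HasFDerivAt P (fderiv ℝ P v₀) v₀ :=
    (hP.differentiable (by norm_num) v₀).hasFDerivAt
  set q : EuclideanSpace ℝ (Fin n) × ℝ → EuclideanSpace ℝ (Fin n) := fun p => Q p.1 p.2 with hq
  have hQd : HasFDerivAt q (fderiv ℝ q (v₀, 0)) (v₀, 0) :=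
    (hQ.differentiable (by norm_num) (v₀, 0)).hasFDerivAt
  set L := fderiv ℝ q (v₀, 0) with hL
  have hQv : ∀ w, fderiv ℝ (fun v => Q v 0) v₀ w = L (w, 0) := by
    intro w
    have h1 := hQd.comp v₀ (hasFDerivAt_prodMk_left (𝕜 := ℝ) v₀ (0 : ℝ))
    have h2 : HasFDerivAt (fun v => Q v 0) (L.comp (ContinuousLinearMap.inl ℝ _ ℝ)) v₀ := h1
    rw [h2.fderiv]
    simp
  have hQe : deriv (fun e => Q v₀ e) 0 = L (0, 1) := by
    have h1 := hQd.comp (0 : ℝ) (hasFDerivAt_prodMk_right (𝕜 := ℝ) v₀ (0 : ℝ))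
    have h2 : HasFDerivAt (fun e => Q v₀ e) (L.comp (ContinuousLinearMap.inr ℝ _ ℝ)) 0 := h1
    rw [h2.hasDerivAt.deriv]
    simp
  have hPc : Continuous P := hP.continuous
  have hQc : Continuous q := hQ.continuous
  have hc0 : Continuous (fun w => Ψ w 0) := by
    simp only [hΨ0, hQv]
    fun_prop
  have hT : ∀ w₀ : EuclideanSpace ℝ (Fin n),
        Tendsto (fun p : EuclideanSpace ℝ (Fin n) × ℝ => Ψ p.1 p.2)
          ((𝓝 w₀) ×ˢ (𝓝[>] (0:ℝ))) (𝓝 (Ψ w₀ 0)) := by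
    intro w₀
    set l := (𝓝 w₀) ×ˢ (𝓝[>] (0:ℝ)) with hl
    have hle : l ≤ 𝓝 (w₀, (0:ℝ)) := by
      rw [nhds_prod_eq]
      exact Filter.prod_mono le_rfl nhdsWithin_le_nhds
    have hpos : ∀ᶠ p in l, 0 < p.2 := tendsto_snd.eventually self_mem_nhdsWithin
    have hh : Tendsto (fun p : EuclideanSpace ℝ (Fin n) × ℝ => p.2 • p.1) l (𝓝 0) := by
      have : Continuous (fun p : EuclideanSpace ℝ (Fin n) × ℝ => p.2 • p.1) := by fun_prop
      simpa using (this.tendsto (w₀, 0)).mono_left hle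
    have hε : Tendsto (fun p : EuclideanSpace ℝ (Fin n) × ℝ => p.2) l (𝓝 0) :=
      tendsto_snd.mono_right nhdsWithin_le_nhds
    have hO : (fun p : EuclideanSpace ℝ (Fin n) × ℝ => p.2 • p.1) =O[l] fun p => p.2 := by
      have h1 : (fun p : EuclideanSpace ℝ (Fin n) × ℝ => p.1) =O[l] fun _ => (1:ℝ) :=
        (tendsto_fst (f := 𝓝 w₀) (g := 𝓝[>] (0:ℝ))).isBigO_one ℝ
      simpa using (Asymptotics.isBigO_refl (fun p : EuclideanSpace ℝ (Fin n) × ℝ => p.2) l).smul h1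
    have hsm : ∀ (f : EuclideanSpace ℝ (Fin n) × ℝ → EuclideanSpace ℝ (Fin n))
        (g : EuclideanSpace ℝ (Fin n) × ℝ → ℝ), f =o[l] g →
        Tendsto (fun p => (g p)⁻¹ • f p) l (𝓝 0) := fun f g h => h.tendsto_inv_smul_nhds_zero
    have t1 := hsm _ _ (((hasFDerivAt_iff_isLittleO_nhds_zero.1 hPd).comp_tendsto hh).trans_isBigO hO)
    have t2 := hsm _ (fun p => p.2 ^ 2)
      (((aux_taylor2 P hP v₀).comp_tendsto hh).trans_isBigO (hO.norm_left.pow 2))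
    have hh2 : Tendsto (fun p : EuclideanSpace ℝ (Fin n) × ℝ => (p.2 • p.1, p.2)) l (𝓝 0) :=
      hh.prodMk_nhds hε
    have t3 := hsm _ _ (((hasFDerivAt_iff_isLittleO_nhds_zero.1 hQd).comp_tendsto hh2).trans_isBigO
      (hO.prod_left (Asymptotics.isBigO_refl _ _)))
    have t4 : Tendsto (fun p : EuclideanSpace ℝ (Fin n) × ℝ => Q (v₀ + p.2 • p.1) p.2 - Q v₀ 0)
        l (𝓝 0) := by
      have : Continuous (fun p : EuclideanSpace ℝ (Fin n) × ℝ =>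
          q (v₀ + p.2 • p.1, p.2) - q (v₀, 0)) := by fun_prop
      simpa [hq] using (this.tendsto (w₀, 0)).mono_left hle
    have t5 : Tendsto (fun p : EuclideanSpace ℝ (Fin n) × ℝ => Ψ p.1 0) l (𝓝 (Ψ w₀ 0)) :=
      (hc0.tendsto w₀).comp tendsto_fst
    have hz : ∀ f : EuclideanSpace ℝ (Fin n) × ℝ → EuclideanSpace ℝ (Fin n),
        Tendsto f l (𝓝 0) → Tendsto (fun p => Pr (f p)) l (𝓝 0) := by
      intro f hf
      simpa [Function.comp_def] using (Pr.continuous.tendsto 0).comp hf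
    have T := ((((t5.add (t1.sub (hz _ t1))).add (t4.sub (hz _ t4))).add (hz _ t2)).add (hz _ t3))
    simp only [sub_zero, add_zero] at T
    refine T.congr' ?_
    filter_upwards [hpos] with p hp
    obtain ⟨w, ε⟩ := p
    have hne : ε ≠ 0 := ne_of_gt hp
    have hLs : L (ε • w, ε) = ε • L (w, 0) + ε • L (0, 1) := by
      rw [← map_smul, ← map_smul, ← map_add]
      simp
    simp only [hΨpos w ε hp, hΨ0, hQv, hQe, Function.comp, hv₀, hq, Prod.mk_add_mk, zero_add, hLs,
      map_add, map_sub, map_smul, map_zero, hPrP', hPrQ, smul_apply]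
    match_scalars <;> field_simp <;> ring
  refine ⟨?_, hT⟩
  rintro ⟨w₀, ε⟩ ⟨-, h0, h1⟩
  simp only at h0 h1
  rcases h0.eq_or_lt with rfl | hpos
  · have hle : 𝓝[univ ×ˢ Icc (0:ℝ) 1] (w₀, (0:ℝ)) ≤
        (𝓝 w₀ ×ˢ pure (0:ℝ)) ⊔ (𝓝 w₀ ×ˢ 𝓝[>] (0:ℝ)) := by
      rw [nhdsWithin_prod_eq, nhdsWithin_univ, ← Filter.prod_sup, ← nhdsWithin_singleton,
        ← nhdsWithin_union]
      refine Filter.prod_mono le_rfl (nhdsWithin_mono _ ?_)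
      intro x hx
      rcases hx.1.eq_or_lt with h | h
      · left; exact h.symm
      · right; exact h
    refine Tendsto.mono_left ?_ hle
    refine Tendsto.sup ?_ (hT w₀)
    rw [prod_pure, tendsto_map'_iff]
    exact hc0.tendsto w₀
  · have hev : ∀ᶠ p : EuclideanSpace ℝ (Fin n) × ℝ in 𝓝 (w₀, ε), 0 < p.2 :=
      continuous_snd.continuousAt.eventually (lt_mem_nhds hpos)
    refine ContinuousAt.continuousWithinAt ?_
    have hcong : (fun p : EuclideanSpace ℝ (Fin n) × ℝ => p.2⁻¹ • ((P (v₀ + p.2 • p.1)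
          + p.2 • q (v₀ + p.2 • p.1, p.2))
          - Pr (P (v₀ + p.2 • p.1) + p.2 • q (v₀ + p.2 • p.1, p.2))) +
        (p.2 ^ 2)⁻¹ • Pr (P (v₀ + p.2 • p.1) + p.2 • q (v₀ + p.2 • p.1, p.2)))
        =ᶠ[𝓝 (w₀, ε)] fun p => Ψ p.1 p.2 := by
      filter_upwards [hev] with p hp
      rw [hΨpos _ _ hp]
    refine ContinuousAt.congr ?_ hcong
    have i1 : ContinuousAt (fun p : EuclideanSpace ℝ (Fin n) × ℝ => p.2⁻¹) (w₀, ε) :=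
      continuous_snd.continuousAt.inv₀ hpos.ne'
    have i2 : ContinuousAt (fun p : EuclideanSpace ℝ (Fin n) × ℝ => (p.2 ^ 2)⁻¹) (w₀, ε) :=
      (continuous_snd.pow 2).continuousAt.inv₀ (pow_ne_zero 2 hpos.ne')
    refine (i1.smul (Continuous.continuousAt ?_)).add (i2.smul (Continuous.continuousAt ?_))
    · fun_prop
    · fun_prop
end

section
/- Assume P ∈ C²(ℝⁿ,ℝⁿ), Q ∈ C¹(ℝⁿ×[0,1],ℝⁿ), v₀ ∈ ℝⁿ satisfies P(v₀)=0, and Π : ℝⁿ → ℝⁿ is a linear projector with ΠP'(v₀) = 0 and ΠQ(v₀,0) = 0. Define Ψ(w,ε) for ε > 0 by Ψ(w,ε) = (1/ε)(Φ(v₀+εw,ε) − ΠΦ(v₀+εw,ε)) + (1/ε²)ΠΦ(v₀+εw,ε) where Φ(v,ε) = P(v)+εQ(v,ε). Then for each ε > 0 the map w ↦ Ψ(w,ε) is differentiable with derivative Ψ'_w(w,ε) = ΠP''(v₀+ε̃w)w + ΠQ'_v(v₀+εw,ε) + (I−Π)P'(v₀+εw) + ε(I−Π)Q'_v(v₀+εw,ε)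 for some ε̃ ∈ [0,ε] (i.e. equal to (1/ε)ΠP'(v₀+εw) + ΠQ'_v(v₀+εw,ε) + (I−Π)P'(v₀+εw) + ε(I−Π)Q'_v(v₀+εw,ε)), and as (w,ε)→(w₀,0) with ε>0 this derivative converges in the operator norm to the linear map Ψ'_w(w₀,0) := ΠP''(v₀)w₀ + ΠQ'_v(v₀,0) + (I−Π)P'(v₀). -/
open Set Filter Topology

/-- second assertion of Lemma 1: for each `ε > 0` the map `w ↦ Ψ(w,ε)` is
differentiable with derivative
`(1/ε)ΠP'(v₀+εw) + ΠQ'_v(v₀+εw,ε) + (I−Π)P'(v₀+εw) + ε(I−Π)Q'_v(v₀+εw,ε)`,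
and as `(w,ε) → (w₀,0)` with `ε > 0` this derivative converges in operator norm to
`Ψ'_w(w₀,0) = ΠP''(v₀)w₀ + ΠQ'_v(v₀,0) + (I−Π)P'(v₀)`. -/
theorem stmt_2 {n : ℕ}
    (P : EuclideanSpace ℝ (Fin n) → EuclideanSpace ℝ (Fin n))
    (Q : EuclideanSpace ℝ (Fin n) → ℝ → EuclideanSpace ℝ (Fin n))
    (hP : ContDiff ℝ 2 P)
    (hQ : ContDiff ℝ 1 fun p : EuclideanSpace ℝ (Fin n) × ℝ => Q p.1 p.2)
    (v₀ : EuclideanSpace ℝ (Fin n)) (hv₀ : P v₀ = 0)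
    (Pr : EuclideanSpace ℝ (Fin n) →L[ℝ] EuclideanSpace ℝ (Fin n))
    (hPr : ∀ x, Pr (Pr x) = Pr x)
    (hPrP' : ∀ x, Pr (fderiv ℝ P v₀ x) = 0)
    (hPrQ : Pr (Q v₀ 0) = 0)
    (Ψ : EuclideanSpace ℝ (Fin n) → ℝ → EuclideanSpace ℝ (Fin n))
    (hΨpos : ∀ w : EuclideanSpace ℝ (Fin n), ∀ ε > (0:ℝ), Ψ w ε =
      ε⁻¹ • ((P (v₀ + ε • w) + ε • Q (v₀ + ε • w) ε)
          - Pr (P (v₀ + ε • w) + ε • Q (v₀ + ε • w) ε)) +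
        (ε ^ 2)⁻¹ • Pr (P (v₀ + ε • w) + ε • Q (v₀ + ε • w) ε)) :
    (∀ ε > (0:ℝ), ∀ w : EuclideanSpace ℝ (Fin n),
      HasFDerivAt (fun w' => Ψ w' ε)
        (ε⁻¹ • (Pr ∘L fderiv ℝ P (v₀ + ε • w))
          + Pr ∘L fderiv ℝ (fun u => Q u ε) (v₀ + ε • w)
          + (fderiv ℝ P (v₀ + ε • w) - Pr ∘L fderiv ℝ P (v₀ + ε • w))
          + ε • (fderiv ℝ (fun u => Q u ε) (v₀ + ε • w)
              - Pr ∘L fderiv ℝ (fun u => Q u ε) (v₀ + ε • w))) w) ∧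
    ∀ w₀ : EuclideanSpace ℝ (Fin n),
      Tendsto (fun p : EuclideanSpace ℝ (Fin n) × ℝ =>
          (p.2)⁻¹ • (Pr ∘L fderiv ℝ P (v₀ + p.2 • p.1))
            + Pr ∘L fderiv ℝ (fun u => Q u p.2) (v₀ + p.2 • p.1)
            + (fderiv ℝ P (v₀ + p.2 • p.1) - Pr ∘L fderiv ℝ P (v₀ + p.2 • p.1))
            + p.2 • (fderiv ℝ (fun u => Q u p.2) (v₀ + p.2 • p.1)
                - Pr ∘L fderiv ℝ (fun u => Q u p.2) (v₀ + p.2 • p.1)))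
        ((𝓝 w₀) ×ˢ (𝓝[>] (0:ℝ)))
        (𝓝 (Pr ∘L (fderiv ℝ (fderiv ℝ P) v₀ w₀)
          + Pr ∘L fderiv ℝ (fun u => Q u 0) v₀
          + (fderiv ℝ P v₀ - Pr ∘L fderiv ℝ P v₀))) := by
  have hQd : ∀ ε v, HasFDerivAt (fun u => Q u ε)
      ((fderiv ℝ (fun p : EuclideanSpace ℝ (Fin n) × ℝ => Q p.1 p.2) (v, ε)) ∘L
        ContinuousLinearMap.inl ℝ _ ℝ) v := by
    intro ε v
    have h1 := ((hQ.differentiable (by norm_num)) (v, ε)).hasFDerivAt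
    exact HasFDerivAt.comp (f := fun u => (u, ε)) v h1 (hasFDerivAt_prodMk_left v ε)
  constructor
  · intro ε hε w
    have hfun : (fun w' => Ψ w' ε) = fun w' => 
        ε⁻¹ • ((P (v₀ + ε • w') + ε • Q (v₀ + ε • w') ε)
          - Pr (P (v₀ + ε • w') + ε • Q (v₀ + ε • w') ε)) +
        (ε ^ 2)⁻¹ • Pr (P (v₀ + ε • w') + ε • Q (v₀ + ε • w') ε) := by
      funext w'; exact hΨpos w' ε hε
    rw [hfun]
    have hin : HasFDerivAt (fun w' : EuclideanSpace ℝ (Fin n) => v₀ + ε • w')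
        (ε • ContinuousLinearMap.id ℝ _) w :=
      ((hasFDerivAt_id w).const_smul ε).const_add v₀
    have hPd := (((hP.differentiable (by norm_num)) (v₀ + ε • w)).hasFDerivAt).comp w hin
    have hQd' := ((hQd ε (v₀ + ε • w)).differentiableAt.hasFDerivAt).comp w hin
    have hF := hPd.add (hQd'.const_smul ε)
    have hPF := Pr.hasFDerivAt.comp w hF
    have hall := ((hF.sub hPF).const_smul ε⁻¹).add (hPF.const_smul (ε ^ 2)⁻¹)
    refine hall.congr_fderiv ?_
    have hne := hε.ne'
    ext1 x
    simp only [add_apply, sub_apply,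
      smul_apply, ContinuousLinearMap.comp_apply, map_add, map_smul,
      ContinuousLinearMap.id_apply]
    match_scalars <;> field_simp <;> ring
  · intro w₀
    have hfst : Tendsto (fun p : EuclideanSpace ℝ (Fin n) × ℝ => p.1)
        ((𝓝 w₀) ×ˢ (𝓝[>] (0:ℝ))) (𝓝 w₀) := tendsto_fst
    have hsnd' : Tendsto (fun p : EuclideanSpace ℝ (Fin n) × ℝ => p.2)
        ((𝓝 w₀) ×ˢ (𝓝[>] (0:ℝ))) (𝓝[>] 0) := tendsto_snd
    have hsnd := hsnd'.mono_right nhdsWithin_le_nhds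
    have hv : Tendsto (fun p : EuclideanSpace ℝ (Fin n) × ℝ => v₀ + p.2 • p.1)
        ((𝓝 w₀) ×ˢ (𝓝[>] (0:ℝ))) (𝓝 v₀) := by
      simpa using (hsnd.smul hfst).const_add v₀
    have hPc : Continuous (fderiv ℝ P) := hP.continuous_fderiv (by norm_num)
    have hQc := hQ.continuous_fderiv (by norm_num)
    have hPt := (hPc.tendsto v₀).comp hv
    have hQt : Tendsto (fun p : EuclideanSpace ℝ (Fin n) × ℝ =>
        fderiv ℝ (fun u => Q u p.2) (v₀ + p.2 • p.1))
        ((𝓝 w₀) ×ˢ (𝓝[>] (0:ℝ))) (𝓝 (fderiv ℝ (fun u => Q u 0) v₀)) := by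
      simp_rw [fun ε v => (hQd ε v).fderiv]
      have h := (hQc.tendsto (v₀, (0:ℝ))).comp (hv.prodMk_nhds hsnd)
      have hc : Continuous fun A : (EuclideanSpace ℝ (Fin n) × ℝ) →L[ℝ] EuclideanSpace ℝ (Fin n) =>
          A ∘L ContinuousLinearMap.inl ℝ (EuclideanSpace ℝ (Fin n)) ℝ := by fun_prop
      exact (hc.tendsto _).comp h
    have hPP : DifferentiableAt ℝ (fderiv ℝ P) v₀ :=
      (hP.fderiv_right (m := 1) (by norm_num)).differentiable (by norm_num) v₀
    have hlim : Tendsto (fun p : EuclideanSpace ℝ (Fin n) × ℝ =>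
        (p.2)⁻¹ • (fderiv ℝ P (v₀ + p.2 • p.1) - fderiv ℝ P v₀))
        ((𝓝 w₀) ×ˢ (𝓝[>] (0:ℝ))) (𝓝 (fderiv ℝ (fderiv ℝ P) v₀ w₀)) := by
      refine hPP.hasFDerivAt.hasFDerivWithinAt (s := univ) |>.lim ?_
        (.of_forall fun _ => mem_univ _) ?_
      · simpa using hsnd.smul hfst
      · refine hfst.congr' ?_
        filter_upwards [hsnd'.eventually self_mem_nhdsWithin] with p hp
        have hp' : p.2 ≠ 0 := ne_of_gt hp
        rw [smul_smul, inv_mul_cancel₀ hp', one_smul]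
    have hPr0 : Pr ∘L fderiv ℝ P v₀ = 0 := by ext1 x; exact hPrP' x
    have hc : ∀ {f : EuclideanSpace ℝ (Fin n) × ℝ → 
          EuclideanSpace ℝ (Fin n) →L[ℝ] EuclideanSpace ℝ (Fin n)} {a},
        Tendsto f ((𝓝 w₀) ×ˢ (𝓝[>] (0:ℝ))) (𝓝 a) →
        Tendsto (fun p => Pr ∘L f p) ((𝓝 w₀) ×ˢ (𝓝[>] (0:ℝ))) (𝓝 (Pr ∘L a)) :=
      fun {f a} h => by
        have hc : Continuous fun A : EuclideanSpace ℝ (Fin n) →L[ℝ] EuclideanSpace ℝ (Fin n) =>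
          Pr ∘L A := by fun_prop
        exact (hc.tendsto a).comp h
    have key := (((hc hlim).add (hc hQt)).add (hPt.sub (hc hPt))).add
      (hsnd.smul (hQt.sub (hc hQt)))
    have hz : ∀ A : EuclideanSpace ℝ (Fin n) →L[ℝ] EuclideanSpace ℝ (Fin n),
        (0:ℝ) • A = 0 := fun A => zero_smul ℝ A
    erw [hz, add_zero] at key
    refine key.congr fun p => ?_
    simp only [ContinuousLinearMap.comp_smul, ContinuousLinearMap.comp_sub, hPr0, sub_zero,
      Function.comp_apply]
end

section
/- Assume P ∈ C²(ℝⁿ,ℝⁿ), Q ∈ C¹(ℝⁿ×[0,1],ℝⁿ), v₀ ∈ ℝⁿ with P(v₀)=0 and P'(v₀) singular. Let Π : ℝⁿ → ℝⁿ be a linear projector whose image and kernel are invariant under P'(v₀), with ΠP'(v₀) = 0 and P'(v₀) invertible as a map of (I−Π)ℝⁿ to itself. Assume ΠQ(v₀,0) = 0, ΠP''(v₀)[Πr, Πs] = 0 for all r,s ∈ ℝⁿ, and that the linear map −ΠP''(v₀)[(I−Π)(P'(v₀)|_{(I−Π)ℝⁿ})⁻¹Q(v₀,0), ·] + ΠQ'_v(v₀,0)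 is invertible on Πℝⁿ. Then there exists a unique w₀ ∈ ℝⁿ such that Ψ(w₀,0) = 0, where Ψ(w,0) := (1/2)ΠP''(v₀)[w,w] + ΠQ'_v(v₀,0)w + ΠQ'_ε(v₀,0) + (I−Π)P'(v₀)w + (I−Π)Q(v₀,0); moreover the linear map Ψ'_w(w₀,0) := ΠP''(v₀)[w₀,·] + ΠQ'_v(v₀,0) + (I−Π)P'(v₀) is invertible. -/
open Set Filter Topology

theorem aux_alg {E : Type*} [NormedAddCommGroup E] [NormedSpace ℝ E] [FiniteDimensional ℝ E]
    (A C Pr : E →L[ℝ] E) (B : E →L[ℝ] E →L[ℝ] E) (hB : ∀ x y, B x y = B y x) (q g : E)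
    (hPr : ∀ x, Pr (Pr x) = Pr x)
    (hIm : ∀ x, A (Pr x) ∈ Set.range Pr)
    (hPrA : ∀ x, Pr (A x) = 0)
    (hinvKer : ∀ y : E, Pr y = 0 → ∃! u : E, Pr u = 0 ∧ A u = y)
    (hq : Pr q = 0)
    (hPP : ∀ r s : E, Pr (B (Pr r) (Pr s)) = 0)
    (hINV : ∀ u₁ : E, Pr u₁ = 0 → A u₁ = q → ∀ y : E, Pr y = y →
        ∃! h : E, Pr h = h ∧ -Pr (B u₁ h) + Pr (C h) = y) :
    (∃! w : E, (1/2 : ℝ) • Pr (B w w) + Pr (C w) + Pr g + (A w - Pr (A w)) + (q - Pr q) = 0) ∧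
    ∀ w : E, (1/2 : ℝ) • Pr (B w w) + Pr (C w) + Pr g + (A w - Pr (A w)) + (q - Pr q) = 0 →
      Function.Bijective (fun h : E => Pr (B w h) + Pr (C h) + (A h - Pr (A h))) := by
  have hAPr : ∀ x, A (Pr x) = 0 := by
    intro x
    obtain ⟨y, hy⟩ := hIm x
    rw [← hy, ← hPr y, hy, hPrA]
  obtain ⟨u, ⟨hu0, huq⟩, huu⟩ := hinvKer q hq
  have hker : ∀ x, Pr x = 0 → A x = 0 → x = 0 := by
    intro x h1 h2
    exact (hinvKer 0 (map_zero _)).unique ⟨h1, h2⟩ ⟨map_zero _, map_zero _⟩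
  have hI := hINV u hu0 huq
  -- splitting an equation
  have hsplit : ∀ a b : E, Pr a = a → Pr b = 0 → a + b = 0 → a = 0 ∧ b = 0 := by
    intro a b ha hb hab
    have h := congrArg Pr hab
    rw [map_add, ha, hb, add_zero, map_zero] at h
    refine ⟨h, ?_⟩
    rwa [h, zero_add] at hab
  have hexp : ∀ a, Pr a = a → (1/2 : ℝ) • Pr (B (a - u) (a - u)) + Pr (C (a - u)) + Pr g
      = (-Pr (B u a) + Pr (C a)) + ((1/2 : ℝ) • Pr (B u u) - Pr (C u) + Pr g) := by
    intro a ha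
    have h0 : Pr (B a a) = 0 := by
      have := hPP a a
      rwa [ha] at this
    simp only [map_sub, sub_apply, hB a u, h0]
    module
  have hform : ∀ w, (1/2 : ℝ) • Pr (B w w) + Pr (C w) + Pr g + (A w - Pr (A w)) + (q - Pr q) = 0 →
      w = Pr w - u ∧ -Pr (B u (Pr w)) + Pr (C (Pr w))
        = -((1/2 : ℝ) • Pr (B u u) - Pr (C u) + Pr g) := by
    intro w hw
    rw [hPrA, hq, sub_zero, sub_zero, add_assoc _ (A w) q] at hw
    obtain ⟨h1, h2⟩ := hsplit _ _ (by simp [hPr]) (by simp [hPrA, hq]) hw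
    have hwu : w = Pr w - u := by
      have := hker (w - Pr w + u) (by simp [hPr, hu0]) (by simp [hAPr, huq, h2])
      rw [← sub_eq_zero, ← this]; abel
    refine ⟨hwu, ?_⟩
    have h3 := hexp (Pr w) (hPr w)
    rw [← hwu, h1] at h3
    exact eq_neg_of_add_eq_zero_left h3.symm
  constructor
  · obtain ⟨a, ⟨ha, ha'⟩, hau⟩ := hI (-((1/2 : ℝ) • Pr (B u u) - Pr (C u) + Pr g)) (by simp [hPr])
    refine ⟨a - u, ?_, ?_⟩
    · have hA : A (a - u) = - q := by
        rw [← ha, map_sub, hAPr, huq, zero_sub]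
      beta_reduce
      rw [hexp a ha, ha', hA, map_neg, hq]
      abel
    · intro w hw
      obtain ⟨h1, h2⟩ := hform w hw
      rw [h1, hau (Pr w) ⟨hPr w, h2⟩]
  · intro w hw
    obtain ⟨h1, -⟩ := hform w hw
    let L : E →ₗ[ℝ] E := ((Pr.comp (B w) + Pr.comp C + (A - Pr.comp A) : E →L[ℝ] E) : E →ₗ[ℝ] E)
    have hinj : Function.Injective L := by
      rw [← LinearMap.ker_eq_bot, LinearMap.ker_eq_bot']
      intro h hh
      change Pr (B w h) + Pr (C h) + (A h - Pr (A h)) = 0 at hh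
      rw [hPrA, sub_zero] at hh
      obtain ⟨h2, h3⟩ := hsplit _ _ (by simp [hPr]) (hPrA h) hh
      have h4 : h = Pr h := by
        have := hker (h - Pr h) (by simp [hPr]) (by simp [hAPr, h3])
        exact sub_eq_zero.mp this
      have h5 : Pr (B (Pr w) h) = 0 := by
        rw [h4]; exact hPP w h
      rw [h1, map_sub, sub_apply, map_sub, h5, zero_sub] at h2
      exact (hI 0 (map_zero _)).unique ⟨h4.symm, h2⟩ (by simp)
    exact ⟨hinj, LinearMap.injective_iff_surjective.mp hinj⟩

/-- Theorem 1: under the stated projector, degeneracy and invertibility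
hypotheses there is a unique `w₀` with `Ψ(w₀,0) = 0`, and the linear map
`Ψ'_w(w₀,0) = ΠP''(v₀)[w₀,·] + ΠQ'_v(v₀,0) + (I−Π)P'(v₀)` is invertible.
The vector `u₁ = (P'(v₀)|_{(I−Π)ℝⁿ})⁻¹ Q(v₀,0)` is characterized by
`Π u₁ = 0 ∧ P'(v₀) u₁ = Q(v₀,0)` (note `ΠQ(v₀,0) = 0`). -/
theorem stmt_3 {n : ℕ}
    (P : EuclideanSpace ℝ (Fin n) → EuclideanSpace ℝ (Fin n))
    (Q : EuclideanSpace ℝ (Fin n) → ℝ → EuclideanSpace ℝ (Fin n))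
    (hP : ContDiff ℝ 2 P)
    (hQ : ContDiff ℝ 1 fun p : EuclideanSpace ℝ (Fin n) × ℝ => Q p.1 p.2)
    (v₀ : EuclideanSpace ℝ (Fin n)) (hv₀ : P v₀ = 0)
    (hsing : ¬ Function.Bijective (fderiv ℝ P v₀))
    (Pr : EuclideanSpace ℝ (Fin n) →L[ℝ] EuclideanSpace ℝ (Fin n))
    (hPr : ∀ x, Pr (Pr x) = Pr x)
    (hIm : ∀ x, fderiv ℝ P v₀ (Pr x) ∈ Set.range Pr)
    (hKer : ∀ x, Pr x = 0 → Pr (fderiv ℝ P v₀ x) = 0)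
    (hPrP' : ∀ x, Pr (fderiv ℝ P v₀ x) = 0)
    (hinvKer : ∀ y : EuclideanSpace ℝ (Fin n), Pr y = 0 →
      ∃! u : EuclideanSpace ℝ (Fin n), Pr u = 0 ∧ fderiv ℝ P v₀ u = y)
    (hPrQ : Pr (Q v₀ 0) = 0)
    (hPP : ∀ r s : EuclideanSpace ℝ (Fin n),
      Pr (fderiv ℝ (fderiv ℝ P) v₀ (Pr r) (Pr s)) = 0)
    (hINV : ∀ u₁ : EuclideanSpace ℝ (Fin n),
      Pr u₁ = 0 → fderiv ℝ P v₀ u₁ = Q v₀ 0 →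
      ∀ y : EuclideanSpace ℝ (Fin n), Pr y = y →
        ∃! h : EuclideanSpace ℝ (Fin n), Pr h = h ∧
          -Pr (fderiv ℝ (fderiv ℝ P) v₀ u₁ h)
            + Pr (fderiv ℝ (fun v => Q v 0) v₀ h) = y) :
    (∃! w₀ : EuclideanSpace ℝ (Fin n),
      (1/2 : ℝ) • Pr (fderiv ℝ (fderiv ℝ P) v₀ w₀ w₀)
        + Pr (fderiv ℝ (fun v => Q v 0) v₀ w₀)
        + Pr (deriv (fun e => Q v₀ e) 0)
        + (fderiv ℝ P v₀ w₀ - Pr (fderiv ℝ P v₀ w₀))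
        + (Q v₀ 0 - Pr (Q v₀ 0)) = 0) ∧
    ∀ w₀ : EuclideanSpace ℝ (Fin n),
      (1/2 : ℝ) • Pr (fderiv ℝ (fderiv ℝ P) v₀ w₀ w₀)
        + Pr (fderiv ℝ (fun v => Q v 0) v₀ w₀)
        + Pr (deriv (fun e => Q v₀ e) 0)
        + (fderiv ℝ P v₀ w₀ - Pr (fderiv ℝ P v₀ w₀))
        + (Q v₀ 0 - Pr (Q v₀ 0)) = 0 →
      Function.Bijective (fun h : EuclideanSpace ℝ (Fin n) =>
        Pr (fderiv ℝ (fderiv ℝ P) v₀ w₀ h)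
          + Pr (fderiv ℝ (fun v => Q v 0) v₀ h)
          + (fderiv ℝ P v₀ h - Pr (fderiv ℝ P v₀ h))) := by
  have hB : IsSymmSndFDerivAt ℝ P v₀ := hP.contDiffAt.isSymmSndFDerivAt (by simp)
  exact aux_alg (fderiv ℝ P v₀) (fderiv ℝ (fun v => Q v 0) v₀) Pr (fderiv ℝ (fderiv ℝ P) v₀)
    (fun x y => hB x y) (Q v₀ 0) (deriv (fun e => Q v₀ e) 0) hPr hIm hPrP' hinvKer hPrQ hPP hINV
end

section
/- Assume all the hypotheses of Theorem 1 for P ∈ C²(ℝⁿ,ℝⁿ), Q ∈ C¹(ℝⁿ×[0,1],ℝⁿ), v₀ ∈ ℝⁿ and the projector Π, and in addition that 0 is a simple eigenvalue of P'(v₀) and that v₀ = x₀(θ₀), where θ ↦ x₀(θ) is a C² curve with P(x₀(θ)) = 0 for all θ and ẋ₀(θ₀) ≠ 0. Let w₀ be the unique zero of Ψ(·,0), let {w_ε} (ε > 0 small) be the family of zeros of Ψ(·,ε) converging to w₀ as ε→0, and for each small ε > 0 let λ_ε be an eigenvalue of Φ'_v(v₀+εw_ε, ε) (where Φ(v,ε)=P(v)+εQ(v,ε))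 such that λ_ε → 0 as ε → 0. Let λ_* ∈ ℝ be the real number defined by ΠP''(v₀)[w₀, ẋ₀(θ₀)] + ΠQ'_v(v₀,0)ẋ₀(θ₀) = λ_* ẋ₀(θ₀), i.e. the eigenvalue of the operator ΠP''(v₀)[w₀,·] + ΠQ'_v(v₀,0) restricted to the one-dimensional space Πℝⁿ spanned by ẋ₀(θ₀). Then λ_ε = ελ_* + o(ε) as ε → 0. -/
open Set Filter Topology Asymptotics

theorem aux_eig {E : Type*} [NormedAddCommGroup E] [NormedSpace ℝ E]
    (A B Pr : E →L[ℝ] E) (M : ℝ → E →L[ℝ] E) (lam : ℝ → ℝ) (s : ℝ) (K : ℝ)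
    (hR : (fun ε => M ε - A - ε • B) =o[𝓝[>] (0:ℝ)] (fun ε => ε))
    (hPr : ∀ x, Pr (Pr x) = Pr x) (hPA : ∀ x, Pr (A x) = 0) (hAP : ∀ x, A (Pr x) = 0)
    (hK : ∀ u, Pr u = 0 → ‖u‖ ≤ K * ‖A u‖)
    (hB : ∀ x, Pr (B (Pr x)) = s • Pr x)
    (hl0 : Tendsto lam (𝓝[>] (0:ℝ)) (𝓝 0))
    (hl : ∀ᶠ ε in 𝓝[>] (0:ℝ), ∃ l : E, l ≠ 0 ∧ M ε l = lam ε • l) :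
    (fun ε => lam ε - ε * s) =o[𝓝[>] (0:ℝ)] (fun ε => ε) := by
  have hl' : ∀ᶠ ε in 𝓝[>] (0:ℝ), ∃ l : E, ‖l‖ = 1 ∧ M ε l = lam ε • l := by
    filter_upwards [hl] with ε ⟨l, h0, h1⟩
    refine ⟨‖l‖⁻¹ • l, ?_, ?_⟩
    · rw [norm_smul, norm_inv, norm_norm, inv_mul_cancel₀ (norm_ne_zero_iff.mpr h0)]
    · rw [map_smul, h1, smul_comm]
  obtain ⟨l, hl⟩ := hl'.choice
  have hid : Tendsto (fun ε : ℝ => ε) (𝓝[>] (0:ℝ)) (𝓝 0) := nhdsWithin_le_nhds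
  have hbd : (l) =O[𝓝[>] (0:ℝ)] (fun _ => (1:ℝ)) := by
    refine IsBigO.of_bound 1 ?_
    filter_upwards [hl] with ε h
    simp [h.1]
  have hRl : (fun ε => (M ε - A - ε • B) (l ε)) =o[𝓝[>] (0:ℝ)] (fun ε => ε) := by
    refine IsBigO.trans_isLittleO ?_ hR
    refine IsBigO.of_bound 1 ?_
    filter_upwards [hl] with ε h
    have := (M ε - A - ε • B).le_opNorm (l ε)
    rw [h.1] at this
    linarith
  have hAl : Tendsto (fun ε => A (l ε)) (𝓝[>] (0:ℝ)) (𝓝 0) := by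
    have h1 : Tendsto (fun ε => lam ε • l ε) (𝓝[>] (0:ℝ)) (𝓝 0) :=
      hl0.zero_smul_isBoundedUnder_le ((isBigO_one_iff ℝ).1 hbd)
    have h2 : Tendsto (fun ε => ε • B (l ε)) (𝓝[>] (0:ℝ)) (𝓝 0) :=
      hid.zero_smul_isBoundedUnder_le ((isBigO_one_iff ℝ).1 ((B.isBigO_comp _ _).trans hbd))
    have h3 := hRl.trans_tendsto hid
    have h4 := (h1.sub h2).sub h3
    simp only [sub_zero] at h4
    refine h4.congr' ?_
    filter_upwards [hl] with ε h
    simp [← h.2]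
  have hu : Tendsto (fun ε => l ε - Pr (l ε)) (𝓝[>] (0:ℝ)) (𝓝 0) := by
    refine squeeze_zero_norm (a := fun ε => K * ‖A (l ε)‖) (fun ε => ?_) ?_
    · have := hK (l ε - Pr (l ε)) (by rw [map_sub, hPr, sub_self])
      rwa [map_sub A, hAP, sub_zero] at this
    · simpa using hAl.norm.const_mul K
  have hmain : (fun ε => (lam ε - ε * s) • Pr (l ε)) =o[𝓝[>] (0:ℝ)] (fun ε => ε) := by
    have h1 : (fun ε => Pr ((M ε - A - ε • B) (l ε))) =o[𝓝[>] (0:ℝ)] (fun ε => ε) :=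
      (Pr.isBigO_comp _ _).trans_isLittleO hRl
    have h2 : (fun ε => ε • Pr (B (l ε - Pr (l ε)))) =o[𝓝[>] (0:ℝ)] (fun ε => ε) := by
      have h3 : (fun ε => Pr (B (l ε - Pr (l ε)))) =o[𝓝[>] (0:ℝ)] (fun _ => (1:ℝ)) := by
        rw [isLittleO_one_iff]
        have := ((Pr.comp B).continuous.tendsto 0).comp hu
        simpa [Function.comp_def] using this
      simpa using (isBigO_refl (fun ε : ℝ => ε) (𝓝[>] (0:ℝ))).smul_isLittleO h3
    refine (h1.add h2).congr' ?_ EventuallyEq.rfl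
    filter_upwards [hl] with ε h
    simp only [ContinuousLinearMap.sub_apply, ContinuousLinearMap.smul_apply, map_sub, map_smul,
      h.2, hPA, hB, smul_sub, sub_smul, mul_smul]
    abel
  refine IsBigO.trans_isLittleO ?_ hmain
  refine IsBigO.of_bound 2 ?_
  have hu' : ∀ᶠ ε in 𝓝[>] (0:ℝ), ‖l ε - Pr (l ε)‖ < 1/2 := by
    have := hu.norm
    rw [norm_zero] at this
    exact this.eventually_lt_const (by norm_num)
  filter_upwards [hl, hu'] with ε h h'
  rw [norm_smul]
  have h5 := norm_sub_norm_le (l ε) (Pr (l ε))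
  rw [h.1] at h5
  nlinarith [norm_nonneg (lam ε - ε * s)]

/-- Theorem 2: under the hypotheses of Theorem 1, with `0` a simple eigenvalue of
`P'(v₀)`, `v₀ = x₀(θ₀)` on a `C²` curve of zeros of `P`, `w₀` the zero of `Ψ(·,0)`,
`w_ε` the zeros of `Ψ(·,ε)` converging to `w₀`, `λ_ε` eigenvalues of `Φ'_v(v₀+εw_ε,ε)`
tending to `0`, and `λ_*` defined by
`ΠP''(v₀)[w₀, ẋ₀(θ₀)] + ΠQ'_v(v₀,0)ẋ₀(θ₀) = λ_* ẋ₀(θ₀)`, one has `λ_ε = ελ_* + o(ε)`. -/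
theorem stmt_6 {n : ℕ}
    (P : EuclideanSpace ℝ (Fin n) → EuclideanSpace ℝ (Fin n))
    (Q : EuclideanSpace ℝ (Fin n) → ℝ → EuclideanSpace ℝ (Fin n))
    (hP : ContDiff ℝ 2 P)
    (hQ : ContDiff ℝ 1 fun p : EuclideanSpace ℝ (Fin n) × ℝ => Q p.1 p.2)
    (v₀ : EuclideanSpace ℝ (Fin n)) (hv₀ : P v₀ = 0)
    (hsing : ¬ Function.Bijective (fderiv ℝ P v₀))
    (Pr : EuclideanSpace ℝ (Fin n) →L[ℝ] EuclideanSpace ℝ (Fin n))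
    (hPr : ∀ x, Pr (Pr x) = Pr x)
    (hIm : ∀ x, fderiv ℝ P v₀ (Pr x) ∈ Set.range Pr)
    (hKer : ∀ x, Pr x = 0 → Pr (fderiv ℝ P v₀ x) = 0)
    (hPrP' : ∀ x, Pr (fderiv ℝ P v₀ x) = 0)
    (hinvKer : ∀ y : EuclideanSpace ℝ (Fin n), Pr y = 0 →
      ∃! u : EuclideanSpace ℝ (Fin n), Pr u = 0 ∧ fderiv ℝ P v₀ u = y)
    (hPrQ : Pr (Q v₀ 0) = 0)
    (hPP : ∀ r s : EuclideanSpace ℝ (Fin n),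
      Pr (fderiv ℝ (fderiv ℝ P) v₀ (Pr r) (Pr s)) = 0)
    (hINV : ∀ u₁ : EuclideanSpace ℝ (Fin n),
      Pr u₁ = 0 → fderiv ℝ P v₀ u₁ = Q v₀ 0 →
      ∀ y : EuclideanSpace ℝ (Fin n), Pr y = y →
        ∃! h : EuclideanSpace ℝ (Fin n), Pr h = h ∧
          -Pr (fderiv ℝ (fderiv ℝ P) v₀ u₁ h)
            + Pr (fderiv ℝ (fun v => Q v 0) v₀ h) = y)
    -- `0` is a simple eigenvalue of `P'(v₀)`: one-dimensional kernel, no generalized kernel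
    (hsimple : Module.finrank ℝ
        (LinearMap.ker ((fderiv ℝ P v₀ : _) : EuclideanSpace ℝ (Fin n) →ₗ[ℝ]
          EuclideanSpace ℝ (Fin n))) = 1 ∧
      ∀ x, fderiv ℝ P v₀ (fderiv ℝ P v₀ x) = 0 → fderiv ℝ P v₀ x = 0)
    -- a `C²` curve of zeros of `P` through `v₀`
    (x₀ : ℝ → EuclideanSpace ℝ (Fin n)) (θ₀ : ℝ)
    (hx₀C2 : ContDiff ℝ 2 x₀) (hx₀P : ∀ θ, P (x₀ θ) = 0)
    (hx₀v₀ : x₀ θ₀ = v₀) (hx₀' : deriv x₀ θ₀ ≠ 0)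
    (hrange : Pr (deriv x₀ θ₀) = deriv x₀ θ₀)
    -- `w₀` is the zero of `Ψ(·,0)`
    (w₀ : EuclideanSpace ℝ (Fin n))
    (hw₀ : (1/2 : ℝ) • Pr (fderiv ℝ (fderiv ℝ P) v₀ w₀ w₀)
        + Pr (fderiv ℝ (fun v => Q v 0) v₀ w₀)
        + Pr (deriv (fun e => Q v₀ e) 0)
        + (fderiv ℝ P v₀ w₀ - Pr (fderiv ℝ P v₀ w₀))
        + (Q v₀ 0 - Pr (Q v₀ 0)) = 0)
    -- the family `w_ε` of zeros of `Ψ(·,ε)` converging to `w₀`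
    (w : ℝ → EuclideanSpace ℝ (Fin n))
    (hw : Tendsto w (𝓝[>] (0:ℝ)) (𝓝 w₀))
    (hwzero : ∀ᶠ ε in 𝓝[>] (0:ℝ),
      ε⁻¹ • ((P (v₀ + ε • w ε) + ε • Q (v₀ + ε • w ε) ε)
          - Pr (P (v₀ + ε • w ε) + ε • Q (v₀ + ε • w ε) ε)) +
        (ε ^ 2)⁻¹ • Pr (P (v₀ + ε • w ε) + ε • Q (v₀ + ε • w ε) ε) = 0)
    -- the eigenvalues `λ_ε` of `Φ'_v(v₀+εw_ε,ε)` with `λ_ε → 0`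
    (lam : ℝ → ℝ)
    (hlamEig : ∀ᶠ ε in 𝓝[>] (0:ℝ), ∃ l : EuclideanSpace ℝ (Fin n), l ≠ 0 ∧
      fderiv ℝ (fun v => P v + ε • Q v ε) (v₀ + ε • w ε) l = lam ε • l)
    (hlam0 : Tendsto lam (𝓝[>] (0:ℝ)) (𝓝 0))
    -- `λ_*`
    (lamStar : ℝ)
    (hlamStar : Pr (fderiv ℝ (fderiv ℝ P) v₀ w₀ (deriv x₀ θ₀))
        + Pr (fderiv ℝ (fun v => Q v 0) v₀ (deriv x₀ θ₀)) = lamStar • deriv x₀ θ₀) :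
    (fun ε => lam ε - ε * lamStar) =o[𝓝[>] (0:ℝ)] (fun ε => ε) := by
  classical
  have hAe : fderiv ℝ P v₀ (deriv x₀ θ₀) = 0 := by
    have h1 : HasDerivAt x₀ (deriv x₀ θ₀) θ₀ :=
      (hx₀C2.differentiable (by norm_num) θ₀).hasDerivAt
    have h2 : HasFDerivAt P (fderiv ℝ P v₀) (x₀ θ₀) := by
      rw [hx₀v₀]
      exact (hP.differentiable (by norm_num) v₀).hasFDerivAt
    have h3 := h2.comp_hasDerivAt θ₀ h1
    have h4 : P ∘ x₀ = fun _ => 0 := funext hx₀P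
    rw [h4] at h3
    exact h3.unique (hasDerivAt_const _ _)
  have hAP : ∀ x, fderiv ℝ P v₀ (Pr x) = 0 := by
    intro x
    obtain ⟨y, hy⟩ := hIm x
    have := hPrP' (Pr x)
    rw [← hy, hPr] at this
    rw [← hy, this]
  have hspan : ∀ x, ∃ c : ℝ, c • deriv x₀ θ₀ = Pr x := by
    intro x
    have := (finrank_eq_one_iff_of_nonzero'
      (⟨deriv x₀ θ₀, hAe⟩ : LinearMap.ker ((fderiv ℝ P v₀ : _) : EuclideanSpace ℝ (Fin n) →ₗ[ℝ]
          EuclideanSpace ℝ (Fin n))) (fun h => hx₀' (congrArg Subtype.val h))).1 hsimple.1 ⟨Pr x, hAP x⟩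
    obtain ⟨c, hc⟩ := this
    exact ⟨c, congrArg Subtype.val hc⟩
  obtain ⟨K, hK⟩ : ∃ K : ℝ, ∀ u, Pr u = 0 → ‖u‖ ≤ K * ‖fderiv ℝ P v₀ u‖ := by
    have hker : LinearMap.ker ((fderiv ℝ P v₀ + Pr : EuclideanSpace ℝ (Fin n) →L[ℝ]
        EuclideanSpace ℝ (Fin n)) : EuclideanSpace ℝ (Fin n) →ₗ[ℝ]
          EuclideanSpace ℝ (Fin n)) = ⊥ := by
      rw [LinearMap.ker_eq_bot']
      intro x hx
      have hx' : fderiv ℝ P v₀ x + Pr x = 0 := hx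
      have h1 : Pr x = 0 := by
        have := congrArg Pr hx'
        rwa [map_add, hPrP', hPr, zero_add, map_zero] at this
      have h2 : fderiv ℝ P v₀ x = 0 := by rwa [h1, add_zero] at hx'
      exact (hinvKer 0 (map_zero _)).unique ⟨h1, h2⟩ ⟨map_zero _, map_zero _⟩
    obtain ⟨K, -, hK⟩ := LinearMap.exists_antilipschitzWith _ hker
    refine ⟨K, fun u hu => ?_⟩
    have := hK.le_mul_dist u 0
    simpa [hu] using this
  have hid : Tendsto (fun ε : ℝ => ε) (𝓝[>] (0:ℝ)) (𝓝 0) := nhdsWithin_le_nhds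
  have hw1 : Tendsto (fun ε => ε • w ε) (𝓝[>] (0:ℝ)) (𝓝 0) := by
    simpa using hid.smul hw
  have hw2 : Tendsto (fun ε => v₀ + ε • w ε) (𝓝[>] (0:ℝ)) (𝓝 v₀) := by
    simpa using hw1.const_add v₀
  have hwO : (fun ε => ε • w ε) =O[𝓝[>] (0:ℝ)] (fun ε => ε) := by
    simpa using (isBigO_refl (fun ε : ℝ => ε) (𝓝[>] (0:ℝ))).smul (hw.isBigO_one ℝ)
  have hQd : ∀ v e, HasFDerivAt (fun v => Q v e)
      ((fderiv ℝ (fun p : EuclideanSpace ℝ (Fin n) × ℝ => Q p.1 p.2) (v, e)).comp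
        (ContinuousLinearMap.inl ℝ _ ℝ)) v := by
    intro v e
    have h1 : HasFDerivAt (fun p : EuclideanSpace ℝ (Fin n) × ℝ => Q p.1 p.2) _ (v, e) :=
      (hQ.differentiable (by norm_num) (v, e)).hasFDerivAt
    have h2 : HasFDerivAt (fun v : EuclideanSpace ℝ (Fin n) => (v, e))
        (ContinuousLinearMap.inl ℝ _ ℝ) v := hasFDerivAt_prodMk_left v e
    exact HasFDerivAt.comp (g := fun p : EuclideanSpace ℝ (Fin n) × ℝ => Q p.1 p.2) v h1 h2
  have hQt : Tendsto (fun ε => fderiv ℝ (fun v => Q v ε) (v₀ + ε • w ε)) (𝓝[>] (0:ℝ))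
      (𝓝 (fderiv ℝ (fun v => Q v 0) v₀)) := by
    have h1 : Continuous (fun p => (fderiv ℝ (fun p : EuclideanSpace ℝ (Fin n) × ℝ =>
        Q p.1 p.2) p).comp (ContinuousLinearMap.inl ℝ _ ℝ)) :=
      (hQ.continuous_fderiv (by norm_num)).clm_comp continuous_const
    have h2 := (h1.tendsto (v₀, 0)).comp (hw2.prodMk_nhds hid)
    rw [(hQd v₀ 0).fderiv]
    refine h2.congr fun ε => ?_
    rw [(hQd _ ε).fderiv]
    rfl
  refine aux_eig (fderiv ℝ P v₀)
    (fderiv ℝ (fderiv ℝ P) v₀ w₀ + fderiv ℝ (fun v => Q v 0) v₀) Pr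
    (fun ε => fderiv ℝ (fun v => P v + ε • Q v ε) (v₀ + ε • w ε)) lam lamStar K
    ?_ hPr hPrP' hAP hK ?_ hlam0 hlamEig
  · have hP2 : HasFDerivAt (fderiv ℝ P) (fderiv ℝ (fderiv ℝ P) v₀) v₀ :=
      ((hP.fderiv_right (m := 1) (by norm_num)).differentiable (by norm_num) v₀).hasFDerivAt
    have h1 : (fun ε => fderiv ℝ P (v₀ + ε • w ε) - fderiv ℝ P v₀
        - fderiv ℝ (fderiv ℝ P) v₀ (ε • w ε)) =o[𝓝[>] (0:ℝ)] (fun ε => ε) := by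
      have := (hP2.isLittleO.comp_tendsto hw2)
      simp only [Function.comp_def, add_sub_cancel_left] at this
      exact this.trans_isBigO hwO
    have h2 : (fun ε => ε • (fderiv ℝ (fderiv ℝ P) v₀ (w ε - w₀))) =o[𝓝[>] (0:ℝ)]
        (fun ε => ε) := by
      have h3 : (fun ε => fderiv ℝ (fderiv ℝ P) v₀ (w ε - w₀)) =o[𝓝[>] (0:ℝ)]
          (fun _ => (1:ℝ)) := by
        rw [isLittleO_one_iff]
        have h4 : Tendsto (fun ε => w ε - w₀) (𝓝[>] (0:ℝ)) (𝓝 0) := by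
          simpa using hw.sub_const w₀
        have := ((fderiv ℝ (fderiv ℝ P) v₀).continuous.tendsto 0).comp h4
        simpa only [Function.comp_def, map_zero] using this
      simpa using (isBigO_refl (fun ε : ℝ => ε) (𝓝[>] (0:ℝ))).smul_isLittleO h3
    have h5 : (fun ε => ε • (fderiv ℝ (fun v => Q v ε) (v₀ + ε • w ε)
        - fderiv ℝ (fun v => Q v 0) v₀)) =o[𝓝[>] (0:ℝ)] (fun ε => ε) := by
      have h3 : (fun ε => fderiv ℝ (fun v => Q v ε) (v₀ + ε • w ε)
        - fderiv ℝ (fun v => Q v 0) v₀) =o[𝓝[>] (0:ℝ)] (fun _ => (1:ℝ)) := by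
        rw [isLittleO_one_iff]
        simpa using hQt.sub_const (fderiv ℝ (fun v => Q v 0) v₀)
      simpa using (isBigO_refl (fun ε : ℝ => ε) (𝓝[>] (0:ℝ))).smul_isLittleO h3
    refine ((h1.add h2).add h5).congr (fun ε => ?_) (fun _ => rfl)
    have h6 : fderiv ℝ (fun v => P v + ε • Q v ε) (v₀ + ε • w ε)
        = fderiv ℝ P (v₀ + ε • w ε) + ε • fderiv ℝ (fun v => Q v ε) (v₀ + ε • w ε) := by
      have a := (hP.differentiable (by norm_num) (v₀ + ε • w ε)).hasFDerivAt
      have b := (hQd (v₀ + ε • w ε) ε).differentiableAt.hasFDerivAt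
      exact (a.add (b.const_smul ε)).fderiv
    rw [h6, map_smul, map_sub, smul_sub, smul_sub, smul_add]
    abel
  · intro x
    obtain ⟨c, hc⟩ := hspan x
    rw [← hc, map_smul, map_smul, ContinuousLinearMap.add_apply, map_add, hlamStar, smul_comm]
end

section
/- Consider ẋ = f(x) + εg(t,x,ε) with f ∈ C²(ℝⁿ,ℝⁿ) and g ∈ C¹(ℝ×ℝⁿ×[0,1],ℝⁿ), g T-periodic in t; assume every Cauchy problem for this equation has a unique solution defined on [0,T]. Let x(·,v,ε) denote the solution with x(0,v,ε)=v, let 𝒫_ε(v) = x(T,v,ε) be the Poincaré map, and set P(v) = 𝒫₀(v) − v and Q(v,ε) = (𝒫_ε(v) − 𝒫₀(v))/ε for ε > 0. Let x₀ be a T-periodic solution of ẋ = f(x) and z₀ a T-periodic solution of the adjoint linearized system ż = −(f'(x₀(t)))*z. Then for each v the limit Q(v,0) := lim_{ε→0⁺} Q(v,ε) exists, the resulting function Q belongs to C¹(ℝⁿ×[0,1],ℝⁿ), and for every θ ∈ [0,T] the Malkin bifurcation function M(θ) = ∫₀ᵀ ⟨g(t, x₀(t+θ), 0), z₀(t+θ)⟩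 dt satisfies M(θ) = ⟨Q(x₀(θ),0), z₀(θ)⟩. -/
open Set Filter Topology
open scoped InnerProductSpace

theorem aux_gron {E : Type*} [NormedAddCommGroup E] [NormedSpace ℝ E] {b T : ℝ} (hbT : b ≤ T)
    {u u' : ℝ → E} {δ K ε : ℝ} (hδ : 0 ≤ δ) (hε : 0 ≤ ε) (hK : 1 ≤ K)
    (hu : ∀ t ∈ Icc (0:ℝ) b, HasDerivWithinAt u (u' t) (Icc 0 b) t) (h0 : ‖u 0‖ ≤ δ)
    (hb : ∀ t ∈ Ico (0:ℝ) b, ‖u' t‖ ≤ K * ‖u t‖ + ε) :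
    ∀ t ∈ Icc (0:ℝ) b, ‖u t‖ ≤ (δ + ε) * Real.exp (K * T) := by
  intro t ht
  have h := norm_le_gronwallBound_of_norm_deriv_right_le (f := u) (f' := u') (δ := δ) (K := K)
    (ε := ε) (a := 0) (b := b) (fun t ht => (hu t ht).continuousWithinAt)
    (fun t ht => (hu t (Ico_subset_Icc_self ht)).mono_of_mem_nhdsWithin
      (Icc_mem_nhdsGE_of_mem ht)) h0 hb t ht
  refine h.trans ?_
  rw [gronwallBound_of_K_ne_0 (by linarith)]
  simp only [sub_zero]
  have h1 : Real.exp (K * t) ≤ Real.exp (K * T) := by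
    apply Real.exp_le_exp.2
    have := ht.2
    nlinarith
  have h2 : ε / K ≤ ε := div_le_self hε hK
  have h3 : 0 ≤ ε / K := by positivity
  have h4 : 0 < Real.exp (K * t) := Real.exp_pos _
  nlinarith [mul_le_mul h2 h1 h4.le hε, mul_le_mul_of_nonneg_left h1 hδ]

theorem aux_radial {E : Type*} [NormedAddCommGroup E] [NormedSpace ℝ E] {R : ℝ} (hR : 0 < R)
    (x y : E) : ‖(R / max R ‖x‖) • x - (R / max R ‖y‖) • y‖ ≤ 2 * ‖x - y‖ := by
  set p := max R ‖x‖ with hp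
  set q := max R ‖y‖ with hq
  have hp0 : R ≤ p := le_max_left _ _
  have hq0 : R ≤ q := le_max_left _ _
  have hyq : ‖y‖ ≤ q := le_max_right _ _
  have hpp : 0 < p := by linarith
  have hqp : 0 < q := by linarith
  have e : (R / p) • x - (R / q) • y = (R / p) • (x - y) + ((R/p) * ((q - p) / q)) • y := by
    have : (R/p) * ((q - p) / q) = R / p - R / q := by field_simp
    rw [this, smul_sub, sub_smul]; abel
  rw [e]
  have hRp : R / p ≤ 1 := (div_le_one hpp).2 hp0
  have hRp0 : 0 ≤ R / p := by positivity
  have hd : |q - p| ≤ ‖x - y‖ := by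
    have : |max ‖y‖ R - max ‖x‖ R| ≤ |‖y‖ - ‖x‖| := abs_max_sub_max_le_abs _ _ _
    rw [max_comm, max_comm ‖x‖] at this
    refine this.trans ?_
    rw [norm_sub_rev]
    exact abs_norm_sub_norm_le _ _
  have hy1 : ‖y‖ / q ≤ 1 := (div_le_one hqp).2 hyq
  have hy0 : 0 ≤ ‖y‖ / q := by positivity
  have n1 : ‖(R / p) • (x - y)‖ ≤ ‖x - y‖ := by
    rw [norm_smul, Real.norm_of_nonneg hRp0]
    exact mul_le_of_le_one_left (norm_nonneg _) hRp
  have n2 : ‖((R/p) * ((q - p) / q)) • y‖ ≤ ‖x - y‖ := by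
    rw [norm_smul, norm_mul, Real.norm_of_nonneg hRp0, norm_div, Real.norm_of_nonneg hqp.le,
      Real.norm_eq_abs]
    calc R / p * (|q - p| / q) * ‖y‖ = (R / p) * (|q - p| * (‖y‖ / q)) := by ring
      _ ≤ 1 * (‖x - y‖ * 1) := by gcongr
      _ = _ := by ring
  calc _ ≤ _ := norm_add_le _ _
    _ ≤ ‖x - y‖ + ‖x - y‖ := add_le_add n1 n2
    _ = _ := by ring

theorem aux_linear {E : Type*} [NormedAddCommGroup E] [NormedSpace ℝ E] [CompleteSpace E]
    {T : ℝ} (hT : 0 < T) (A : ℝ → E →L[ℝ] E) (b : ℝ → E) (hA : ContinuousOn A (Icc 0 T))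
    (hb : ContinuousOn b (Icc 0 T)) (y0 : E) :
    ∃ y : ℝ → E, y 0 = y0 ∧
      ∀ t ∈ Icc (0:ℝ) T, HasDerivWithinAt y (A t (y t) + b t) (Icc 0 T) t := by
  obtain ⟨M, hM⟩ := isCompact_Icc.exists_bound_of_continuousOn hA
  obtain ⟨N, hN⟩ := isCompact_Icc.exists_bound_of_continuousOn hb
  have h0 : (0:ℝ) ∈ Icc 0 T := ⟨le_rfl, hT.le⟩
  have hM0 : 0 ≤ M := (norm_nonneg _).trans (hM 0 h0)
  have hN0 : 0 ≤ N := (norm_nonneg _).trans (hN 0 h0)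
  set R := (‖y0‖ + N) * Real.exp ((M + 1) * T) + 1 with hR
  have hRpos : 0 < R := by positivity
  set ρ : E → E := fun x => (R / max R ‖x‖) • x with hρ
  have hρR : ∀ x, ‖ρ x‖ ≤ R := by
    intro x
    have : 0 < max R ‖x‖ := lt_max_of_lt_left hRpos
    rw [hρ]; simp only
    rw [norm_smul, Real.norm_of_nonneg (by positivity), div_mul_eq_mul_div, div_le_iff₀ this]
    gcongr; exact le_max_right _ _
  have hρ1 : ∀ x, ‖ρ x‖ ≤ ‖x‖ := by
    intro x
    have : 0 < max R ‖x‖ := lt_max_of_lt_left hRpos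
    rw [hρ]; simp only
    rw [norm_smul, Real.norm_of_nonneg (by positivity)]
    exact mul_le_of_le_one_left (norm_nonneg _) ((div_le_one this).2 (le_max_left _ _))
  have hAb : ∀ t ∈ Icc (0:ℝ) T, ∀ x, ‖A t x‖ ≤ M * ‖x‖ := fun t ht x =>
    (A t).le_of_opNorm_le (hM t ht) x
  have hPL : IsPicardLindelof (fun t x => A t (ρ x) + b t) (⟨0, h0⟩ : Icc (0:ℝ) T) y0
      ((Real.toNNReal (M * R + N)) * Real.toNNReal T) 0 (Real.toNNReal (M * R + N))
      (Real.toNNReal (M * 2)) := by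
    refine ⟨?_, ?_, ?_, ?_⟩
    · intro t ht
      apply LipschitzOnWith.of_dist_le_mul
      intro x _ y _
      rw [dist_eq_norm, dist_eq_norm, add_sub_add_right_eq_sub, ← map_sub,
        Real.coe_toNNReal _ (by positivity)]
      calc _ ≤ _ := hAb t ht _
        _ ≤ M * (2 * ‖x - y‖) := by gcongr; exact aux_radial hRpos x y
        _ = _ := by ring
    · intro x _
      exact (hA.clm_apply continuousOn_const).add hb
    · intro t ht x _
      rw [Real.coe_toNNReal _ (by positivity)]
      refine (norm_add_le _ _).trans (add_le_add ((hAb t ht _).trans ?_) (hN t ht))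
      gcongr; exact hρR x
    · simp [hT.le]
  obtain ⟨y, hy0, hy⟩ := hPL.exists_eq_forall_mem_Icc_hasDerivWithinAt₀
  simp only at hy0
  refine ⟨y, hy0, ?_⟩
  have hbd := aux_gron (le_refl T) (norm_nonneg y0) hN0 (by linarith : (1:ℝ) ≤ M + 1) hy
    (by rw [hy0]) (by
      intro t ht
      have ht := Ico_subset_Icc_self ht
      refine (norm_add_le _ _).trans (add_le_add ((hAb t ht _).trans ?_) (hN t ht))
      have := hρ1 (y t)
      nlinarith [norm_nonneg (y t)])
  intro t ht
  have h1 : ρ (y t) = y t := by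
    have : max R ‖y t‖ = R := max_eq_left (by linarith [hbd t ht])
    rw [hρ]; simp only
    rw [this, div_self hRpos.ne', one_smul]
  have h2 := hy t ht
  rwa [h1] at h2

theorem aux_unif {E : Type*} [NormedAddCommGroup E] [NormedSpace ℝ E]
    {V : E → E} {V' : E → E →L[ℝ] E} (hV' : Continuous V') (hV : ∀ x, HasFDerivAt V (V' x) x)
    {S : Set E} (hS : IsCompact S) {η : ℝ} (hη : 0 < η) :
    ∃ δ > 0, ∀ x ∈ S, ∀ y, ‖y - x‖ < δ → ‖V' y - V' x‖ ≤ η ∧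
      ‖V y - V x - V' x (y - x)‖ ≤ η * ‖y - x‖ := by
  have h := hS.uniformContinuousAt_of_continuousAt V' (fun a _ => hV'.continuousAt)
    (Metric.dist_mem_uniformity hη)
  obtain ⟨δ, hδ, h⟩ := Metric.mem_uniformity_dist.1 h
  have h1 : ∀ x ∈ S, ∀ y, ‖y - x‖ < δ → ‖V' y - V' x‖ ≤ η := by
    intro x hx y hy
    have := h (a := x) (b := y) (by rwa [dist_comm, dist_eq_norm]) hx
    change dist (V' x) (V' y) < η at this
    rw [dist_comm, dist_eq_norm] at this
    exact this.le
  refine ⟨δ, hδ, fun x hx y hy => ⟨h1 x hx y hy, ?_⟩⟩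
  refine (convex_ball x δ).norm_image_sub_le_of_norm_hasFDerivWithin_le' (f' := V')
    (fun z _ => (hV z).hasFDerivWithinAt) (fun z hz => h1 x hx z ?_) (Metric.mem_ball_self hδ) ?_
  · rwa [Metric.mem_ball, dist_eq_norm] at hz
  · rwa [Metric.mem_ball, dist_eq_norm]

theorem aux_cont {E : Type*} [NormedAddCommGroup E] [NormedSpace ℝ E]
    {V : E → E} {V' : E → E →L[ℝ] E} (hV' : Continuous V') (hV : ∀ x, HasFDerivAt V (V' x) x)
    {T : ℝ} {γ : ℝ → E}
    (hγ : ∀ t ∈ Icc (0:ℝ) T, HasDerivWithinAt γ (V (γ t)) (Icc 0 T) t) :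
    ∃ C > 0, ∃ δ > 0, ∀ ψ : ℝ → E,
      (∀ t ∈ Icc (0:ℝ) T, HasDerivWithinAt ψ (V (ψ t)) (Icc 0 T) t) →
      ‖ψ 0 - γ 0‖ < δ → ∀ t ∈ Icc (0:ℝ) T, ‖ψ t - γ t‖ ≤ C * ‖ψ 0 - γ 0‖ := by
  have hγc : ContinuousOn γ (Icc 0 T) := fun t ht => (hγ t ht).continuousWithinAt
  obtain ⟨M, hM⟩ := isCompact_Icc.exists_bound_of_continuousOn (hV'.comp_continuousOn hγc)
  obtain ⟨δ, hδ, hu⟩ := aux_unif hV' hV (isCompact_Icc.image_of_continuousOn hγc) one_pos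
  set K := max M 0 + 1 with hK
  have hK1 : 1 ≤ K := by rw [hK]; linarith [le_max_right M 0]
  set C := Real.exp (K * T) with hC
  have hCpos : 0 < C := Real.exp_pos _
  have key : ∀ t ∈ Icc (0:ℝ) T, ∀ y, ‖y - γ t‖ < δ → ‖V y - V (γ t)‖ ≤ K * ‖y - γ t‖ + 0 := by
    intro t ht y hy
    have h1 := (hu (γ t) (mem_image_of_mem _ ht) y hy).2
    have h2 : ‖V' (γ t) (y - γ t)‖ ≤ max M 0 * ‖y - γ t‖ :=
      (V' (γ t)).le_of_opNorm_le ((hM t ht).trans (le_max_left _ _)) _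
    calc ‖V y - V (γ t)‖ = ‖(V y - V (γ t) - V' (γ t) (y - γ t)) + V' (γ t) (y - γ t)‖ := by
          congr 1; abel
      _ ≤ _ := norm_add_le _ _
      _ ≤ 1 * ‖y - γ t‖ + max M 0 * ‖y - γ t‖ := add_le_add h1 h2
      _ = _ := by rw [hK]; ring
  refine ⟨C, hCpos, δ / C, by positivity, ?_⟩
  intro ψ hψ h0
  have h0' : ‖ψ 0 - γ 0‖ * C < δ := (lt_div_iff₀ hCpos).1 h0
  have hder : ∀ t ∈ Icc (0:ℝ) T,
      HasDerivWithinAt (fun t => ψ t - γ t) (V (ψ t) - V (γ t)) (Icc 0 T) t :=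
    fun t ht => (hψ t ht).sub (hγ t ht)
  have hucont : ContinuousOn (fun t => ‖ψ t - γ t‖) (Icc 0 T) :=
    ContinuousOn.norm (fun t ht => (hder t ht).continuousWithinAt)
  have hsmall : ∀ t ∈ Icc (0:ℝ) T, ‖ψ t - γ t‖ < δ := by
    by_contra! hcon
    obtain ⟨t1, ht1, hbad⟩ := hcon
    set B := Icc (0:ℝ) T ∩ (fun t => ‖ψ t - γ t‖) ⁻¹' (Ici δ) with hB
    have hBc : IsClosed B := hucont.preimage_isClosed_of_isClosed isClosed_Icc isClosed_Ici
    have hBne : B.Nonempty := ⟨t1, ht1, hbad⟩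
    have hBb : BddBelow B := ⟨0, fun t ht => ht.1.1⟩
    have hs := hBc.csInf_mem hBne hBb
    set s := sInf B with hsdef
    have hlt : ∀ t ∈ Ico (0:ℝ) s, ‖ψ t - γ t‖ < δ := by
      intro t ht
      by_contra! hh
      have : t ∈ B := ⟨⟨ht.1, ht.2.le.trans hs.1.2⟩, hh⟩
      have := csInf_le hBb this
      exact absurd ht.2 (not_lt.2 this)
    have hsub : Icc (0:ℝ) s ⊆ Icc 0 T := Icc_subset_Icc_right hs.1.2
    have := aux_gron (u := fun t => ψ t - γ t) hs.1.2 (norm_nonneg (ψ 0 - γ 0)) le_rfl hK1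
      (fun t ht => (hder t (hsub ht)).mono hsub) le_rfl
      (fun t ht => key t (hsub (Ico_subset_Icc_self ht)) _ (hlt t ht)) s ⟨hs.1.1, le_rfl⟩
    have h3 : δ ≤ ‖ψ s - γ s‖ := hs.2
    simp only [add_zero] at this
    linarith
  intro t ht
  have := aux_gron (u := fun t => ψ t - γ t) le_rfl (norm_nonneg (ψ 0 - γ 0)) le_rfl hK1
      hder le_rfl
      (fun t ht => key t (Ico_subset_Icc_self ht) _ (hsmall t (Ico_subset_Icc_self ht))) t ht
  simp only [add_zero] at this
  rw [mul_comm]; exact this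

theorem aux_flow {E P : Type*} [NormedAddCommGroup E] [NormedSpace ℝ E] [CompleteSpace E]
    [NormedAddCommGroup P] [NormedSpace ℝ P]
    {V : E → E} (hVC : ContDiff ℝ 1 V) {T : ℝ} (hT : 0 < T) {φ : P → ℝ → E} (ι : P →L[ℝ] E)
    (h0 : ∀ p, φ p 0 = ι p)
    (hφ : ∀ p, ∀ t ∈ Icc (0:ℝ) T, HasDerivWithinAt (φ p) (V (φ p t)) (Icc 0 T) t) :
    ContDiff ℝ 1 (fun p => φ p T) := by
  obtain ⟨V', hV', hV⟩ := contDiff_one_iff_hasFDerivAt.1 hVC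
  have hφc : ∀ p, ContinuousOn (φ p) (Icc 0 T) := fun p t ht => (hφ p t ht).continuousWithinAt
  have hTm : T ∈ Icc (0:ℝ) T := ⟨hT.le, le_rfl⟩
  -- the linearised solutions
  have hD : ∀ p, ∃ D : ℝ → P →L[ℝ] E, D 0 = ι ∧
      ∀ t ∈ Icc (0:ℝ) T, HasDerivWithinAt D ((V' (φ p t)).comp (D t)) (Icc 0 T) t := by
    intro p
    obtain ⟨D, hD0, hD⟩ := aux_linear hT
      (fun t => ContinuousLinearMap.compL ℝ P E E (V' (φ p t))) (fun _ => 0)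
      ((ContinuousLinearMap.compL ℝ P E E).continuous.comp_continuousOn
        (hV'.comp_continuousOn (hφc p))) continuousOn_const ι
    exact ⟨D, hD0, fun t ht => by simpa using hD t ht⟩
  choose D hD0 hDd using hD
  have hDc : ∀ p, ContinuousOn (D p) (Icc 0 T) := fun p t ht => (hDd p t ht).continuousWithinAt
  -- uniform closeness of the trajectories
  have hclose : ∀ p, ∃ C > 0, ∀ᶠ q in 𝓝 p, ∀ t ∈ Icc (0:ℝ) T,
      ‖φ q t - φ p t‖ ≤ C * ‖q - p‖ := by
    intro p
    obtain ⟨C, hC, δ, hδ, h⟩ := aux_cont hV' hV (hφ p)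
    refine ⟨C * (‖ι‖ + 1), by positivity, ?_⟩
    have hcont : ContinuousAt (fun q => ‖ι q - ι p‖) p := by fun_prop
    have : ∀ᶠ q in 𝓝 p, ‖ι q - ι p‖ < δ := by
      apply hcont.eventually_lt_const
      simpa using hδ
    filter_upwards [this] with q hq t ht
    have h1 := h (φ q) (hφ q) (by rw [h0, h0]; exact hq) t ht
    rw [h0, h0, ← map_sub] at h1
    refine h1.trans ?_
    rw [mul_assoc]
    gcongr
    refine (ι.le_opNorm _).trans ?_
    gcongr
    linarith
  have hclose' : ∀ p, ∀ δ > 0, ∀ᶠ q in 𝓝 p, ∀ t ∈ Icc (0:ℝ) T, ‖φ q t - φ p t‖ < δ := by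
    intro p δ hδ
    obtain ⟨C, hC, h⟩ := hclose p
    have hcont : ContinuousAt (fun q => C * ‖q - p‖) p := by fun_prop
    have : ∀ᶠ q in 𝓝 p, C * ‖q - p‖ < δ := by
      apply hcont.eventually_lt_const
      simpa using hδ
    filter_upwards [h, this] with q h1 h2 t ht
    exact (h1 t ht).trans_lt h2
  rw [contDiff_one_iff_hasFDerivAt]
  refine ⟨fun p => D p T, ?_, ?_⟩
  · rw [continuous_iff_continuousAt]
    intro p
    rw [Metric.continuousAt_iff']
    intro e he
    obtain ⟨M, hM⟩ := isCompact_Icc.exists_bound_of_continuousOn (hV'.comp_continuousOn (hφc p))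
    obtain ⟨N, hN⟩ := isCompact_Icc.exists_bound_of_continuousOn (hDc p)
    have hM0 : 0 ≤ M := (norm_nonneg _).trans (hM T hTm)
    have hN0 : 0 ≤ N := (norm_nonneg _).trans (hN T hTm)
    have hex : 0 < Real.exp ((M + 2) * T) := Real.exp_pos _
    set η := min 1 (e / (2 * (N + 1) * Real.exp ((M + 2) * T))) with hη
    have hηpos : 0 < η := by positivity
    obtain ⟨δ, hδ, hu⟩ := aux_unif hV' hV (isCompact_Icc.image_of_continuousOn (hφc p)) hηpos
    filter_upwards [hclose' p δ hδ] with q hq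
    have hg := aux_gron (u := fun t => D q t - D p t) (le_refl T) le_rfl
      (by positivity : 0 ≤ η * N) (by linarith : (1:ℝ) ≤ M + 2)
      (fun t ht => (hDd q t ht).sub (hDd p t ht)) (by simp [hD0]) (by
        intro t ht
        have ht := Ico_subset_Icc_self ht
        have h1 := (hu (φ p t) (mem_image_of_mem _ ht) _ (hq t ht)).1
        have e1 : (V' (φ q t)).comp (D q t) - (V' (φ p t)).comp (D p t)
            = (V' (φ p t)).comp (D q t - D p t) + (V' (φ q t) - V' (φ p t)).comp (D q t - D p t)
              + (V' (φ q t) - V' (φ p t)).comp (D p t) := by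
          ext x; simp; abel
        rw [e1]
        have n1 : ‖(V' (φ p t)).comp (D q t - D p t)‖ ≤ M * ‖D q t - D p t‖ :=
          (ContinuousLinearMap.opNorm_comp_le _ _).trans
            (mul_le_mul_of_nonneg_right (hM t ht) (norm_nonneg _))
        have n2 : ‖(V' (φ q t) - V' (φ p t)).comp (D q t - D p t)‖ ≤ 1 * ‖D q t - D p t‖ :=
          (ContinuousLinearMap.opNorm_comp_le _ _).trans
            (mul_le_mul_of_nonneg_right (h1.trans (min_le_left _ _)) (norm_nonneg _))
        have n3 : ‖(V' (φ q t) - V' (φ p t)).comp (D p t)‖ ≤ η * N :=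
          (ContinuousLinearMap.opNorm_comp_le _ _).trans
            (mul_le_mul h1 (hN t ht) (norm_nonneg _) hηpos.le)
        have := norm_add₃_le (a := (V' (φ p t)).comp (D q t - D p t))
          (b := (V' (φ q t) - V' (φ p t)).comp (D q t - D p t))
          (c := (V' (φ q t) - V' (φ p t)).comp (D p t))
        nlinarith [norm_nonneg (D q t - D p t)]) T hTm
    rw [dist_eq_norm]
    refine hg.trans_lt ?_
    have h3 : η ≤ e / (2 * (N + 1) * Real.exp ((M + 2) * T)) := min_le_right _ _
    rw [le_div_iff₀ (by positivity)] at h3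
    have : 0 < η * Real.exp ((M + 2) * T) := by positivity
    nlinarith
  · intro p
    rw [hasFDerivAt_iff_isLittleO, Asymptotics.isLittleO_iff]
    intro c hc
    obtain ⟨M, hM⟩ := isCompact_Icc.exists_bound_of_continuousOn (hV'.comp_continuousOn (hφc p))
    have hM0 : 0 ≤ M := (norm_nonneg _).trans (hM T hTm)
    have hex : 0 < Real.exp ((M + 1) * T) := Real.exp_pos _
    obtain ⟨C, hC, hcl⟩ := hclose p
    set η := c / (C * Real.exp ((M + 1) * T)) with hη
    have hηpos : 0 < η := by positivity
    obtain ⟨δ, hδ, hu⟩ := aux_unif hV' hV (isCompact_Icc.image_of_continuousOn (hφc p)) hηpos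
    filter_upwards [hclose' p δ hδ, hcl] with q hq hcq
    have hg := aux_gron (u := fun t => φ q t - φ p t - D p t (q - p)) (le_refl T) le_rfl
      (by positivity : 0 ≤ η * (C * ‖q - p‖)) (by linarith : (1:ℝ) ≤ M + 1)
      (fun t ht => ((hφ q t ht).sub (hφ p t ht)).sub
        ((hDd p t ht).clm_apply (hasDerivWithinAt_const t _ (q - p)))) (by simp [hD0, h0]) (by
        intro t ht
        have ht := Ico_subset_Icc_self ht
        have h1 := (hu (φ p t) (mem_image_of_mem _ ht) _ (hq t ht)).2
        have e1 : V (φ q t) - V (φ p t) -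
            (((V' (φ p t)).comp (D p t)) (q - p) + (D p t) 0)
            = V' (φ p t) (φ q t - φ p t - D p t (q - p)) +
              (V (φ q t) - V (φ p t) - V' (φ p t) (φ q t - φ p t)) := by
          simp
        rw [e1]
        have n1 : ‖V' (φ p t) (φ q t - φ p t - D p t (q - p))‖ ≤
            M * ‖φ q t - φ p t - D p t (q - p)‖ := (V' (φ p t)).le_of_opNorm_le (hM t ht) _
        have n2 : ‖V (φ q t) - V (φ p t) - V' (φ p t) (φ q t - φ p t)‖ ≤ η * (C * ‖q - p‖) :=
          h1.trans (mul_le_mul_of_nonneg_left (hcq t ht) hηpos.le)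
        refine (norm_add_le _ _).trans ?_
        nlinarith [norm_nonneg (φ q t - φ p t - D p t (q - p))]) T hTm
    refine hg.trans (le_of_eq ?_)
    rw [hη, zero_add]; field_simp

theorem aux_param {H E : Type*} [NormedAddCommGroup E] [NormedSpace ℝ E] [CompleteSpace E]
    [NormedAddCommGroup H] [NormedSpace ℝ H] [CompleteSpace H]
    {F : H × ℝ → E} (hF : ContDiff ℝ 1 F) :
    ContDiff ℝ 1 (fun h => ∫ s in (0:ℝ)..1, F (h, s)) := by
  have hV : ContDiff ℝ 1 (fun z : H × ℝ × E => ((0 : H), (1 : ℝ), F (z.1, z.2.1))) := by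
    fun_prop
  have := aux_flow hV one_pos (φ := fun h t => (h, t, ∫ s in (0:ℝ)..t, F (h, s)))
    (ContinuousLinearMap.inl ℝ H (ℝ × E)) (by intro p; simp) (by
      intro h t ht
      refine HasDerivWithinAt.prodMk (hasDerivWithinAt_const _ _ _)
        (HasDerivWithinAt.prodMk (hasDerivWithinAt_id _ _) (HasDerivAt.hasDerivWithinAt ?_))
      have hc : Continuous (fun s => F (h, s)) := hF.continuous.comp (by fun_prop)
      exact intervalIntegral.integral_hasDerivAt_right (hc.intervalIntegrable _ _)
        (hc.stronglyMeasurableAtFilter _ _) hc.continuousAt)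
  exact this.snd.snd

/-- Lemma 2: for the Poincaré map `𝒫_ε(v) = x(T,v,ε)` of
`ẋ = f(x) + εg(t,x,ε)` with `Q(v,ε) = (𝒫_ε(v) − 𝒫₀(v))/ε`, the limit `Q(v,0)` as
`ε → 0⁺` exists, the resulting `Q` is `C¹` on `ℝⁿ × [0,1]`, and the Malkin bifurcation
function `M(θ) = ∫₀ᵀ ⟨g(t,x₀(t+θ),0), z₀(t+θ)⟩ dt` satisfies
`M(θ) = ⟨Q(x₀(θ),0), z₀(θ)⟩`. -/
theorem stmt_7 {n : ℕ} (T : ℝ) (hT : 0 < T)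
    (f : EuclideanSpace ℝ (Fin n) → EuclideanSpace ℝ (Fin n))
    (hf : ContDiff ℝ 2 f)
    (g : ℝ → EuclideanSpace ℝ (Fin n) → ℝ → EuclideanSpace ℝ (Fin n))
    (hg : ContDiff ℝ 1 fun p : ℝ × EuclideanSpace ℝ (Fin n) × ℝ => g p.1 p.2.1 p.2.2)
    (hgT : ∀ t x e, g (t + T) x e = g t x e)
    -- the (unique, globally defined) solutions `X(·, v, ε)` of the Cauchy problems
    (X : ℝ → EuclideanSpace ℝ (Fin n) → ℝ → EuclideanSpace ℝ (Fin n))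
    (hX0 : ∀ v ε, X 0 v ε = v)
    (hXode : ∀ v ε t, HasDerivAt (fun s => X s v ε)
      (f (X t v ε) + ε • g t (X t v ε) ε) t)
    (hXuniq : ∀ v ε (u : ℝ → EuclideanSpace ℝ (Fin n)), u 0 = v →
      (∀ t, HasDerivAt u (f (u t) + ε • g t (u t) ε) t) → ∀ t, u t = X t v ε)
    -- the `T`-periodic limit cycle `x₀` of `ẋ = f(x)`
    (x₀ : ℝ → EuclideanSpace ℝ (Fin n))
    (hx₀ : ∀ t, HasDerivAt x₀ (f (x₀ t)) t)
    (hx₀T : ∀ t, x₀ (t + T) = x₀ t)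
    -- the `T`-periodic solution `z₀` of the adjoint system `ż = −(f'(x₀(t)))*z`
    (z₀ : ℝ → EuclideanSpace ℝ (Fin n))
    (hz₀ : ∀ t, HasDerivAt z₀ (-(ContinuousLinearMap.adjoint (fderiv ℝ f (x₀ t)) (z₀ t))) t)
    (hz₀T : ∀ t, z₀ (t + T) = z₀ t) :
    ∃ Q : EuclideanSpace ℝ (Fin n) → ℝ → EuclideanSpace ℝ (Fin n),
      (∀ v, ∀ ε ∈ Ioc (0:ℝ) 1, Q v ε = ε⁻¹ • (X T v ε - X T v 0)) ∧
      (∀ v, Tendsto (fun ε : ℝ => ε⁻¹ • (X T v ε - X T v 0)) (𝓝[>] (0:ℝ)) (𝓝 (Q v 0))) ∧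
      ContDiffOn ℝ 1 (fun p : EuclideanSpace ℝ (Fin n) × ℝ => Q p.1 p.2)
        (univ ×ˢ Icc (0:ℝ) 1) ∧
      ∀ θ ∈ Icc (0:ℝ) T,
        (∫ t in (0:ℝ)..T, ⟪g t (x₀ (t + θ)) 0, z₀ (t + θ)⟫_ℝ) = ⟪Q (x₀ θ) 0, z₀ θ⟫_ℝ := by
  have hfd : ContDiff ℝ 1 (fderiv ℝ f) := hf.fderiv_right (by norm_num)
  have hf1 : ContDiff ℝ 1 f := hf.of_le (by norm_num)
  have hfdiff : ∀ x, HasFDerivAt f (fderiv ℝ f x) x := fun x =>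
    (hf1.differentiable one_ne_zero x).hasFDerivAt
  -- the divided difference of `f`
  obtain ⟨G, hG⟩ : ∃ G : EuclideanSpace ℝ (Fin n) × EuclideanSpace ℝ (Fin n) × ℝ →
      EuclideanSpace ℝ (Fin n), G = fun h => ∫ s in (0:ℝ)..1,
        fderiv ℝ f (h.1 + (s * h.2.2) • h.2.1) h.2.1 := ⟨_, rfl⟩
  have hGC : ContDiff ℝ 1 G := by
    have : ContDiff ℝ 1 (fun z : (EuclideanSpace ℝ (Fin n) × EuclideanSpace ℝ (Fin n) × ℝ) × ℝ =>
        fderiv ℝ f (z.1.1 + (z.2 * z.1.2.2) • z.1.2.1) z.1.2.1) :=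
      (hfd.comp (by fun_prop)).clm_apply (by fun_prop)
    rw [hG]
    exact aux_param this
  have hG0 : ∀ x y, G (x, y, 0) = fderiv ℝ f x y := by
    intro x y
    rw [hG]; simp
  have hGne : ∀ x y e, e ≠ 0 → G (x, y, e) = e⁻¹ • (f (x + e • y) - f x) := by
    intro x y e he
    have hd : ∀ s : ℝ, HasDerivAt (fun s : ℝ => e⁻¹ • f (x + (s * e) • y))
        (fderiv ℝ f (x + (s * e) • y) y) s := by
      intro s
      have h1 : HasDerivAt (fun s : ℝ => x + (s * e) • y) ((1 * e) • y) s :=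
        (((hasDerivAt_id s).mul_const e).smul_const y).const_add x
      have h2 := ((hfdiff (x + (s * e) • y)).comp_hasDerivAt s h1).const_smul e⁻¹
      refine h2.congr_deriv ?_
      rw [one_mul, map_smul, smul_smul, inv_mul_cancel₀ he, one_smul]
    have hc : Continuous (fun s : ℝ => fderiv ℝ f (x + (s * e) • y) y) :=
      (hfd.continuous.comp (by fun_prop)).clm_apply continuous_const
    rw [hG]
    simp only
    rw [intervalIntegral.integral_eq_sub_of_hasDerivAt (fun s _ => hd s)
      (hc.intervalIntegrable _ _)]
    simp [smul_sub]
  have hX0der : ∀ v t, HasDerivAt (fun s => X s v 0) (f (X t v 0)) t := by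
    intro v t
    simpa using hXode v 0 t
  have hX0c : ∀ v, Continuous (fun s => X s v 0) := fun v =>
    continuous_iff_continuousAt.2 fun t => (hX0der v t).continuousAt
  -- the solution for `ε = 0`
  have hlin : ∀ v, ∃ y : ℝ → EuclideanSpace ℝ (Fin n), y 0 = 0 ∧ ∀ t ∈ Icc (0:ℝ) T,
      HasDerivWithinAt y (fderiv ℝ f (X t v 0) (y t) + g t (X t v 0) 0) (Icc 0 T) t := by
    intro v
    apply aux_linear hT (fun t => fderiv ℝ f (X t v 0)) (fun t => g t (X t v 0) 0)
    · exact (hfd.continuous.comp (hX0c v)).continuousOn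
    · exact (hg.continuous.comp (continuous_id.prodMk
        ((hX0c v).prodMk continuous_const))).continuousOn
  choose L hL0 hL using hlin
  obtain ⟨Y, hY⟩ : ∃ Y : EuclideanSpace ℝ (Fin n) → ℝ → ℝ → EuclideanSpace ℝ (Fin n),
      Y = fun v e t => if e = 0 then L v t else e⁻¹ • (X t v e - X t v 0) := ⟨_, rfl⟩
  have hYz : ∀ v, Y v 0 = L v := by intro v; rw [hY]; simp
  have hYne : ∀ v e, e ≠ 0 → Y v e = fun t => e⁻¹ • (X t v e - X t v 0) := by
    intro v e he; rw [hY]; simp [he]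
  have hYd : ∀ v e, ∀ t ∈ Icc (0:ℝ) T, HasDerivWithinAt (Y v e)
      (G (X t v 0, Y v e t, e) + g t (X t v 0 + e • Y v e t) e) (Icc 0 T) t := by
    intro v e t ht
    by_cases he : e = 0
    · subst he
      rw [hG0, hYz, zero_smul, add_zero]
      exact hL v t ht
    · have hx : X t v 0 + e • Y v e t = X t v e := by
        rw [hYne v e he, smul_smul, mul_inv_cancel₀ he, one_smul]; abel
      rw [hGne _ _ _ he, hx, hYne v e he]
      have := (((hXode v e t).sub (hX0der v t)).const_smul e⁻¹).hasDerivWithinAt (s := Icc 0 T)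
      refine this.congr_deriv ?_
      rw [← sub_add_eq_add_sub, smul_add, smul_smul, inv_mul_cancel₀ he, one_smul]
  have hQC : ContDiff ℝ 1 (fun p : EuclideanSpace ℝ (Fin n) × ℝ => Y p.1 p.2 T) := by
    have hV : ContDiff ℝ 1 (fun z : ℝ × EuclideanSpace ℝ (Fin n) × EuclideanSpace ℝ (Fin n) × ℝ =>
        ((1:ℝ), f z.2.1, G (z.2.1, z.2.2.1, z.2.2.2) +
          g z.1 (z.2.1 + z.2.2.2 • z.2.2.1) z.2.2.2, (0:ℝ))) := by
      refine contDiff_const.prodMk ((hf1.comp (by fun_prop)).prodMk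
        (ContDiff.prodMk (ContDiff.add (hGC.comp (by fun_prop)) ?_) contDiff_const))
      exact hg.comp (f := fun z : ℝ × EuclideanSpace ℝ (Fin n) × EuclideanSpace ℝ (Fin n) × ℝ =>
        (z.1, z.2.1 + z.2.2.2 • z.2.2.1, z.2.2.2)) (by fun_prop)
    have := aux_flow hV hT (φ := fun p : EuclideanSpace ℝ (Fin n) × ℝ => fun t =>
        (t, X t p.1 0, Y p.1 p.2 t, p.2))
      ((0 : EuclideanSpace ℝ (Fin n) × ℝ →L[ℝ] ℝ).prod
        ((ContinuousLinearMap.fst ℝ _ _).prod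
          ((0 : EuclideanSpace ℝ (Fin n) × ℝ →L[ℝ] EuclideanSpace ℝ (Fin n)).prod
            (ContinuousLinearMap.snd ℝ _ _)))) (by
        rintro ⟨v, e⟩
        have : Y v e 0 = 0 := by
          by_cases he : e = 0
          · subst he; rw [hYz, hL0]
          · rw [hYne v e he]; simp [hX0]
        simp [hX0, this]) (by
        rintro ⟨v, e⟩ t ht
        exact (hasDerivWithinAt_id _ _).prodMk ((hX0der v t).hasDerivWithinAt.prodMk
          ((hYd v e t ht).prodMk (hasDerivWithinAt_const _ _ _))))
    exact this.snd.snd.fst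
  refine ⟨fun v e => Y v e T, ?_, ?_, hQC.contDiffOn, ?_⟩
  · intro v e he
    simp only
    rw [hYne v e he.1.ne']
  · intro v
    have hc : Continuous (fun e => Y v e T) :=
      hQC.continuous.comp (continuous_const.prodMk continuous_id)
    refine ((hc.tendsto 0).mono_left nhdsWithin_le_nhds).congr' ?_
    filter_upwards [self_mem_nhdsWithin] with e he
    rw [hYne v e (ne_of_gt he)]
  · intro θ _
    have hXx : ∀ t, x₀ (t + θ) = X t (x₀ θ) 0 := by
      apply hXuniq (x₀ θ) 0 (fun t => x₀ (t + θ)) (by simp)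
      intro t
      simpa using (hx₀ (t + θ)).comp_add_const t θ
    have hz : ∀ t, HasDerivAt (fun t => z₀ (t + θ))
        (-(ContinuousLinearMap.adjoint (fderiv ℝ f (x₀ (t + θ))) (z₀ (t + θ)))) t := fun t =>
      (hz₀ (t + θ)).comp_add_const t θ
    have hzc : Continuous (fun t => z₀ (t + θ)) :=
      continuous_iff_continuousAt.2 fun t => (hz t).continuousAt
    have hxc : Continuous (fun t => x₀ (t + θ)) :=
      continuous_iff_continuousAt.2 fun t => ((hx₀ (t + θ)).comp_add_const t θ).continuousAt
    have hgc : Continuous (fun t => g t (x₀ (t + θ)) 0) :=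
      hg.continuous.comp (continuous_id.prodMk (hxc.prodMk continuous_const))
    have hder : ∀ t ∈ Icc (0:ℝ) T, HasDerivWithinAt (fun t => ⟪L (x₀ θ) t, z₀ (t + θ)⟫_ℝ)
        ⟪g t (x₀ (t + θ)) 0, z₀ (t + θ)⟫_ℝ (Icc 0 T) t := by
      intro t ht
      have := (hL (x₀ θ) t ht).inner ℝ (hz t).hasDerivWithinAt
      refine this.congr_deriv ?_
      rw [← hXx, inner_neg_right, ContinuousLinearMap.adjoint_inner_right, inner_add_left]
      ring
    rw [intervalIntegral.integral_eq_sub_of_hasDerivAt_of_le hT.le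
      (fun t ht => (hder t ht).continuousWithinAt)
      (fun t ht => (hder t (Ioo_subset_Icc_self ht)).hasDerivAt (Icc_mem_nhds ht.1 ht.2))
      ((hgc.inner hzc).intervalIntegrable _ _)]
    simp only [hYz, hL0, inner_zero_left, sub_zero]
    rw [add_comm T θ, hz₀T]
end

section
/- Consider ẋ = f(x) + εg(t,x,ε) with f ∈ C²(ℝⁿ,ℝⁿ), g ∈ C¹(ℝ×ℝⁿ×[0,1],ℝⁿ) T-periodic in t, with unique solutions of Cauchy problems defined on [0,T]. Let x₀ be a T-periodic limit cycle of ẋ = f(x), z₀ a T-periodic solution of ż = −(f'(x₀(t)))*z normalized so that ⟨ẋ₀(t),z₀(t)⟩ ≡ 1, M(θ) = ∫₀ᵀ ⟨g(t,x₀(t+θ),0), z₀(t+θ)⟩ dt the Malkin bifurcation function, and 𝒫_ε(v) = x(T,v,ε) the Poincaré map. Assume there exists θ₀ ∈ [0,T] such that (𝒫₀)'(x₀(θ₀)) has n−1 eigenvalues with negative real part... [correction: n−1 eigenvalues of modulus different from 1 lying so that the nontrivial Floquet multipliers have real parts of the stated sign], i.e. assume (𝒫₀)'(x₀(θ₀))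 − I has n−1 eigenvalues with negative real parts, M(θ₀) = 0 and M'(θ₀) < 0. Then there is ε₀ > 0 such that for every ε ∈ (0,ε₀] the perturbed system has a unique T-periodic solution x_ε with x_ε(t) → x₀(t+θ₀) as ε → 0 uniformly on [0,T]. -/
open Set Filter Topology
open scoped InnerProductSpace

set_option linter.unusedSectionVars false

namespace Malkin
noncomputable section

section Superpos
variable {K : Type*} [TopologicalSpace K] [CompactSpace K]
  {V W : Type*} [NormedAddCommGroup V] [NormedSpace ℝ V] [NormedAddCommGroup W] [NormedSpace ℝ W]

/-- multiplication operator -/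
def mulOp (B : C(K, V →L[ℝ] W)) : C(K, V) →L[ℝ] C(K, W) :=
  LinearMap.mkContinuous
    { toFun := fun y => ⟨fun s => B s (y s), by fun_prop⟩
      map_add' := by intro x y; ext s; simp
      map_smul' := by intro c y; ext s; simp } ‖B‖ (by
      intro y
      refine (ContinuousMap.norm_le _ (by positivity)).2 fun s => ?_
      refine ((B s).le_opNorm _).trans ?_
      gcongr
      · exact B.norm_coe_le_norm s
      · exact y.norm_coe_le_norm s)

@[simp] lemma mulOp_apply (B : C(K, V →L[ℝ] W)) (y : C(K, V)) (s : K) :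
    mulOp B y s = B s (y s) := rfl

/-- superposition operator -/
def sup (N : K → V → W) (hN : Continuous fun p : K × V => N p.1 p.2) (y : C(K, V)) : C(K, W) :=
  ⟨fun s => N s (y s), hN.comp (continuous_id.prodMk y.continuous)⟩

@[simp] lemma sup_apply (N : K → V → W) (hN : Continuous fun p : K × V => N p.1 p.2)
    (y : C(K, V)) (s : K) : sup N hN y s = N s (y s) := rfl

lemma sup_strict (N : K → V → W) (hN : Continuous fun p : K × V => N p.1 p.2)
    (N' : K → V → V →L[ℝ] W) (hN' : Continuous fun p : K × V => N' p.1 p.2)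
    (hd : ∀ s v, HasFDerivAt (N s) (N' s v) v) (y : C(K, V)) :
    HasStrictFDerivAt (sup N hN) (mulOp (sup N' hN' y)) y := by
  rw [hasStrictFDerivAt_iff_isLittleO, Asymptotics.isLittleO_iff]
  intro c hc
  have h1 : ∀ᶠ h : V in 𝓝 0, ∀ s ∈ (univ : Set K), ‖N' s (y s + h) - N' s (y s)‖ < c := by
    refine isCompact_univ.eventually_forall_of_forall_eventually fun s _ => ?_
    have hcont : Continuous fun p : V × K => ‖N' p.2 (y p.2 + p.1) - N' p.2 (y p.2)‖ := by
      have e1 : Continuous fun p : V × K => N' p.2 (y p.2 + p.1) :=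
        hN'.comp (continuous_snd.prodMk ((y.continuous.comp continuous_snd).add continuous_fst))
      have e2 : Continuous fun p : V × K => N' p.2 (y p.2) :=
        hN'.comp (continuous_snd.prodMk (y.continuous.comp continuous_snd))
      exact (e1.sub e2).norm
    have := hcont.tendsto (0, s)
    refine this.eventually_lt_const ?_
    simpa using hc
  obtain ⟨r, hr, hball⟩ := Metric.eventually_nhds_iff.1 h1
  have h2 : ∀ᶠ p : C(K, V) × C(K, V) in 𝓝 (y, y), p.1 ∈ Metric.ball y r ∧ p.2 ∈ Metric.ball y r :=
    (continuous_fst.tendsto (y, y)).eventually (Metric.ball_mem_nhds y hr) |>.and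
      ((continuous_snd.tendsto (y, y)).eventually (Metric.ball_mem_nhds y hr))
  filter_upwards [h2] with p hp
  refine (ContinuousMap.norm_le _ (by positivity)).2 fun s => ?_
  have hb : ∀ q : C(K, V), q ∈ Metric.ball y r → q s ∈ Metric.ball (y s) r := by
    intro q hq
    exact lt_of_le_of_lt (ContinuousMap.dist_apply_le_dist s) hq
  have := (convex_ball (y s) r).norm_image_sub_le_of_norm_hasFDerivWithin_le'
    (f := N s) (f' := N' s) (φ := N' s (y s)) (C := c)
    (fun v _ => (hd s v).hasFDerivWithinAt) (fun v hv => by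
      have h := hball (y := v - y s) (by simpa [dist_eq_norm] using hv) s (mem_univ _)
      simpa using h.le) (hb _ hp.2) (hb _ hp.1)
  refine le_trans (le_of_eq (by simp)) (this.trans ?_)
  gcongr
  exact (p.1 - p.2).norm_coe_le_norm s

end Superpos

section Integral
variable {T : ℝ} (hT : 0 < T) {E : Type*} [NormedAddCommGroup E] [NormedSpace ℝ E]

abbrev i0 : Icc (0:ℝ) T := ⟨0, le_rfl, hT.le⟩
abbrev iT : Icc (0:ℝ) T := ⟨T, hT.le, le_rfl⟩

abbrev ext (y : C(Icc (0:ℝ) T, E)) : C(ℝ, E) := ContinuousMap.IccExtend hT.le y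

lemma ext_of_mem (y : C(Icc (0:ℝ) T, E)) {t : ℝ} (ht : t ∈ Icc (0:ℝ) T) :
    ext hT y t = y ⟨t, ht⟩ := by
  simp [ext, ContinuousMap.IccExtend, Set.IccExtend_of_mem _ _ ht]

lemma ext_coe (y : C(Icc (0:ℝ) T, E)) (t : Icc (0:ℝ) T) :
    ext hT y t = y t := ext_of_mem hT y t.2

lemma ext_norm_le (y : C(Icc (0:ℝ) T, E)) (t : ℝ) : ‖ext hT y t‖ ≤ ‖y‖ :=
  y.norm_coe_le_norm _

variable [CompleteSpace E]

/-- Integration operator. -/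
def J : C(Icc (0:ℝ) T, E) →L[ℝ] C(Icc (0:ℝ) T, E) :=
  LinearMap.mkContinuous
    { toFun := fun y => ⟨fun t => ∫ s in (0:ℝ)..t, ext hT y s,
        (intervalIntegral.continuous_primitive
          (fun a b => (ext hT y).continuous.intervalIntegrable a b) 0).comp continuous_subtype_val⟩
      map_add' := by
        intro x y; ext s
        simp only [ContinuousMap.coe_mk, ContinuousMap.add_apply]
        rw [← intervalIntegral.integral_add ((ext hT x).continuous.intervalIntegrable _ _)
          ((ext hT y).continuous.intervalIntegrable _ _)]
        rfl
      map_smul' := by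
        intro c y; ext s
        simp only [ContinuousMap.coe_mk, ContinuousMap.smul_apply, RingHom.id_apply]
        rw [← intervalIntegral.integral_smul]
        rfl } T (by
      intro y
      refine (ContinuousMap.norm_le _ (by positivity)).2 fun s => ?_
      refine (intervalIntegral.norm_integral_le_of_norm_le_const (C := ‖y‖)
        fun x _ => ext_norm_le hT y x).trans ?_
      rw [mul_comm, sub_zero, abs_of_nonneg s.2.1]
      gcongr
      exact s.2.2)

lemma J_apply (y : C(Icc (0:ℝ) T, E)) (t : Icc (0:ℝ) T) :
    J hT y t = ∫ s in (0:ℝ)..t, ext hT y s := rfl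

@[simp] lemma J_zero (y : C(Icc (0:ℝ) T, E)) : J hT y (i0 hT) = 0 := by
  simp [J_apply]

lemma J_norm_le (y : C(Icc (0:ℝ) T, E)) : ‖J hT y‖ ≤ T * ‖y‖ :=
  by
  refine (ContinuousMap.norm_le _ (by positivity)).2 fun s => ?_
  refine (intervalIntegral.norm_integral_le_of_norm_le_const (C := ‖y‖)
    fun x _ => ext_norm_le hT y x).trans ?_
  rw [mul_comm, sub_zero, abs_of_nonneg s.2.1]
  gcongr
  exact s.2.2

lemma J_deriv (y : C(Icc (0:ℝ) T, E)) (c : E) (t : ℝ) :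
    HasDerivAt (fun t => c + ∫ s in (0:ℝ)..t, ext hT y s) (ext hT y t) t := by
  refine HasDerivAt.const_add c ?_
  exact intervalIntegral.integral_hasDerivAt_right
    ((ext hT y).continuous.intervalIntegrable _ _)
    ((ext hT y).continuous.stronglyMeasurableAtFilter _ _) (ext hT y).continuous.continuousAt

/-- Converse: FTC. -/
lemma J_of_deriv (u : ℝ → E) (h : C(Icc (0:ℝ) T, E))
    (hu : ∀ t : Icc (0:ℝ) T, HasDerivAt u (h t) t) (t : Icc (0:ℝ) T) :
    u t = u 0 + J hT h t := by
  have h2 := intervalIntegral.integral_eq_sub_of_hasDerivAt (f := u) (f' := ext hT h)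
    (a := 0) (b := t) (fun x hx => by
      rw [uIcc_of_le t.2.1] at hx
      have hx' : x ∈ Icc (0:ℝ) T := ⟨hx.1, hx.2.trans t.2.2⟩
      rw [ext_of_mem hT h hx']
      exact hu ⟨x, hx'⟩) ((ext hT h).continuous.intervalIntegrable _ _)
  rw [J_apply, h2]; abel

lemma iter_bound (B : C(Icc (0:ℝ) T, E →L[ℝ] E)) (y : C(Icc (0:ℝ) T, E)) (k : ℕ)
    (t : Icc (0:ℝ) T) :
    ‖(((J hT) ∘L mulOp B) ^ k) y t‖ ≤ (‖B‖ * t) ^ k / k.factorial * ‖y‖ := by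
  induction k generalizing t with
  | zero => simpa using y.norm_coe_le_norm t
  | succ k ih =>
    rw [pow_succ']
    set w := (((J hT) ∘L mulOp B) ^ k) y with hw
    have : ((J hT ∘L mulOp B) * (J hT ∘L mulOp B) ^ k) y = J hT (mulOp B w) := rfl
    rw [this, J_apply]
    have hle : ∀ s ∈ Ioc (0:ℝ) t, ‖ext hT (mulOp B w) s‖ ≤
        ‖B‖ * ((‖B‖ * s) ^ k / k.factorial * ‖y‖) := by
      intro s hs
      have hs' : s ∈ Icc (0:ℝ) T := ⟨hs.1.le, hs.2.trans t.2.2⟩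
      rw [ext_of_mem hT _ hs', mulOp_apply]
      refine ((B _).le_opNorm _).trans ?_
      gcongr
      · exact B.norm_coe_le_norm _
      · exact ih ⟨s, hs'⟩
    refine (intervalIntegral.norm_integral_le_of_norm_le t.2.1
      (Filter.Eventually.of_forall hle) (Continuous.intervalIntegrable (by fun_prop) _ _)).trans ?_
    apply le_of_eq
    have e : ∀ s : ℝ, ‖B‖ * ((‖B‖ * s) ^ k / k.factorial * ‖y‖) =
      (‖B‖ ^ (k+1) / k.factorial * ‖y‖) * s ^ k := by intro s; rw [mul_pow]; ring
    simp_rw [e]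
    rw [intervalIntegral.integral_const_mul, integral_pow, Nat.factorial_succ]
    push_cast
    have : (k.factorial : ℝ) ≠ 0 := by positivity
    have : (k : ℝ) + 1 ≠ 0 := by positivity
    field_simp
    simp [mul_pow]
    ring

lemma volterra (B : C(Icc (0:ℝ) T, E →L[ℝ] E)) :
    IsUnit (1 - (J hT) ∘L mulOp B : C(Icc (0:ℝ) T, E) →L[ℝ] C(Icc (0:ℝ) T, E)) := by
  set V : C(Icc (0:ℝ) T, E) →L[ℝ] C(Icc (0:ℝ) T, E) := (J hT) ∘L mulOp B with hV
  obtain ⟨k, hk⟩ : ∃ k : ℕ, (‖B‖ * T) ^ k / k.factorial < 1 := by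
    have := (FloorSemiring.tendsto_pow_div_factorial_atTop (‖B‖ * T)).eventually_lt_const one_pos
    exact this.exists
  have hn : ‖V ^ k‖ < 1 := by
    refine lt_of_le_of_lt (ContinuousLinearMap.opNorm_le_bound _ (by positivity) fun y => ?_) hk
    refine (ContinuousMap.norm_le _ (by positivity)).2 fun t => (iter_bound hT B y k t).trans ?_
    have := t.2.1
    have := t.2.2
    gcongr
  have hu : IsUnit (1 - V ^ k) :=
    isUnit_one_sub_of_norm_lt_one (R := C(Icc (0:ℝ) T, E) →L[ℝ] C(Icc (0:ℝ) T, E)) hn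
  have hc : Commute (1 - V) (∑ i ∈ Finset.range k, V ^ i) :=
    Commute.sum_right _ _ _ fun i _ => ((Commute.one_left _).sub_left (Commute.pow_right rfl i))
  rw [← mul_neg_geom_sum] at hu
  exact (hc.isUnit_mul_iff.1 hu).1

end Integral
end
end Malkin


namespace Malkin
noncomputable section

section Q
variable {V W : Type*} [NormedAddCommGroup V] [NormedSpace ℝ V] [ProperSpace V]
  [NormedAddCommGroup W] [NormedSpace ℝ W] [CompleteSpace W]

lemma param_hasFDerivAt (k : ℝ × V → W) (hk : ContDiff ℝ 1 k) (a b : ℝ) (v : V) :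
    HasFDerivAt (fun v => ∫ s in a..b, k (s, v))
      (∫ s in a..b, (fderiv ℝ k (s, v)).comp (ContinuousLinearMap.inr ℝ ℝ V)) v := by
  have hk' : Continuous fun p : ℝ × V => (fderiv ℝ k p).comp (ContinuousLinearMap.inr ℝ ℝ V) :=
    (hk.continuous_fderiv (by norm_num)).clm_comp continuous_const
  obtain ⟨C, hC⟩ := ((isCompact_uIcc (a := a) (b := b)).prod
    (isCompact_closedBall v 1)).exists_bound_of_continuousOn hk'.continuousOn
  refine (intervalIntegral.hasFDerivAt_integral_of_dominated_of_fderiv_le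
    (F := fun v s => k (s, v)) (s := Metric.closedBall v 1)
    (F' := fun v s => (fderiv ℝ k (s, v)).comp (ContinuousLinearMap.inr ℝ ℝ V))
    (bound := fun _ => C) (Metric.closedBall_mem_nhds _ one_pos) ?_ ?_ ?_ ?_ ?_ ?_)
  · refine Eventually.of_forall fun x => Continuous.aestronglyMeasurable ?_
    exact hk.continuous.comp (by fun_prop)
  · exact Continuous.intervalIntegrable (hk.continuous.comp (by fun_prop)) _ _
  · haveI : SecondCountableTopologyEither ℝ (V →L[ℝ] W) := secondCountableTopologyEither_of_left _ _
    refine Continuous.aestronglyMeasurable ?_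
    exact hk'.comp (continuous_id.prodMk continuous_const)
  · refine Eventually.of_forall fun s hs x hx => ?_
    exact hC (s, x) ⟨uIoc_subset_uIcc hs, hx⟩
  · simp
  · refine Eventually.of_forall fun s hs x hx => ?_
    have h1 := (hk.differentiable (by norm_num) (s, x)).hasFDerivAt
    exact h1.comp x (hasFDerivAt_prodMk_right s x)

lemma param_contDiff (k : ℝ × V → W) (hk : ContDiff ℝ 1 k) (a b : ℝ) :
    ContDiff ℝ 1 (fun v => ∫ s in a..b, k (s, v)) := by
  rw [contDiff_one_iff_hasFDerivAt]
  refine ⟨_, ?_, param_hasFDerivAt k hk a b⟩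
  have hk' : Continuous fun p : ℝ × V => (fderiv ℝ k p).comp (ContinuousLinearMap.inr ℝ ℝ V) :=
    (hk.continuous_fderiv (by norm_num)).clm_comp continuous_const
  refine intervalIntegral.continuous_parametric_intervalIntegral_of_continuous'
    (f := fun v s => (fderiv ℝ k (s, v)).comp (ContinuousLinearMap.inr ℝ ℝ V)) ?_ a b
  exact hk'.comp (continuous_snd.prodMk continuous_fst)

/-- averaged derivative -/
def Q (f : V → W) (p : V × V) : V →L[ℝ] W := ∫ s in (0:ℝ)..1, fderiv ℝ f (p.1 + s • p.2)

lemma Q_contDiff (f : V → W) (hf : ContDiff ℝ 2 f) : ContDiff ℝ 1 (Q f) := by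
  refine param_contDiff (fun q : ℝ × (V × V) => fderiv ℝ f (q.2.1 + q.1 • q.2.2)) ?_ 0 1
  have h1 : ContDiff ℝ 1 (fderiv ℝ f) := hf.fderiv_right (by norm_num)
  exact h1.comp (by fun_prop)

lemma Q_zero (f : V → W) (a : V) : Q f (a, 0) = fderiv ℝ f a := by simp [Q]

lemma Q_spec (f : V → W) (hf : ContDiff ℝ 2 f) (a w : V) : f (a + w) - f a = Q f (a, w) w := by
  have h1 : Continuous (fderiv ℝ f) := hf.continuous_fderiv (by norm_num)
  have hc : Continuous fun s : ℝ => fderiv ℝ f (a + s • w) := h1.comp (by fun_prop)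
  rw [Q, ContinuousLinearMap.intervalIntegral_apply (hc.intervalIntegrable _ _)]
  have := intervalIntegral.integral_eq_sub_of_hasDerivAt (f := fun s : ℝ => f (a + s • w))
    (f' := fun s => fderiv ℝ f (a + s • w) w) (a := 0) (b := 1) (fun s _ => by
      have h2 := (hf.differentiable (by norm_num) (a + s • w)).hasFDerivAt
      have h3 : HasDerivAt (fun s : ℝ => a + s • w) w s := by
        simpa using ((hasDerivAt_id s).smul_const w).const_add a
      exact h2.comp_hasDerivAt s h3)
    ((hc.clm_apply continuous_const).intervalIntegrable _ _)
  rw [this]; simp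

end Q

section ODE
variable {E : Type*} [NormedAddCommGroup E] [NormedSpace ℝ E] [ProperSpace E]

lemma ode_unique {T : ℝ} (F : ℝ × E → E) (hF : ContDiff ℝ 1 F) (u v : ℝ → E)
    (hu : ∀ t ∈ Icc (0:ℝ) T, HasDerivAt u (F (t, u t)) t)
    (hv : ∀ t ∈ Icc (0:ℝ) T, HasDerivAt v (F (t, v t)) t) (h0 : u 0 = v 0) :
    EqOn u v (Icc 0 T) := by
  have hcu : ContinuousOn u (Icc 0 T) := fun t ht => (hu t ht).continuousAt.continuousWithinAt
  have hcv : ContinuousOn v (Icc 0 T) := fun t ht => (hv t ht).continuousAt.continuousWithinAt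
  obtain ⟨R1, hR1⟩ := isCompact_Icc.exists_bound_of_continuousOn hcu
  obtain ⟨R2, hR2⟩ := isCompact_Icc.exists_bound_of_continuousOn hcv
  set R := max R1 R2
  have hk' : Continuous fun p : ℝ × E => (fderiv ℝ F p).comp (ContinuousLinearMap.inr ℝ ℝ E) :=
    (hF.continuous_fderiv (by norm_num)).clm_comp continuous_const
  obtain ⟨C, hC⟩ := ((isCompact_Icc (a := 0) (b := T)).prod
    (isCompact_closedBall (0:E) R)).exists_bound_of_continuousOn hk'.continuousOn
  refine ODE_solution_unique_of_mem_Icc_right (v := fun t x => F (t, x))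
    (s := fun _ => Metric.closedBall 0 R) (K := C.toNNReal) ?_ hcu
    (fun t ht => (hu t ⟨ht.1, ht.2.le⟩).hasDerivWithinAt) ?_ hcv
    (fun t ht => (hv t ⟨ht.1, ht.2.le⟩).hasDerivWithinAt) ?_ h0
  · intro t ht
    refine (convex_closedBall (0:E) R).lipschitzOnWith_of_nnnorm_hasFDerivWithin_le
      (f' := fun x => (fderiv ℝ F (t, x)).comp (ContinuousLinearMap.inr ℝ ℝ E)) ?_ ?_
    · intro x hx
      have h1 := (hF.differentiable (by norm_num) (t, x)).hasFDerivAt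
      exact (h1.comp x (hasFDerivAt_prodMk_right t x)).hasFDerivWithinAt
    · intro x hx
      have := hC (t, x) ⟨⟨ht.1, ht.2.le⟩, hx⟩
      rw [← NNReal.coe_le_coe, coe_nnnorm]
      exact this.trans (Real.le_coe_toNNReal C)
  · intro t ht
    exact mem_closedBall_zero_iff.2 ((hR1 t ⟨ht.1, ht.2.le⟩).trans (le_max_left _ _))
  · intro t ht
    exact mem_closedBall_zero_iff.2 ((hR2 t ⟨ht.1, ht.2.le⟩).trans (le_max_right _ _))
end ODE

section pairing
variable {E : Type*} [NormedAddCommGroup E] [InnerProductSpace ℝ E] [CompleteSpace E]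

lemma pairing {T : ℝ} (hT : 0 < T) (A : ℝ → E →L[ℝ] E) (Y Z ρ : ℝ → E) (hρ : Continuous ρ)
    (hY : ∀ t ∈ Icc (0:ℝ) T, HasDerivAt Y (A t (Y t) + ρ t) t)
    (hZ : ∀ t, HasDerivAt Z (-(ContinuousLinearMap.adjoint (A t) (Z t))) t) :
    ∫ t in (0:ℝ)..T, ⟪ρ t, Z t⟫_ℝ = ⟪Y T, Z T⟫_ℝ - ⟪Y 0, Z 0⟫_ℝ := by
  have hZc : Continuous Z := continuous_iff_continuousAt.2 fun t => (hZ t).continuousAt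
  refine intervalIntegral.integral_eq_sub_of_hasDerivAt (f := fun t => ⟪Y t, Z t⟫_ℝ) ?_
    ((hρ.inner hZc).intervalIntegrable _ _)
  intro t ht
  rw [uIcc_of_le hT.le] at ht
  refine ((hY t ht).inner ℝ (hZ t)).congr_deriv ?_
  rw [inner_neg_right, ContinuousLinearMap.adjoint_inner_right, inner_add_left]
  ring
end pairing

section kernel
lemma kernel_one_dim {n : ℕ}
    (P : EuclideanSpace ℝ (Fin n) →L[ℝ] EuclideanSpace ℝ (Fin n))
    (heig : Multiset.card
      (((Matrix.charpoly (fun i j : Fin n =>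
          ⟪P (EuclideanSpace.single j 1),
            EuclideanSpace.single i 1⟫_ℝ - if i = j then (1:ℝ) else 0)).map
        (algebraMap ℝ ℂ)).roots.filter fun μ : ℂ => μ.re < 0) = n - 1)
    (y w : EuclideanSpace ℝ (Fin n)) (hy : P y = y) (hw : P w = w) (hw0 : w ≠ 0) :
    ∃ c : ℝ, y = c • w := by
  have hn : 0 < n := by
    rcases Nat.eq_zero_or_pos n with h | h
    · subst h; exact absurd (Subsingleton.elim _ _) hw0
    · exact h
  set φ : Module.End ℝ (EuclideanSpace ℝ (Fin n)) := (P : EuclideanSpace ℝ (Fin n) →ₗ[ℝ] EuclideanSpace ℝ (Fin n)) - 1 with hφ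
  set b := (EuclideanSpace.basisFun (Fin n) ℝ).toBasis
  have hmat : LinearMap.toMatrix b b φ = (fun i j : Fin n =>
          ⟪P (EuclideanSpace.single j 1),
            EuclideanSpace.single i 1⟫_ℝ - if i = j then (1:ℝ) else 0) := by
    ext i j
    rw [LinearMap.toMatrix_apply]
    simp [b, hφ, EuclideanSpace.inner_single_right, PiLp.single_apply]
  rw [← hmat, LinearMap.charpoly_toMatrix] at heig
  set p := φ.charpoly with hp
  have hdeg : p.natDegree = n := by
    rw [hp, LinearMap.charpoly_natDegree]; simp
  have hmon : p.Monic := LinearMap.charpoly_monic φ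
  set q := p.map (algebraMap ℝ ℂ)
  have hq : Multiset.card q.roots ≤ n := by
    have := q.card_roots'
    rwa [Polynomial.natDegree_map, hdeg] at this
  have hfil : Multiset.count 0 q.roots + (n - 1) ≤ n := by
    rw [← heig]
    refine le_trans ?_ hq
    rw [← Multiset.filter_add_not (fun μ : ℂ => μ.re < 0) q.roots, Multiset.card_add, add_comm,
      Multiset.count_add]
    have h1 : Multiset.count 0 (Multiset.filter (fun μ : ℂ => μ.re < 0) q.roots) = 0 := by
      rw [Multiset.count_eq_zero]; simp
    rw [h1, zero_add, Multiset.filter_add_not]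
    gcongr
    exact Multiset.count_le_card _ _
  have hmul : p.rootMultiplicity 0 ≤ 1 := by
    rw [Polynomial.count_roots] at hfil
    have : p.rootMultiplicity 0 = q.rootMultiplicity 0 := by
      have := Polynomial.eq_rootMultiplicity_map (p := p) (f := algebraMap ℝ ℂ)
        (algebraMap ℝ ℂ).injective 0
      simpa using this
    omega
  have hfin := (LinearMap.finrank_eigenspace_le φ 0).trans hmul
  have hmem : ∀ x, P x = x → x ∈ φ.eigenspace 0 := by
    intro x hx
    rw [Module.End.mem_eigenspace_iff]; simp [hφ, hx]
  obtain ⟨v, hv⟩ := finrank_le_one_iff.1 hfin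
  obtain ⟨cy, hcy⟩ := hv ⟨y, hmem y hy⟩
  obtain ⟨cw, hcw⟩ := hv ⟨w, hmem w hw⟩
  have hcy' : cy • (v : EuclideanSpace ℝ (Fin n)) = y := congrArg Subtype.val hcy
  have hcw' : cw • (v : EuclideanSpace ℝ (Fin n)) = w := congrArg Subtype.val hcw
  have hne : cw ≠ 0 := by rintro rfl; simp at hcw'; exact hw0 hcw'.symm
  refine ⟨cy / cw, ?_⟩
  rw [← hcw', ← hcy', smul_smul, div_mul_cancel₀ _ hne]
end kernel

section abs
variable {C E : Type*} [NormedAddCommGroup C] [NormedSpace ℝ C]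
  [NormedAddCommGroup E] [NormedSpace ℝ E] [FiniteDimensional ℝ E]

lemma abs_surj (V : C →L[ℝ] C) (hV : IsUnit (1 - V)) (cst : E →L[ℝ] C) (ev : C →L[ℝ] E)
    (ℓ : C →L[ℝ] ℝ) (b : C)
    (hinj : ∀ (τ : ℝ) (y : C), y - cst (ev y) - V y = τ • b → ℓ y = 0 → τ = 0 ∧ y = 0)
    (h : C) (a : ℝ) : ∃ (τ : ℝ) (y : C), y - cst (ev y) - V y - τ • b = h ∧ ℓ y = a := by
  obtain ⟨U, hU⟩ := hV
  set R : C →L[ℝ] C := ↑U⁻¹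
  have hR : ∀ x, R x - V (R x) = x := by
    intro x
    have : (1 - V) * R = 1 := by rw [← hU]; exact U.mul_inv
    exact congrArg (fun L : C →L[ℝ] C => L x) this
  let Γ : E × ℝ →ₗ[ℝ] E × ℝ :=
    { toFun := fun p => (p.1 - ev (R (cst p.1 + p.2 • b)), ℓ (R (cst p.1 + p.2 • b)))
      map_add' := by intro x y; ext <;> simp [add_smul] <;> abel
      map_smul' := by intro c y; ext <;> simp [mul_smul, smul_sub, mul_add] }
  have hΓ : Function.Injective Γ := by
    rw [injective_iff_map_eq_zero]
    rintro ⟨c, τ⟩ hz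
    have h1 : c - ev (R (cst c + τ • b)) = 0 := congrArg Prod.fst hz
    have h2 : ℓ (R (cst c + τ • b)) = 0 := congrArg Prod.snd hz
    have h3 := hR (cst c + τ • b)
    set y := R (cst c + τ • b)
    have h4 := hinj τ y (by rw [← sub_eq_zero.1 h1, sub_right_comm, h3]; abel) h2
    rw [h4.2, map_zero, sub_zero] at h1
    simp [h1, h4.1]
  obtain ⟨⟨c, τ⟩, hcτ⟩ := (LinearMap.injective_iff_surjective.1 hΓ) (ev (R h), a - ℓ (R h))
  have h1 : c - ev (R (cst c + τ • b)) = ev (R h) := congrArg Prod.fst hcτ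
  have h2 : ℓ (R (cst c + τ • b)) = a - ℓ (R h) := congrArg Prod.snd hcτ
  have h3 := hR (cst c + τ • b + h)
  refine ⟨τ, R (cst c + τ • b + h), ?_, ?_⟩
  · have : ev (R (cst c + τ • b + h)) = c := by
      rw [map_add, map_add, ← h1]; abel
    rw [this, sub_right_comm _ (cst c), h3]; abel
  · rw [map_add, map_add, h2]; ring
end abs
end
end Malkin


namespace Malkin
noncomputable section

section mono
variable {E : Type*} [NormedAddCommGroup E] [NormedSpace ℝ E]

def cst (K : Type*) [TopologicalSpace K] [CompactSpace K] : E →L[ℝ] C(K, E) :=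
  LinearMap.mkContinuous
    { toFun := fun c => ContinuousMap.const K c
      map_add' := by intro x y; ext s; simp
      map_smul' := by intro c y; ext s; simp } 1 (by
      intro y
      refine (ContinuousMap.norm_le _ (by positivity)).2 fun s => ?_
      simp)

@[simp] lemma cst_apply (K : Type*) [TopologicalSpace K] [CompactSpace K] (c : E) (s : K) :
    cst K c s = c := rfl

def ev {K : Type*} [TopologicalSpace K] [CompactSpace K] (s : K) : C(K, E) →L[ℝ] E :=
  LinearMap.mkContinuous
    { toFun := fun y => y s
      map_add' := by intro x y; simp
      map_smul' := by intro c y; simp } 1 (by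
      intro y
      simpa using y.norm_coe_le_norm s)

@[simp] lemma ev_apply {K : Type*} [TopologicalSpace K] [CompactSpace K] (y : C(K, E)) (s : K) :
    ev s y = y s := rfl

/-- restriction of a continuous function to `[0,T]` -/
def res (T : ℝ) (a : ℝ → E) (ha : Continuous a) : C(Icc (0:ℝ) T, E) :=
  ⟨fun s => a s, ha.comp continuous_subtype_val⟩

@[simp] lemma res_apply (T : ℝ) (a : ℝ → E) (ha : Continuous a) (s : Icc (0:ℝ) T) :
  res T a ha s = a s := rfl

variable {T : ℝ} (hT : 0 < T) [FiniteDimensional ℝ E]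

lemma integral_solution [CompleteSpace E] (u h : C(Icc (0:ℝ) T, E)) (c : E)
    (hu : u = cst _ c + J hT h) :
    ∃ U : ℝ → E, U 0 = c ∧ (∀ t : Icc (0:ℝ) T, U t = u t) ∧
      ∀ t : Icc (0:ℝ) T, HasDerivAt U (h t) t := by
  refine ⟨fun t => c + ∫ s in (0:ℝ)..t, ext hT h s, by simp, fun t => ?_, fun t => ?_⟩
  · rw [hu]; rfl
  · have := J_deriv hT h c t
    rwa [ext_coe] at this

lemma eq_flow [CompleteSpace E] (F : ℝ × E → E) (hF : ContDiff ℝ 1 F)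
    (u h : C(Icc (0:ℝ) T, E)) (c : E)
    (hh : ∀ t, h t = F (t, u t)) (hu : u = cst _ c + J hT h)
    (x : ℝ → E) (hx0 : x 0 = c) (hx : ∀ t, HasDerivAt x (F (t, x t)) t) (t : Icc (0:ℝ) T) :
    x t = u t := by
  have := FiniteDimensional.proper ℝ E
  obtain ⟨U, hU0, hUu, hU⟩ := integral_solution hT u h c hu
  rw [← hUu]
  refine ode_unique (T := T) F hF x U (fun t _ => hx t) (fun t ht => ?_) (by rw [hx0, hU0]) t.2
  have h1 := hU ⟨t, ht⟩
  rw [hh, ← hUu] at h1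
  exact h1

lemma monodromy [CompleteSpace E] (f : E → E) (hf : ContDiff ℝ 1 f) (X : ℝ → E → E)
    (hX0 : ∀ v, X 0 v = v)
    (hX : ∀ v t, HasDerivAt (fun s => X s v) (f (X t v)) t)
    (a : ℝ → E) (ha : ∀ t, HasDerivAt a (f (a t)) t) (hac : Continuous a)
    (hA : Continuous fun t => fderiv ℝ f (a t))
    (y : C(Icc (0:ℝ) T, E))
    (hy : y = cst _ (y (i0 hT)) + J hT (mulOp (res T _ hA) y)) :
    fderiv ℝ (X T) (a 0) (y (i0 hT)) = y (iT hT) := by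
  set A : C(Icc (0:ℝ) T, E →L[ℝ] E) := res T _ hA
  have hfc : Continuous fun p : Icc (0:ℝ) T × E => f p.2 := hf.continuous.comp continuous_snd
  have hfc' : Continuous fun p : Icc (0:ℝ) T × E => fderiv ℝ f p.2 :=
    (hf.continuous_fderiv (by norm_num)).comp continuous_snd
  let S : C(Icc (0:ℝ) T, E) → C(Icc (0:ℝ) T, E) := sup (fun _ => f) hfc
  set a' : C(Icc (0:ℝ) T, E) := res T a hac
  have hS : HasStrictFDerivAt S (mulOp A) a' := by
    have := sup_strict (K := Icc (0:ℝ) T) (fun _ => f) hfc (fun _ => fderiv ℝ f) hfc'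
      (fun s v => (hf.differentiable (by norm_num) v).hasFDerivAt) a'
    exact this
  let G : E × C(Icc (0:ℝ) T, E) → E × C(Icc (0:ℝ) T, E) := fun p => (p.1, p.2 - cst (Icc (0:ℝ) T) p.1 - J hT (S p.2))
  let G' : E × C(Icc (0:ℝ) T, E) →L[ℝ] E × C(Icc (0:ℝ) T, E) :=
    (ContinuousLinearMap.fst ℝ _ _).prod ((ContinuousLinearMap.snd ℝ _ _)
      - (cst (Icc (0:ℝ) T)) ∘L (ContinuousLinearMap.fst ℝ _ _)
      - (J hT) ∘L (mulOp A) ∘L (ContinuousLinearMap.snd ℝ _ _))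
  have hG'a : ∀ p, G' p = (p.1, p.2 - cst (Icc (0:ℝ) T) p.1 - J hT (mulOp A p.2)) := fun p => rfl
  have hG : HasStrictFDerivAt G G' (a 0, a') := by
    refine HasStrictFDerivAt.prodMk hasStrictFDerivAt_fst ?_
    have h1 : HasStrictFDerivAt (fun p : E × C(Icc (0:ℝ) T, E) => cst (Icc (0:ℝ) T) p.1)
        ((cst (Icc (0:ℝ) T)) ∘L (ContinuousLinearMap.fst ℝ _ _)) (a 0, a') :=
      ((cst (Icc (0:ℝ) T)) ∘L (ContinuousLinearMap.fst ℝ E C(Icc (0:ℝ) T, E))).hasStrictFDerivAt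
    refine (hasStrictFDerivAt_snd.sub h1).sub ?_
    have h2 : HasStrictFDerivAt (Prod.snd : E × C(Icc (0:ℝ) T, E) → C(Icc (0:ℝ) T, E))
      (ContinuousLinearMap.snd ℝ _ _) (a 0, a') := hasStrictFDerivAt_snd
    have h3 : HasStrictFDerivAt (fun p : E × C(Icc (0:ℝ) T, E) => S p.2)
      ((mulOp A) ∘L (ContinuousLinearMap.snd ℝ _ _)) (a 0, a') :=
      HasStrictFDerivAt.comp (g := S) (a 0, a') hS h2
    have h4 := (J (E := E) hT).hasStrictFDerivAt (x := S a')
    exact HasStrictFDerivAt.comp (g := J hT) (a 0, a') h4 h3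
  obtain ⟨U, hU⟩ := volterra hT A
  have hU1 : ∀ x, U.1 x = x - J hT (mulOp A x) := by intro x; rw [hU]; rfl
  have hU2 : ∀ x, U.1 ((U⁻¹).1 x) = x := fun x =>
    congrArg (fun L : C(Icc (0:ℝ) T, E) →L[ℝ] C(Icc (0:ℝ) T, E) => L x) U.mul_inv
  have hU3 : ∀ x, (U⁻¹).1 (U.1 x) = x := fun x =>
    congrArg (fun L : C(Icc (0:ℝ) T, E) →L[ℝ] C(Icc (0:ℝ) T, E) => L x) U.inv_mul
  have hinj : G'.ker = ⊥ := by
    rw [LinearMap.ker_eq_bot']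
    rintro ⟨v, w⟩ h
    have h' : G' (v, w) = 0 := h
    rw [hG'a] at h'
    have h1 : v = 0 := congrArg Prod.fst h'
    have h2 : w - cst (Icc (0:ℝ) T) v - J hT (mulOp A w) = 0 := congrArg Prod.snd h'
    rw [h1, map_zero, sub_zero, ← hU1] at h2
    have h3 := hU3 w
    rw [h2, map_zero] at h3
    rw [h1, ← h3]; rfl
  have hsurj : G'.range = ⊤ := by
    rw [LinearMap.range_eq_top]
    rintro ⟨v, w⟩
    refine ⟨(v, (U⁻¹).1 (w + cst (Icc (0:ℝ) T) v)), ?_⟩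
    change G' _ = _
    rw [hG'a]
    have h := hU2 (w + cst (Icc (0:ℝ) T) v)
    rw [hU1] at h
    refine Prod.ext rfl ?_
    change (U⁻¹).1 (w + cst (Icc (0:ℝ) T) v) - cst (Icc (0:ℝ) T) v - J hT (mulOp A ((U⁻¹).1 (w + cst (Icc (0:ℝ) T) v))) = w
    rw [sub_right_comm, h]; abel
  let e : (E × C(Icc (0:ℝ) T, E)) ≃L[ℝ] (E × C(Icc (0:ℝ) T, E)) := ContinuousLinearEquiv.ofBijective G' hinj hsurj
  have he : (e : (E × C(Icc (0:ℝ) T, E)) →L[ℝ] (E × C(Icc (0:ℝ) T, E))) = G' :=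
    ContinuousLinearEquiv.coe_ofBijective G' hinj hsurj
  rw [← he] at hG
  have hGa : G (a 0, a') = (a 0, 0) := by
    refine Prod.ext rfl ?_
    ext t
    have := J_of_deriv hT a (S a') (fun t => ha t) t
    change a t - a 0 - J hT (S a') t = 0
    rw [this]; abel
  have hinv := hG.to_localInverse
  have hright := hG.eventually_right_inverse
  rw [hGa] at hinv hright
  set g := hG.localInverse
  have hι : ContinuousAt (fun v : E => (v, (0 : C(Icc (0:ℝ) T, E)))) (a 0) := by fun_prop
  have hev : ∀ᶠ v in 𝓝 (a 0), X T v = ev (iT hT) (g (v, 0)).2 := by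
    filter_upwards [hι.eventually hright] with v hv
    have h1 : (g (v, 0)).1 = v := congrArg Prod.fst hv
    have h2 : (g (v, 0)).2 - cst (Icc (0:ℝ) T) (g (v, 0)).1 - J hT (S (g (v, 0)).2) = 0 :=
      congrArg Prod.snd hv
    rw [h1] at h2
    refine eq_flow hT (fun p : ℝ × E => f p.2) (hf.comp contDiff_snd) (g (v, 0)).2
      (S (g (v, 0)).2) v (fun t => rfl) ?_ (fun s => X s v) (hX0 v) (hX v) (iT hT)
    rw [sub_sub, sub_eq_zero] at h2
    exact h2
  have hder : HasFDerivAt (fun v => ev (iT hT) (g (v, 0)).2)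
      ((ev (iT hT)) ∘L (ContinuousLinearMap.snd ℝ _ _) ∘L
        (e.symm : (E × C(Icc (0:ℝ) T, E)) →L[ℝ] (E × C(Icc (0:ℝ) T, E))) ∘L ContinuousLinearMap.inl ℝ _ _) (a 0) := by
    have h1 : HasFDerivAt (fun v : E => (v, (0 : C(Icc (0:ℝ) T, E)))) (ContinuousLinearMap.inl ℝ _ _) (a 0) :=
      hasFDerivAt_prodMk_left _ _
    have h2 := hinv.hasFDerivAt.comp (a 0) h1
    exact (ev (iT hT)).hasFDerivAt.comp _ (hasFDerivAt_snd.comp (a 0) h2)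
  rw [(hder.congr_of_eventuallyEq hev).fderiv]
  have hye : e (y (i0 hT), y) = (y (i0 hT), 0) := by
    change G' _ = _
    rw [hG'a]
    refine Prod.ext rfl ?_
    change y - cst (Icc (0:ℝ) T) (y (i0 hT)) - J hT (mulOp A y) = 0
    rw [sub_sub, sub_eq_zero]; exact hy
  have : e.symm (y (i0 hT), 0) = (y (i0 hT), y) := by rw [← hye]; simp
  simp [this]
end mono
end
end Malkin


namespace Malkin
noncomputable section

section lin
variable {E : Type*} [NormedAddCommGroup E] [InnerProductSpace ℝ E] [CompleteSpace E]
variable {T : ℝ} (hT : 0 < T)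

lemma pair_period [FiniteDimensional ℝ E] (A : ℝ → E →L[ℝ] E) (hA : Continuous A) (z : ℝ → E)
    (hz : ∀ t, HasDerivAt z (-(ContinuousLinearMap.adjoint (A t) (z t))) t) (hzT : z T = z 0)
    (y h : C(Icc (0:ℝ) T, E))
    (hy : y - cst _ (y (iT hT)) - J hT (mulOp (res T A hA) y) = J hT h) :
    ∫ t in (0:ℝ)..T, ⟪ext hT h t, z t⟫_ℝ = 0 := by
  have hy' : y = cst _ (y (iT hT)) + J hT (mulOp (res T A hA) y + h) := by
    rw [map_add, ← hy]; abel
  obtain ⟨U, hU0, hUu, hU⟩ := integral_solution hT y _ _ hy'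
  have h1 := pairing hT A U z (ext hT h) (ext hT h).continuous (fun t ht => by
    have := hU ⟨t, ht⟩
    rw [ext_of_mem hT h ht]
    refine this.congr_deriv ?_
    have h2 := hUu ⟨t, ht⟩
    change A t (y ⟨t, ht⟩) + h ⟨t, ht⟩ = _
    rw [← h2]) hz
  rw [h1, hzT, hU0]
  have := hUu (iT hT)
  change U T = _ at this
  rw [this, sub_self]

lemma volterra_inj (A : C(Icc (0:ℝ) T, E →L[ℝ] E)) (y : C(Icc (0:ℝ) T, E))
    (hy : y - J hT (mulOp A y) = 0) : y = 0 := by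
  obtain ⟨U, hU⟩ := volterra hT A
  have hU3 : (U⁻¹).1 (U.1 y) = y :=
    congrArg (fun L : C(Icc (0:ℝ) T, E) →L[ℝ] C(Icc (0:ℝ) T, E) => L y) U.inv_mul
  have hU1 : U.1 y = y - J hT (mulOp A y) := by rw [hU]; rfl
  rw [hU1, hy, map_zero] at hU3
  exact hU3.symm
end lin

lemma kernel_zero {n : ℕ} {T : ℝ} (hT : 0 < T)
    (f : EuclideanSpace ℝ (Fin n) → EuclideanSpace ℝ (Fin n)) (hf : ContDiff ℝ 1 f)
    (X : ℝ → EuclideanSpace ℝ (Fin n) → EuclideanSpace ℝ (Fin n))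
    (hX0 : ∀ v, X 0 v = v)
    (hX : ∀ v t, HasDerivAt (fun s => X s v) (f (X t v)) t)
    (a : ℝ → EuclideanSpace ℝ (Fin n)) (ha : ∀ t, HasDerivAt a (f (a t)) t) (haT : a T = a 0)
    (hA : Continuous fun t => fderiv ℝ f (a t))
    (heig : Multiset.card
      (((Matrix.charpoly (fun i j : Fin n =>
          ⟪fderiv ℝ (X T) (a 0) (EuclideanSpace.single j 1),
            EuclideanSpace.single i 1⟫_ℝ - if i = j then (1:ℝ) else 0)).map
        (algebraMap ℝ ℂ)).roots.filter fun μ : ℂ => μ.re < 0) = n - 1)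
    (z : EuclideanSpace ℝ (Fin n)) (hz : ⟪f (a 0), z⟫_ℝ = 1)
    (y : C(Icc (0:ℝ) T, EuclideanSpace ℝ (Fin n)))
    (hy : y - cst _ (y (iT hT)) - J hT (mulOp (res T _ hA) y) = 0)
    (hy0 : ⟪y (i0 hT), z⟫_ℝ = 0) : y = 0 := by
  have hac : Continuous a := continuous_iff_continuousAt.2 fun t => (ha t).continuousAt
  have hper : y (i0 hT) = y (iT hT) := by
    have := congrArg (fun w => w (i0 hT)) hy
    simpa [sub_eq_zero] using this
  have hy' : y = cst _ (y (i0 hT)) + J hT (mulOp (res T _ hA) y) := by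
    rw [hper]; rw [sub_sub, sub_eq_zero] at hy; exact hy
  have h1 := monodromy hT f hf X hX0 hX a ha hac hA y hy'
  rw [← hper] at h1
  have hfa : Continuous fun t => f (a t) := hf.continuous.comp hac
  have h2 := monodromy hT f hf X hX0 hX a ha hac hA (res T _ hfa) (by
    ext1 t
    refine J_of_deriv hT (fun t => f (a t)) (mulOp (res T _ hA) (res T _ hfa)) (fun t => ?_) t
    have h3 := (hf.differentiable (by norm_num) (a t)).hasFDerivAt
    exact h3.comp_hasDerivAt (t : ℝ) (ha t))
  have h2' : fderiv ℝ (X T) (a 0) (f (a 0)) = f (a 0) := by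
    refine h2.trans ?_
    change f (a T) = _
    rw [haT]
  have hne : f (a 0) ≠ 0 := by
    intro h; rw [h, inner_zero_left] at hz; exact zero_ne_one hz
  obtain ⟨c, hc⟩ := kernel_one_dim _ heig (y (i0 hT)) (f (a 0)) h1 h2' hne
  rw [hc, inner_smul_left, hz] at hy0
  have hc0 : c = 0 := by simpa using hy0
  rw [hc0, zero_smul] at hc
  rw [hc, map_zero, zero_add] at hy'
  exact volterra_inj hT _ y (sub_eq_zero.2 hy')

section core
variable {E : Type*} [NormedAddCommGroup E] [NormedSpace ℝ E] [CompleteSpace E]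
variable {T : ℝ} (hT : 0 < T)

/-- The linear embedding `(θ, y, ε) ↦ (s ↦ (θ, y s, ε))`. -/
def emb (T : ℝ) : (ℝ × C(Icc (0:ℝ) T, E) × ℝ) →L[ℝ] C(Icc (0:ℝ) T, ℝ × E × ℝ) :=
  LinearMap.mkContinuous
    { toFun := fun p => ⟨fun s => (p.1, p.2.1 s, p.2.2), by fun_prop⟩
      map_add' := by intro x y; ext s <;> simp
      map_smul' := by intro c y; ext s <;> simp } 1 (by
      intro p
      refine (ContinuousMap.norm_le _ (by positivity)).2 fun s => ?_
      rw [one_mul]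
      change ‖(p.1, p.2.1 s, p.2.2)‖ ≤ _
      rw [Prod.norm_mk, Prod.norm_mk]
      refine max_le (norm_fst_le p) (max_le ?_ ?_)
      · exact (p.2.1.norm_coe_le_norm s).trans ((norm_fst_le p.2).trans (norm_snd_le p))
      · exact (norm_snd_le p.2).trans (norm_snd_le p))

@[simp] lemma emb_apply (p : ℝ × C(Icc (0:ℝ) T, E) × ℝ) (s : Icc (0:ℝ) T) :
    emb T p s = (p.1, p.2.1 s, p.2.2) := rfl

/-- Nemytskii operator -/
def Nem (N : ℝ × (ℝ × E × ℝ) → E) (hN : Continuous N) (p : ℝ × C(Icc (0:ℝ) T, E) × ℝ) :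
    C(Icc (0:ℝ) T, E) :=
  ⟨fun s => N (s, (p.1, p.2.1 s, p.2.2)), by fun_prop⟩

@[simp] lemma Nem_apply (N : ℝ × (ℝ × E × ℝ) → E) (hN : Continuous N)
    (p : ℝ × C(Icc (0:ℝ) T, E) × ℝ) (s : Icc (0:ℝ) T) :
    Nem N hN p s = N (s, (p.1, p.2.1 s, p.2.2)) := rfl

def H (N : ℝ × (ℝ × E × ℝ) → E) (hN : Continuous N) (p : ℝ × C(Icc (0:ℝ) T, E) × ℝ) :
    C(Icc (0:ℝ) T, E) :=
  p.2.1 - cst _ (p.2.1 (iT hT)) - J hT (Nem N hN p)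

lemma Nem_strict (N : ℝ × (ℝ × E × ℝ) → E) (hN : ContDiff ℝ 1 N)
    (p : ℝ × C(Icc (0:ℝ) T, E) × ℝ) :
    ∃ N' : (ℝ × C(Icc (0:ℝ) T, E) × ℝ) →L[ℝ] C(Icc (0:ℝ) T, E),
      HasStrictFDerivAt (Nem N hN.continuous) N' p ∧
      ∀ q s, N' q s = fderiv ℝ N (s, (p.1, p.2.1 s, p.2.2)) (0, (q.1, q.2.1 s, q.2.2)) := by
  have hc : Continuous fun q : Icc (0:ℝ) T × (ℝ × E × ℝ) => N (q.1, q.2) :=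
    hN.continuous.comp (by fun_prop)
  have hc' : Continuous fun q : Icc (0:ℝ) T × (ℝ × E × ℝ) =>
      (fderiv ℝ N (q.1, q.2)).comp (ContinuousLinearMap.inr ℝ ℝ (ℝ × E × ℝ)) :=
    ((hN.continuous_fderiv (by norm_num)).comp (by fun_prop)).clm_comp continuous_const
  have h1 := sup_strict (K := Icc (0:ℝ) T) (fun s v => N (s, v)) hc
    (fun s v => (fderiv ℝ N (s, v)).comp (ContinuousLinearMap.inr ℝ ℝ (ℝ × E × ℝ))) hc'
    (fun s v => (hN.differentiable (by norm_num) ((s:ℝ), v)).hasFDerivAt.comp v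
      (hasFDerivAt_prodMk_right _ _)) (emb T p)
  have h2 := (emb (E := E) T).hasStrictFDerivAt (x := p)
  exact ⟨_, h1.comp p h2, fun q s => rfl⟩

lemma core [FiniteDimensional ℝ E] (N : ℝ × (ℝ × E × ℝ) → E) (hN : ContDiff ℝ 1 N)
    (θ₀ : ℝ) (y₀ : C(Icc (0:ℝ) T, E)) (A : C(Icc (0:ℝ) T, E →L[ℝ] E))
    (hA : ∀ (s : Icc (0:ℝ) T) v, fderiv ℝ N (s, (θ₀, y₀ s, 0)) (0, (0, v, 0)) = A s v)
    (ℓ : C(Icc (0:ℝ) T, E) →L[ℝ] ℝ) (β : C(Icc (0:ℝ) T, E))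
    (hβ : ∀ s : Icc (0:ℝ) T, β s = fderiv ℝ N (s, (θ₀, y₀ s, 0)) (0, (1, 0, 0)))
    (hinj : ∀ (τ : ℝ) (y : C(Icc (0:ℝ) T, E)),
      y - cst _ (y (iT hT)) - J hT (mulOp A y) = τ • J hT β → ℓ y = 0 → τ = 0 ∧ y = 0)
    (h0 : H hT N hN.continuous (θ₀, y₀, 0) = 0) (hℓ : ℓ y₀ = 0) :
    ∃ U ∈ 𝓝 (θ₀, y₀, (0:ℝ)), ∃ Φ : ℝ → ℝ × C(Icc (0:ℝ) T, E) × ℝ,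
      Tendsto Φ (𝓝 0) (𝓝 (θ₀, y₀, 0)) ∧
      (∀ᶠ ε in 𝓝 (0:ℝ), (Φ ε).2.2 = ε ∧ H hT N hN.continuous (Φ ε) = 0 ∧ ℓ (Φ ε).2.1 = 0) ∧
      ∀ p ∈ U, ∀ q ∈ U, p.2.2 = q.2.2 → H hT N hN.continuous p = 0 →
        H hT N hN.continuous q = 0 → ℓ p.2.1 = 0 → ℓ q.2.1 = 0 → p = q := by
  obtain ⟨N', hN', hN'a⟩ := Nem_strict N hN (θ₀, y₀, (0:ℝ))
  let π : (ℝ × C(Icc (0:ℝ) T, E) × ℝ) →L[ℝ] C(Icc (0:ℝ) T, E) :=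
    (ContinuousLinearMap.fst ℝ C(Icc (0:ℝ) T, E) ℝ) ∘L (ContinuousLinearMap.snd ℝ ℝ (C(Icc (0:ℝ) T, E) × ℝ))
  let πe : (ℝ × C(Icc (0:ℝ) T, E) × ℝ) →L[ℝ] ℝ :=
    (ContinuousLinearMap.snd ℝ C(Icc (0:ℝ) T, E) ℝ) ∘L (ContinuousLinearMap.snd ℝ ℝ (C(Icc (0:ℝ) T, E) × ℝ))
  let L0 : (ℝ × C(Icc (0:ℝ) T, E) × ℝ) →L[ℝ] C(Icc (0:ℝ) T, E) := π - (cst (Icc (0:ℝ) T)) ∘L (ev (iT hT)) ∘L π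
  let H' : (ℝ × C(Icc (0:ℝ) T, E) × ℝ) →L[ℝ] C(Icc (0:ℝ) T, E) := L0 - (J hT) ∘L N'
  have hH' : HasStrictFDerivAt (H hT N hN.continuous) H' (θ₀, y₀, (0:ℝ)) := by
    have h1 := L0.hasStrictFDerivAt (x := (θ₀, y₀, (0:ℝ)))
    have h2 := (J (E := E) hT).hasStrictFDerivAt (x := Nem N hN.continuous (θ₀, y₀, (0:ℝ)))
    exact h1.sub (h2.comp _ hN')
  let G : (ℝ × C(Icc (0:ℝ) T, E) × ℝ) → C(Icc (0:ℝ) T, E) × ℝ × ℝ := fun p => (H hT N hN.continuous p, (ℓ ∘L π) p, πe p)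
  let G' : (ℝ × C(Icc (0:ℝ) T, E) × ℝ) →L[ℝ] C(Icc (0:ℝ) T, E) × ℝ × ℝ := H'.prod ((ℓ ∘L π).prod πe)
  have hG : HasStrictFDerivAt G G' (θ₀, y₀, (0:ℝ)) :=
    hH'.prodMk ((ℓ ∘L π).hasStrictFDerivAt.prodMk πe.hasStrictFDerivAt)
  have hN'0 : ∀ τ y, N' (τ, y, 0) = τ • β + mulOp A y := by
    intro τ y
    ext1 s
    have e : ((0:ℝ), (τ, y s, (0:ℝ))) = τ • ((0:ℝ), ((1:ℝ), (0:E), (0:ℝ))) + (0, (0, y s, 0)) := by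
      simp
    rw [hN'a]
    simp only
    rw [e, map_add, map_smul, hA, ← hβ]; rfl
  have hH'0 : ∀ τ y, H' (τ, y, 0) =
      y - cst _ (y (iT hT)) - J hT (mulOp A y) - τ • J hT β := by
    intro τ y
    change y - cst _ (y (iT hT)) - J hT (N' (τ, y, 0)) = _
    rw [hN'0, map_add, map_smul]; abel
  have hker : G'.ker = ⊥ := by
    rw [LinearMap.ker_eq_bot']
    rintro ⟨τ, y, e⟩ h
    have h1 : H' (τ, y, e) = 0 := congrArg Prod.fst h
    have h2 : ℓ y = 0 := congrArg (fun q => q.2.1) h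
    have h3 : e = 0 := congrArg (fun q => q.2.2) h
    subst h3
    rw [hH'0, sub_eq_zero] at h1
    obtain ⟨rfl, rfl⟩ := hinj τ y h1 h2
    rfl
  have hran : G'.range = ⊤ := by
    rw [LinearMap.range_eq_top]
    rintro ⟨h, a, e⟩
    obtain ⟨τ, y, h1, h2⟩ := abs_surj ((J hT) ∘L mulOp A) (volterra hT A)
      (cst (Icc (0:ℝ) T)) (ev (iT hT)) ℓ (J hT β) hinj (h - H' (0, 0, e)) a
    refine ⟨(τ, y, e), ?_⟩
    have hsum : ((τ, y, e) : ℝ × C(Icc (0:ℝ) T, E) × ℝ) = (τ, y, 0) + (0, 0, e) := by simp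
    refine Prod.ext ?_ (Prod.ext h2 rfl)
    change H' (τ, y, e) = h
    rw [hsum, map_add, hH'0]
    have h1' : y - cst _ (y (iT hT)) - J hT (mulOp A y) - τ • J hT β = h - H' (0, 0, e) := h1
    rw [h1']; abel
  let e : (ℝ × C(Icc (0:ℝ) T, E) × ℝ) ≃L[ℝ] (C(Icc (0:ℝ) T, E) × ℝ × ℝ) := ContinuousLinearEquiv.ofBijective G' hker hran
  have he : (e : (ℝ × C(Icc (0:ℝ) T, E) × ℝ) →L[ℝ] (C(Icc (0:ℝ) T, E) × ℝ × ℝ)) = G' :=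
    ContinuousLinearEquiv.coe_ofBijective G' hker hran
  rw [← he] at hG
  have hG0 : G (θ₀, y₀, 0) = (0, 0, 0) := Prod.ext h0 (Prod.ext hℓ rfl)
  have hright := hG.eventually_right_inverse
  have htend := hG.localInverse_tendsto
  have hself := hG.localInverse_apply_image
  rw [hG0] at hright htend
  have hι : Tendsto (fun ε : ℝ => ((0 : C(Icc (0:ℝ) T, E)), (0:ℝ), ε)) (𝓝 0) (𝓝 (0, 0, 0)) :=
    Continuous.tendsto' (by fun_prop) _ _ rfl
  refine ⟨(hG.toOpenPartialHomeomorph G).source,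
    (hG.toOpenPartialHomeomorph G).open_source.mem_nhds hG.mem_toOpenPartialHomeomorph_source,
    fun ε => hG.localInverse G e _ (0, 0, ε), htend.comp hι, ?_, ?_⟩
  · filter_upwards [hι.eventually hright] with ε hε
    exact ⟨congrArg (fun q => q.2.2) hε, congrArg Prod.fst hε, congrArg (fun q => q.2.1) hε⟩
  · intro p hp q hq hpq h1 h2 h3 h4
    refine (hG.toOpenPartialHomeomorph G).injOn hp hq ?_
    rw [hG.toOpenPartialHomeomorph_coe]
    exact Prod.ext (h1.trans h2.symm) (Prod.ext (h3.trans h4.symm) hpq)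
end core
end
end Malkin


namespace Malkin
noncomputable section

section lower
variable {E : Type*} [NormedAddCommGroup E] [NormedSpace ℝ E] [CompleteSpace E]
  [FiniteDimensional ℝ E] {T : ℝ} (hT : 0 < T)

lemma lower (A : C(Icc (0:ℝ) T, E →L[ℝ] E))
    (ℓ : C(Icc (0:ℝ) T, E) →L[ℝ] ℝ) (b : C(Icc (0:ℝ) T, E))
    (hinj : ∀ (τ : ℝ) (y : C(Icc (0:ℝ) T, E)),
      y - cst _ (y (iT hT)) - J hT (mulOp A y) = τ • b → ℓ y = 0 → τ = 0 ∧ y = 0) :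
    ∃ c > 0, ∀ y : C(Icc (0:ℝ) T, E), ℓ y = 0 →
      ‖y‖ ≤ c * ‖y - cst _ (y (iT hT)) - J hT (mulOp A y)‖ := by
  let L : C(Icc (0:ℝ) T, E) →L[ℝ] C(Icc (0:ℝ) T, E) :=
    1 - (cst (Icc (0:ℝ) T)) ∘L (ev (iT hT)) - (J hT) ∘L (mulOp A)
  have hL : ∀ y, L y = y - cst _ (y (iT hT)) - J hT (mulOp A y) := fun y => rfl
  let G' : (ℝ × C(Icc (0:ℝ) T, E)) →L[ℝ] C(Icc (0:ℝ) T, E) × ℝ :=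
    (L ∘L (ContinuousLinearMap.snd ℝ ℝ C(Icc (0:ℝ) T, E)) -
      (ContinuousLinearMap.fst ℝ ℝ C(Icc (0:ℝ) T, E)).smulRight b).prod
      (ℓ ∘L (ContinuousLinearMap.snd ℝ ℝ C(Icc (0:ℝ) T, E)))
  have hG' : ∀ τ y, G' (τ, y) = (L y - τ • b, ℓ y) := fun τ y => rfl
  have hker : G'.ker = ⊥ := by
    rw [LinearMap.ker_eq_bot']
    rintro ⟨τ, y⟩ h
    have h1 : L y - τ • b = 0 := congrArg Prod.fst h
    have h2 : ℓ y = 0 := congrArg Prod.snd h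
    rw [hL, sub_eq_zero] at h1
    obtain ⟨rfl, rfl⟩ := hinj τ y h1 h2
    rfl
  have hran : G'.range = ⊤ := by
    rw [LinearMap.range_eq_top]
    rintro ⟨h, a⟩
    obtain ⟨τ, y, h1, h2⟩ := abs_surj ((J (E := E) hT) ∘L mulOp A) (volterra hT A)
      (cst (Icc (0:ℝ) T)) (ev (iT hT)) ℓ b hinj h a
    exact ⟨(τ, y), Prod.ext h1 h2⟩
  let e : (ℝ × C(Icc (0:ℝ) T, E)) ≃L[ℝ] (C(Icc (0:ℝ) T, E) × ℝ) :=
    ContinuousLinearEquiv.ofBijective G' hker hran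
  refine ⟨‖(e.symm : (C(Icc (0:ℝ) T, E) × ℝ) →L[ℝ] (ℝ × C(Icc (0:ℝ) T, E)))‖ + 1, by positivity, ?_⟩
  intro y hy
  have h1 : e ((0:ℝ), y) = (L y, 0) := by
    change G' _ = _
    rw [hG', hy]; simp
  have h2 : e.symm (L y, 0) = ((0:ℝ), y) := by rw [← h1]; simp
  have h3 := (e.symm : (C(Icc (0:ℝ) T, E) × ℝ) →L[ℝ] (ℝ × C(Icc (0:ℝ) T, E))).le_opNorm (L y, 0)
  rw [ContinuousLinearEquiv.coe_coe, h2] at h3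
  rw [← hL]
  have h4 : ‖y‖ ≤ ‖((0:ℝ), y)‖ := norm_snd_le ((0:ℝ), y)
  have h5 : ‖(L y, (0:ℝ))‖ = ‖L y‖ := by simp
  rw [h5] at h3
  nlinarith [norm_nonneg (L y)]
end lower

section NN
variable {E : Type*} [NormedAddCommGroup E] [NormedSpace ℝ E] [CompleteSpace E]
  [ProperSpace E]

def NN (f : E → E) (g : ℝ → E → ℝ → E) (x₀ : ℝ → E) (p : ℝ × (ℝ × E × ℝ)) : E :=
  Q f (x₀ (p.1 + p.2.1), p.2.2.2 • p.2.2.1) p.2.2.1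
    + g p.1 (x₀ (p.1 + p.2.1) + p.2.2.2 • p.2.2.1) p.2.2.2

variable (f : E → E) (g : ℝ → E → ℝ → E) (x₀ : ℝ → E)

lemma NN_contDiff (hf : ContDiff ℝ 2 f)
    (hg : ContDiff ℝ 1 fun p : ℝ × E × ℝ => g p.1 p.2.1 p.2.2) (hx : ContDiff ℝ 1 x₀) :
    ContDiff ℝ 1 (NN f g x₀) := by
  have h1 := Q_contDiff f hf
  have hx' : ContDiff ℝ 1 fun p : ℝ × (ℝ × E × ℝ) => x₀ (p.1 + p.2.1) :=
    hx.comp (by fun_prop)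
  have hs : ContDiff ℝ 1 fun p : ℝ × (ℝ × E × ℝ) => p.2.2.2 • p.2.2.1 := by fun_prop
  refine ContDiff.add (ContDiff.clm_apply (h1.comp (hx'.prodMk hs)) (by fun_prop)) ?_
  exact hg.comp (contDiff_fst.prodMk ((hx'.add hs).prodMk (by fun_prop)))

lemma NN_zero (s θ : ℝ) (y : E) :
    NN f g x₀ (s, (θ, y, 0)) = fderiv ℝ f (x₀ (s + θ)) y + g s (x₀ (s + θ)) 0 := by
  simp [NN, Q_zero]

lemma NN_smul (hf : ContDiff ℝ 2 f) (s θ : ℝ) (y : E) (ε : ℝ) :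
    ε • NN f g x₀ (s, (θ, y, ε)) = f (x₀ (s + θ) + ε • y) - f (x₀ (s + θ))
      + ε • g s (x₀ (s + θ) + ε • y) ε := by
  rw [Q_spec f hf, map_smul, ← smul_add]; rfl

lemma NN_fderiv_y (hN : ContDiff ℝ 1 (NN f g x₀)) (s θ : ℝ) (y v : E) :
    fderiv ℝ (NN f g x₀) (s, (θ, y, 0)) (0, (0, v, 0)) = fderiv ℝ f (x₀ (s + θ)) v := by
  have h1 := (hN.differentiable (by norm_num) (s, (θ, y, 0))).hasFDerivAt
  have h2 : HasFDerivAt (fun w : E => ((s, (θ, w, 0)) : ℝ × (ℝ × E × ℝ)))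
      ((ContinuousLinearMap.inr ℝ ℝ (ℝ × E × ℝ)) ∘L (ContinuousLinearMap.inr ℝ ℝ (E × ℝ)) ∘L
        ContinuousLinearMap.inl ℝ E ℝ) y :=
    (hasFDerivAt_prodMk_right s _).comp y ((hasFDerivAt_prodMk_right θ _).comp y
      (hasFDerivAt_prodMk_left y 0))
  have h3 := h1.comp y h2
  have h4 : HasFDerivAt (NN f g x₀ ∘ fun w : E => ((s, (θ, w, 0)) : ℝ × (ℝ × E × ℝ)))
      (fderiv ℝ f (x₀ (s + θ))) y := by
    have : (NN f g x₀ ∘ fun w : E => ((s, (θ, w, 0)) : ℝ × (ℝ × E × ℝ))) =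
      fun w => fderiv ℝ f (x₀ (s + θ)) w + g s (x₀ (s + θ)) 0 := by
      ext w; exact NN_zero f g x₀ s θ w
    rw [this]
    exact (fderiv ℝ f (x₀ (s + θ))).hasFDerivAt.add_const _
  have := h3.unique h4
  exact congrArg (fun L : E →L[ℝ] E => L v) this

variable {T : ℝ} (hT : 0 < T)

lemma corr (hf : ContDiff ℝ 2 f)
    (hg : ContDiff ℝ 1 fun p : ℝ × E × ℝ => g p.1 p.2.1 p.2.2)
    (hx₀ : ∀ t, HasDerivAt x₀ (f (x₀ t)) t) (hx₀T : ∀ t, x₀ (t + T) = x₀ t)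
    (hN : ContDiff ℝ 1 (NN f g x₀))
    (θ ε : ℝ) (y u h : C(Icc (0:ℝ) T, E)) (hu : ∀ t : Icc (0:ℝ) T, u t = x₀ (t + θ) + ε • y t)
    (hh : ∀ t : Icc (0:ℝ) T, h t = f (u t) + ε • g t (u t) ε) :
    u - cst _ (u (iT hT)) - J hT h = ε • H hT (NN f g x₀) hN.continuous (θ, y, ε) := by
  have hxc : Continuous x₀ := continuous_iff_continuousAt.2 fun t => (hx₀ t).continuousAt
  have hac : Continuous fun t => x₀ (t + θ) := by fun_prop
  have hfa : Continuous fun t => f (x₀ (t + θ)) := hf.continuous.comp hac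
  have ha : ∀ t, HasDerivAt (fun t => x₀ (t + θ)) (f (x₀ (t + θ))) t :=
    fun t => (hx₀ (t + θ)).comp_add_const t θ
  have hJ : ∀ t : Icc (0:ℝ) T, x₀ (t + θ) = x₀ (0 + θ) + J hT (res T _ hfa) t :=
    J_of_deriv hT (fun t => x₀ (t + θ)) (res T _ hfa) (fun t => ha t)
  have hh' : h = res T _ hfa + ε • Nem (NN f g x₀) hN.continuous (θ, y, ε) := by
    ext1 t
    rw [hh, hu]
    change _ = f (x₀ (t + θ)) + ε • NN f g x₀ (t, (θ, y t, ε))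
    rw [NN_smul f g x₀ hf]; abel
  rw [hh', map_add, map_smul]
  ext1 t
  change u t - u (iT hT) - (J hT (res T _ hfa) t + ε • J hT (Nem (NN f g x₀) hN.continuous (θ, y, ε)) t)
    = ε • (y t - y (iT hT) - J hT (Nem (NN f g x₀) hN.continuous (θ, y, ε)) t)
  rw [hu, hu, hJ t]
  have : x₀ (((iT hT : Icc (0:ℝ) T) : ℝ) + θ) = x₀ (0 + θ) := by
    have := hx₀T θ
    rw [zero_add, ← this, add_comm]
  rw [this, smul_sub, smul_sub]; abel
end NN
end
end Malkin


namespace Malkin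
noncomputable section

section ap
variable {E : Type*} [NormedAddCommGroup E] [InnerProductSpace ℝ E] [CompleteSpace E]
  [FiniteDimensional ℝ E] [ProperSpace E] {T : ℝ} (hT : 0 < T)

lemma lip (N : ℝ × (ℝ × E × ℝ) → E) (hN : ContDiff ℝ 1 N) (θ₀ C : ℝ) :
    ∃ K > 0, ∀ s ∈ Icc (0:ℝ) T, ∀ θ ∈ Metric.closedBall θ₀ 1, ∀ y ∈ Metric.closedBall (0:E) C,
      ∀ ε ∈ Icc (-1:ℝ) 1, ∀ θ' ∈ Metric.closedBall θ₀ 1, ∀ y' ∈ Metric.closedBall (0:E) C,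
      ∀ ε' ∈ Icc (-1:ℝ) 1, ‖N (s, (θ, y, ε)) - N (s, (θ', y', ε'))‖ ≤
        K * ‖(((θ, y, ε) : ℝ × E × ℝ)) - (θ', y', ε')‖ := by
  let S : Set (ℝ × (ℝ × E × ℝ)) := Icc (0:ℝ) T ×ˢ (Metric.closedBall θ₀ 1 ×ˢ
    (Metric.closedBall (0:E) C ×ˢ Icc (-1:ℝ) 1))
  have hS : IsCompact S := isCompact_Icc.prod ((isCompact_closedBall _ _).prod
    ((isCompact_closedBall _ _).prod isCompact_Icc))
  have hSc : Convex ℝ S := (convex_Icc _ _).prod ((convex_closedBall _ _).prod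
    ((convex_closedBall _ _).prod (convex_Icc _ _)))
  obtain ⟨K, hK⟩ := hS.exists_bound_of_continuousOn
    (hN.continuous_fderiv (by norm_num)).continuousOn
  refine ⟨max K 1, by positivity, ?_⟩
  intro s hs θ hθ y hy ε hε θ' hθ' y' hy' ε' hε'
  have := hSc.norm_image_sub_le_of_norm_fderiv_le (𝕜 := ℝ) (f := N) (C := max K 1)
    (x := (s, (θ', y', ε'))) (y := (s, (θ, y, ε)))
    (fun x _ => hN.differentiable (by norm_num) x) (fun x hx => (hK x hx).trans (le_max_left _ _))
    ⟨hs, hθ', hy', hε'⟩ ⟨hs, hθ, hy, hε⟩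
  refine this.trans (le_of_eq ?_)
  congr 1
  rw [Prod.mk_sub_mk, sub_self, Prod.norm_def]
  simp

variable (f : E → E) (g : ℝ → E → ℝ → E) (x₀ : ℝ → E)

lemma ap1 (hf : ContDiff ℝ 2 f)
    (hg : ContDiff ℝ 1 fun p : ℝ × E × ℝ => g p.1 p.2.1 p.2.2)
    (hxc : Continuous x₀)
    (hN : ContDiff ℝ 1 (NN f g x₀)) (θ₀ : ℝ)
    (hA : Continuous fun t => fderiv ℝ f (x₀ (t + θ₀)))
    (ℓ : C(Icc (0:ℝ) T, E) →L[ℝ] ℝ) (c : ℝ) (hc : 0 < c)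
    (hlow : ∀ y : C(Icc (0:ℝ) T, E), ℓ y = 0 →
      ‖y‖ ≤ c * ‖y - cst _ (y (iT hT)) - J hT (mulOp (res T _ hA) y)‖) :
    ∃ r > 0, r ≤ 1 ∧ ∃ C > 0, ∀ (θ : ℝ) (y : C(Icc (0:ℝ) T, E)) (ε : ℝ),
      |θ - θ₀| ≤ r → ‖ε • y‖ ≤ r → |ε| ≤ 1 →
      H hT (NN f g x₀) hN.continuous (θ, y, ε) = 0 → ℓ y = 0 → ‖y‖ ≤ C := by
  obtain ⟨η, hη, hcη⟩ : ∃ η > 0, c * T * η ≤ 1 / 2 :=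
    ⟨1 / (2 * (c * T)), by positivity, by field_simp; rfl⟩
  have hQc := (Q_contDiff f hf).continuous
  have h1 : ∀ᶠ p : ℝ × E in 𝓝 (θ₀, 0), ∀ s ∈ Icc (0:ℝ) T,
      ‖Q f (x₀ (s + p.1), p.2) - Q f (x₀ (s + θ₀), 0)‖ < η := by
    refine isCompact_Icc.eventually_forall_of_forall_eventually fun s _ => ?_
    have hcont : Continuous fun p : (ℝ × E) × ℝ =>
        ‖Q f (x₀ (p.2 + p.1.1), p.1.2) - Q f (x₀ (p.2 + θ₀), 0)‖ := by fun_prop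
    refine (hcont.tendsto _).eventually_lt_const ?_
    simpa using hη
  obtain ⟨r', hr', hr⟩ := Metric.eventually_nhds_iff_ball.1 h1
  obtain ⟨G, hG⟩ := ((isCompact_Icc (a := (0:ℝ)) (b := T)).prod
    ((isCompact_closedBall θ₀ 1).prod ((isCompact_closedBall (0:E) 1).prod
      (isCompact_Icc (a := (-1:ℝ)) (b := 1))))).exists_bound_of_continuousOn
      (f := fun p : ℝ × (ℝ × E × ℝ) => g p.1 (x₀ (p.1 + p.2.1) + p.2.2.1) p.2.2.2)
      (Continuous.continuousOn (by
        exact hg.continuous.comp (f := fun p : ℝ × (ℝ × E × ℝ) =>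
          (p.1, x₀ (p.1 + p.2.1) + p.2.2.1, p.2.2.2)) (by fun_prop)))
  have hr2 : min (r' / 2) 1 < r' := lt_of_le_of_lt (min_le_left _ _) (by linarith)
  refine ⟨min (r' / 2) 1, by positivity, min_le_right _ _, 2 * (c * T * max G 1), by positivity, ?_⟩
  intro θ y ε hθ hy hε hH hℓ
  have hkey : ‖y - cst _ (y (iT hT)) - J hT (mulOp (res T _ hA) y)‖ ≤ T * (η * ‖y‖ + max G 1) := by
    have e1 : y - cst _ (y (iT hT)) - J hT (mulOp (res T _ hA) y) =
        J hT (Nem (NN f g x₀) hN.continuous (θ, y, ε) - mulOp (res T _ hA) y) := by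
      have : y - cst _ (y (iT hT)) = J hT (Nem (NN f g x₀) hN.continuous (θ, y, ε)) :=
        sub_eq_zero.1 hH
      rw [this, map_sub]
    rw [e1]
    refine (J_norm_le hT _).trans ?_
    gcongr
    refine (ContinuousMap.norm_le _ (by positivity)).2 fun s => ?_
    have hys : ‖ε • y s‖ ≤ min (r' / 2) 1 := ((ε • y).norm_coe_le_norm s).trans hy
    have e2 : (Nem (NN f g x₀) hN.continuous (θ, y, ε) - mulOp (res T _ hA) y) s =
        (Q f (x₀ (s + θ), ε • y s) - Q f (x₀ (s + θ₀), 0)) (y s)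
          + g s (x₀ (s + θ) + ε • y s) ε := by
      change NN f g x₀ (s, (θ, y s, ε)) - fderiv ℝ f (x₀ (s + θ₀)) (y s) = _
      rw [NN, Q_zero, _root_.sub_apply]; simp only; abel
    rw [e2]
    refine (norm_add_le _ _).trans (add_le_add ?_ ?_)
    · refine (ContinuousLinearMap.le_opNorm _ _).trans ?_
      gcongr
      · refine (hr (θ, ε • y s) ?_ s s.2).le
        rw [mem_ball_iff_norm, Prod.mk_sub_mk, Prod.norm_def, max_lt_iff]
        refine ⟨?_, ?_⟩
        · exact lt_of_le_of_lt hθ hr2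
        · simpa using lt_of_le_of_lt hys hr2
      · exact y.norm_coe_le_norm s
    · refine (hG (s, (θ, ε • y s, ε)) ⟨s.2, ?_, ?_, abs_le.1 hε⟩).trans (le_max_left _ _)
      · rw [mem_closedBall_iff_norm]; exact hθ.trans (min_le_right _ _)
      · rw [mem_closedBall_zero_iff]; exact hys.trans (min_le_right _ _)
  have h2 := hlow y hℓ
  have h3 : c * ‖y - cst _ (y (iT hT)) - J hT (mulOp (res T _ hA) y)‖ ≤
    c * (T * (η * ‖y‖ + max G 1)) := by gcongr
  have h4 : c * T * η * ‖y‖ ≤ 1 / 2 * ‖y‖ := by gcongr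
  nlinarith

lemma ap2 (hf : ContDiff ℝ 2 f)
    (hg : ContDiff ℝ 1 fun p : ℝ × E × ℝ => g p.1 p.2.1 p.2.2)
    (hxc : Continuous x₀)
    (hN : ContDiff ℝ 1 (NN f g x₀)) (θ₀ : ℝ)
    (hA : Continuous fun t => fderiv ℝ f (x₀ (t + θ₀)))
    (ℓ : C(Icc (0:ℝ) T, E) →L[ℝ] ℝ) (c : ℝ) (hc : 0 < c)
    (hlow : ∀ y : C(Icc (0:ℝ) T, E), ℓ y = 0 →
      ‖y‖ ≤ c * ‖y - cst _ (y (iT hT)) - J hT (mulOp (res T _ hA) y)‖)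
    (z₀ : ℝ → E)
    (hz₀ : ∀ t, HasDerivAt z₀ (-(ContinuousLinearMap.adjoint (fderiv ℝ f (x₀ t)) (z₀ t))) t)
    (hz₀T : ∀ t, z₀ (t + T) = z₀ t)
    (hM0 : (∫ t in (0:ℝ)..T, ⟪g t (x₀ (t + θ₀)) 0, z₀ (t + θ₀)⟫_ℝ) = 0)
    (m : ℝ) (hm : m < 0)
    (hM' : HasDerivAt (fun θ => ∫ t in (0:ℝ)..T, ⟪g t (x₀ (t + θ)) 0, z₀ (t + θ)⟫_ℝ) m θ₀)
    (y₀ : C(Icc (0:ℝ) T, E)) (h0 : H hT (NN f g x₀) hN.continuous (θ₀, y₀, 0) = 0)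
    (hℓ0 : ℓ y₀ = 0) :
    ∃ r > 0, ∀ U ∈ 𝓝 (θ₀, y₀, (0:ℝ)), ∃ ε₁ > 0,
      ∀ (θ : ℝ) (y : C(Icc (0:ℝ) T, E)) (ε : ℝ), 0 < ε → ε ≤ ε₁ →
      |θ - θ₀| ≤ r → ‖ε • y‖ ≤ r → 
      H hT (NN f g x₀) hN.continuous (θ, y, ε) = 0 → ℓ y = 0 → (θ, y, ε) ∈ U := by
  have hzc : Continuous z₀ := continuous_iff_continuousAt.2 fun t => (hz₀ t).continuousAt
  obtain ⟨r, hr, hr1, C, hC, hap⟩ := ap1 hT f g x₀ hf hg hxc hN θ₀ hA ℓ c hc hlow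
  obtain ⟨K, hK, hlip⟩ := lip (T := T) (NN f g x₀) hN θ₀ C
  obtain ⟨Z, hZ⟩ := ((isCompact_Icc (a := (0:ℝ)) (b := T)).prod
    (isCompact_closedBall θ₀ 1)).exists_bound_of_continuousOn
      (f := fun p : ℝ × ℝ => z₀ (p.1 + p.2)) (by fun_prop)
  have hZ0 : 0 ≤ Z := (norm_nonneg _).trans (hZ (0, θ₀) ⟨⟨le_rfl, hT.le⟩, by simp⟩)
  -- lower bound on M
  obtain ⟨r₂, hr₂, hMlow⟩ : ∃ r₂ > 0, ∀ θ, |θ - θ₀| < r₂ → -m / 2 * |θ - θ₀| ≤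
      |∫ t in (0:ℝ)..T, ⟪g t (x₀ (t + θ)) 0, z₀ (t + θ)⟫_ℝ| := by
    have h1 := (hasDerivAt_iff_isLittleO.1 hM').def (c := -m / 2) (by linarith)
    obtain ⟨r₂, hr₂, h2⟩ := Metric.eventually_nhds_iff.1 h1
    refine ⟨r₂, hr₂, fun θ hθ => ?_⟩
    have h3 := h2 (y := θ) (by rwa [Real.dist_eq])
    simp only [hM0, sub_zero, smul_eq_mul, Real.norm_eq_abs] at h3
    have h4 := abs_sub_abs_le_abs_sub ((θ - θ₀) * m)
      (∫ t in (0:ℝ)..T, ⟪g t (x₀ (t + θ)) 0, z₀ (t + θ)⟫_ℝ)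
    rw [abs_sub_comm ((θ - θ₀) * m)] at h4
    rw [abs_mul, abs_of_neg hm] at h4
    linarith
  refine ⟨min r (r₂ / 2), by positivity, ?_⟩
  intro U hU
  -- main estimates
  obtain ⟨D₁, hD₁⟩ : ∃ D₁, D₁ = 2 * (K * Z * T) / (-m) := ⟨_, rfl⟩
  obtain ⟨D, hD, hest⟩ : ∃ D > 0, ∀ (θ : ℝ) (y : C(Icc (0:ℝ) T, E)) (ε : ℝ), 0 < ε → ε ≤ 1 →
      |θ - θ₀| ≤ min r (r₂ / 2) → ‖ε • y‖ ≤ min r (r₂ / 2) → 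
      H hT (NN f g x₀) hN.continuous (θ, y, ε) = 0 → ℓ y = 0 →
        |θ - θ₀| ≤ D * ε ∧ ‖y - y₀‖ ≤ D * ε := by
    have hD₁0 : 0 ≤ D₁ := by
      rw [hD₁]; exact div_nonneg (by positivity) (by linarith)
    refine ⟨D₁ + c * (T * (K * (D₁ + 1))) + 1, by positivity, ?_⟩
    intro θ y ε hε hε1 hθ hεy hH hℓ
    have hyC : ‖y‖ ≤ C := hap θ y ε (hθ.trans (min_le_left _ _)) (hεy.trans (min_le_left _ _))
      (by rw [abs_of_pos hε]; exact hε1) hH hℓ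
    have hys : ∀ s, y s ∈ Metric.closedBall (0:E) C := fun s => by
      rw [mem_closedBall_zero_iff]; exact (y.norm_coe_le_norm s).trans hyC
    have hθb : θ ∈ Metric.closedBall θ₀ 1 := by
      rw [mem_closedBall_iff_norm]; exact (hθ.trans (min_le_left _ _)).trans hr1
    have hθ₀b : θ₀ ∈ Metric.closedBall θ₀ 1 := by simp
    have hεb : ε ∈ Icc (-1:ℝ) 1 := ⟨by linarith, hε1⟩
    have h0b : (0:ℝ) ∈ Icc (-1:ℝ) 1 := by norm_num
    have hHy : y - cst _ (y (iT hT)) = J hT (Nem (NN f g x₀) hN.continuous (θ, y, ε)) :=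
        sub_eq_zero.1 hH
    -- step 1
    have hAθ : Continuous fun t => fderiv ℝ f (x₀ (t + θ)) :=
      (hf.continuous_fderiv (by norm_num)).comp (by fun_prop)
    have hgθ : Continuous fun t => g t (x₀ (t + θ)) 0 :=
      hg.continuous.comp (f := fun t => (t, x₀ (t + θ), (0:ℝ))) (by fun_prop)
    let ρ : C(Icc (0:ℝ) T, E) := Nem (NN f g x₀) hN.continuous (θ, y, ε) -
      Nem (NN f g x₀) hN.continuous (θ, y, 0)
    have hρ : ‖ρ‖ ≤ K * ε := by
      refine (ContinuousMap.norm_le _ (by positivity)).2 fun s => ?_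
      refine (hlip s s.2 θ hθb (y s) (hys s) ε hεb θ hθb (y s) (hys s) 0 h0b).trans ?_
      gcongr
      simp [Prod.norm_def, abs_of_pos hε, hε.le]
    have hpp := pair_period hT (fun t => fderiv ℝ f (x₀ (t + θ))) hAθ (fun t => z₀ (t + θ))
      (fun t => (hz₀ (t + θ)).comp_add_const t θ)
      (by rw [zero_add, ← hz₀T θ, add_comm]) y (ρ + res T _ hgθ) (by
        rw [hHy, ← map_sub]
        congr 1
        ext1 s
        change NN f g x₀ (s, (θ, y s, ε)) - fderiv ℝ f (x₀ (s + θ)) (y s) =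
          NN f g x₀ (s, (θ, y s, ε)) - NN f g x₀ (s, (θ, y s, 0)) + g s (x₀ (s + θ)) 0
        rw [NN_zero]; abel)
    have hMeq : ∫ t in (0:ℝ)..T, ⟪g t (x₀ (t + θ)) 0, z₀ (t + θ)⟫_ℝ =
        - ∫ t in (0:ℝ)..T, ⟪ext hT ρ t, z₀ (t + θ)⟫_ℝ := by
      rw [← sub_eq_zero, sub_neg_eq_add, ← intervalIntegral.integral_add]
      · refine Eq.trans (intervalIntegral.integral_congr fun t ht => ?_) hpp
        rw [uIcc_of_le hT.le] at ht
        rw [ext_of_mem hT _ ht, ext_of_mem hT _ ht, ← inner_add_left]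
        congr 1
        exact add_comm _ _
      · exact (hgθ.inner (by fun_prop)).intervalIntegrable _ _
      · exact ((ext hT ρ).continuous.inner (by fun_prop)).intervalIntegrable _ _
    have hMle : |∫ t in (0:ℝ)..T, ⟪g t (x₀ (t + θ)) 0, z₀ (t + θ)⟫_ℝ| ≤ K * ε * Z * T := by
      rw [hMeq, abs_neg]
      have := intervalIntegral.norm_integral_le_of_norm_le_const (a := 0) (b := T)
        (f := fun t => ⟪ext hT ρ t, z₀ (t + θ)⟫_ℝ) (C := K * ε * Z) (fun t ht => by
          rw [uIoc_of_le hT.le] at ht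
          refine (norm_inner_le_norm _ _).trans ?_
          gcongr
          · exact (ext_norm_le hT ρ t).trans hρ
          · exact hZ (t, θ) ⟨Ioc_subset_Icc_self ht, hθb⟩)
      rwa [sub_zero, abs_of_pos hT] at this
    have hθe : |θ - θ₀| ≤ D₁ * ε := by
      have h1 := hMlow θ (lt_of_le_of_lt (hθ.trans (min_le_right _ _)) (by linarith))
      rw [hD₁, div_mul_eq_mul_div, le_div_iff₀ (by linarith)]
      nlinarith
    refine ⟨hθe.trans ?_, ?_⟩
    · gcongr
      have : 0 ≤ c * (T * (K * (D₁ + 1))) := by positivity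
      linarith
    have h1 := hlow (y - y₀) (by rw [map_sub, hℓ, hℓ0, sub_zero])
    have hHy0 : y₀ - cst _ (y₀ (iT hT)) = J hT (Nem (NN f g x₀) hN.continuous (θ₀, y₀, 0)) :=
        sub_eq_zero.1 h0
    have e1 : (y - y₀) - cst _ ((y - y₀) (iT hT)) - J hT (mulOp (res T _ hA) (y - y₀)) =
        J hT (Nem (NN f g x₀) hN.continuous (θ, y, ε) -
          Nem (NN f g x₀) hN.continuous (θ₀, y, 0)) := by
      have e2 : (y - y₀) - cst _ ((y - y₀) (iT hT)) =
        (y - cst _ (y (iT hT))) - (y₀ - cst _ (y₀ (iT hT))) := by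
        rw [ContinuousMap.sub_apply, map_sub]; abel
      rw [e2, hHy, hHy0, ← map_sub, ← map_sub]
      congr 1
      ext1 s
      change NN f g x₀ (s, (θ, y s, ε)) - NN f g x₀ (s, (θ₀, y₀ s, 0)) -
        fderiv ℝ f (x₀ (s + θ₀)) (y s - y₀ s) =
          NN f g x₀ (s, (θ, y s, ε)) - NN f g x₀ (s, (θ₀, y s, 0))
      rw [NN_zero, NN_zero, map_sub]; abel
    have h2 : ‖Nem (NN f g x₀) hN.continuous (θ, y, ε) -
          Nem (NN f g x₀) hN.continuous (θ₀, y, 0)‖ ≤ K * ((D₁ + 1) * ε) := by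
      refine (ContinuousMap.norm_le _ (by positivity)).2 fun s => ?_
      refine (hlip s s.2 θ hθb (y s) (hys s) ε hεb θ₀ hθ₀b (y s) (hys s) 0 h0b).trans ?_
      gcongr
      rw [Prod.mk_sub_mk, Prod.mk_sub_mk, Prod.norm_def, Prod.norm_def]
      simp only [sub_self, norm_zero, sub_zero, Real.norm_eq_abs]
      rw [abs_of_pos hε, max_eq_right hε.le]
      refine max_le ?_ ?_ <;> nlinarith
    have h3 := J_norm_le hT (Nem (NN f g x₀) hN.continuous (θ, y, ε) -
          Nem (NN f g x₀) hN.continuous (θ₀, y, 0))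
    rw [e1] at h1
    calc ‖y - y₀‖ ≤ c * (T * (K * ((D₁ + 1) * ε))) := by
          refine h1.trans ?_
          gcongr
          exact h3.trans (by gcongr)
      _ = (c * (T * (K * (D₁ + 1)))) * ε := by ring
      _ ≤ _ := by gcongr; linarith
  obtain ⟨ρ, hρ, hball⟩ := Metric.mem_nhds_iff.1 hU
  refine ⟨min 1 (ρ / (2 * (D + 1))), by positivity, ?_⟩
  intro θ y ε hε hε1 hθ hεy hH hℓ
  obtain ⟨h1, h2⟩ := hest θ y ε hε (hε1.trans (min_le_left _ _)) hθ hεy hH hℓ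
  have h3 : (D + 1) * ε < ρ := by
    have := hε1.trans (min_le_right _ _)
    rw [le_div_iff₀ (by positivity)] at this
    nlinarith
  apply hball
  rw [mem_ball_iff_norm, Prod.mk_sub_mk, Prod.mk_sub_mk, Prod.norm_def, Prod.norm_def]
  simp only [sub_zero, Real.norm_eq_abs, abs_of_pos hε]
  refine max_lt ?_ (max_lt ?_ ?_) <;> nlinarith
end ap
end
end Malkin


namespace Malkin
noncomputable section

section key
variable {E : Type*} [NormedAddCommGroup E] [InnerProductSpace ℝ E] [CompleteSpace E]
  [FiniteDimensional ℝ E] [ProperSpace E] {T : ℝ} (hT : 0 < T)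
variable (f : E → E) (g : ℝ → E → ℝ → E) (x₀ : ℝ → E)

lemma key (hf : ContDiff ℝ 2 f)
    (hg : ContDiff ℝ 1 fun p : ℝ × E × ℝ => g p.1 p.2.1 p.2.2)
    (hxc : Continuous x₀)
    (hN : ContDiff ℝ 1 (NN f g x₀)) (θ₀ : ℝ)
    (z₀ : ℝ → E)
    (hz₀ : ∀ t, HasDerivAt z₀ (-(ContinuousLinearMap.adjoint (fderiv ℝ f (x₀ t)) (z₀ t))) t)
    (hz₀T : ∀ t, z₀ (t + T) = z₀ t)
    (m : ℝ)
    (hM' : HasDerivAt (fun θ => ∫ t in (0:ℝ)..T, ⟪g t (x₀ (t + θ)) 0, z₀ (t + θ)⟫_ℝ) m θ₀)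
    (y₀ : C(Icc (0:ℝ) T, E)) (h0 : H hT (NN f g x₀) hN.continuous (θ₀, y₀, 0) = 0) :
    ∃ β : C(Icc (0:ℝ) T, E),
      (∀ s : Icc (0:ℝ) T, β s = fderiv ℝ (NN f g x₀) (s, (θ₀, y₀ s, 0)) (0, (1, 0, 0))) ∧
      ∫ t in (0:ℝ)..T, ⟪ext hT β t, z₀ (t + θ₀)⟫_ℝ = m := by
  have hzc : Continuous z₀ := continuous_iff_continuousAt.2 fun t => (hz₀ t).continuousAt
  obtain ⟨N', hN', hN'a⟩ := Nem_strict (NN f g x₀) hN (θ₀, y₀, (0:ℝ))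
  let D : ℝ → C(Icc (0:ℝ) T, E) := fun θ => Nem (NN f g x₀) hN.continuous (θ, y₀, 0) -
    Nem (NN f g x₀) hN.continuous (θ₀, y₀, 0)
  let β : C(Icc (0:ℝ) T, E) := N' (1, 0, 0)
  refine ⟨β, fun s => hN'a _ s, ?_⟩
  have hD : HasDerivAt D β θ₀ := by
    have h1 : HasDerivAt (fun θ : ℝ => ((θ, y₀, 0) : ℝ × C(Icc (0:ℝ) T, E) × ℝ)) (1, 0, 0) θ₀ :=
      (hasDerivAt_id θ₀).prodMk (hasDerivAt_const θ₀ (y₀, (0:ℝ)))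
    exact (hN'.hasFDerivAt.comp_hasDerivAt θ₀ h1).sub_const _
  have hD0 : D θ₀ = 0 := sub_self _
  have hM : ∀ θ, ∫ t in (0:ℝ)..T, ⟪g t (x₀ (t + θ)) 0, z₀ (t + θ)⟫_ℝ =
      ∫ t in (0:ℝ)..T, ⟪ext hT (D θ) t, z₀ (t + θ)⟫_ℝ := by
    intro θ
    have hAθ : Continuous fun t => fderiv ℝ f (x₀ (t + θ)) :=
      (hf.continuous_fderiv (by norm_num)).comp (by fun_prop)
    have hgθ : Continuous fun t => g t (x₀ (t + θ)) 0 :=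
      hg.continuous.comp (f := fun t => (t, x₀ (t + θ), (0:ℝ))) (by fun_prop)
    have hHy0 : y₀ - cst _ (y₀ (iT hT)) = J hT (Nem (NN f g x₀) hN.continuous (θ₀, y₀, 0)) :=
        sub_eq_zero.1 h0
    have hpp := pair_period hT (fun t => fderiv ℝ f (x₀ (t + θ))) hAθ (fun t => z₀ (t + θ))
      (fun t => (hz₀ (t + θ)).comp_add_const t θ)
      (by rw [zero_add, ← hz₀T θ, add_comm]) y₀
      (Nem (NN f g x₀) hN.continuous (θ₀, y₀, 0) - mulOp (res T _ hAθ) y₀) (by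
        rw [hHy0, ← map_sub])
    rw [← sub_eq_zero, ← intervalIntegral.integral_sub]
    · refine Eq.trans (intervalIntegral.integral_congr fun t ht => ?_) hpp
      rw [uIcc_of_le hT.le] at ht
      change ⟪g t (x₀ (t + θ)) 0, z₀ (t + θ)⟫_ℝ - ⟪ext hT (D θ) t, z₀ (t + θ)⟫_ℝ = ⟪_, _⟫_ℝ
      rw [ext_of_mem hT _ ht, ext_of_mem hT _ ht, ← inner_sub_left]
      congr 1
      change g t (x₀ (t + θ)) 0 - (NN f g x₀ (t, (θ, y₀ ⟨t, ht⟩, 0)) -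
        NN f g x₀ (t, (θ₀, y₀ ⟨t, ht⟩, 0))) =
        NN f g x₀ (t, (θ₀, y₀ ⟨t, ht⟩, 0)) - fderiv ℝ f (x₀ (t + θ)) (y₀ ⟨t, ht⟩)
      rw [NN_zero f g x₀ t θ]; abel
    · exact (hgθ.inner (by fun_prop)).intervalIntegrable _ _
    · exact ((ext hT (D θ)).continuous.inner (by fun_prop)).intervalIntegrable _ _
  rw [hasDerivAt_iff_tendsto_slope] at hM' hD
  refine tendsto_nhds_unique ?_ hM'
  have hslope : ∀ θ, slope (fun θ => ∫ t in (0:ℝ)..T, ⟪g t (x₀ (t + θ)) 0, z₀ (t + θ)⟫_ℝ) θ₀ θ =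
      ∫ t in (0:ℝ)..T, ⟪ext hT (slope D θ₀ θ) t, z₀ (t + θ)⟫_ℝ := by
    intro θ
    rw [slope_def_module, slope_def_module]
    simp only [hM, hD0, sub_zero]
    rw [smul_eq_mul]
    have : ∫ t in (0:ℝ)..T, ⟪ext hT (D θ₀) t, z₀ (t + θ₀)⟫_ℝ = 0 := by
      rw [hD0]
      refine (intervalIntegral.integral_congr (g := fun _ => (0:ℝ)) fun t ht => ?_).trans (by simp)
      rw [uIcc_of_le hT.le] at ht
      simp only
      rw [ext_of_mem hT _ ht]; simp
    rw [hD0] at this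
    rw [this, sub_zero, ← intervalIntegral.integral_const_mul]
    refine intervalIntegral.integral_congr fun t ht => ?_
    rw [uIcc_of_le hT.le] at ht
    rw [ext_of_mem hT _ ht, ext_of_mem hT _ ht, ContinuousMap.smul_apply, real_inner_smul_left]
  refine Tendsto.congr (fun θ => (hslope θ).symm) ?_
  obtain ⟨Z, hZ⟩ := ((isCompact_Icc (a := (0:ℝ)) (b := T)).prod
    (isCompact_closedBall θ₀ 1)).exists_bound_of_continuousOn
      (f := fun p : ℝ × ℝ => z₀ (p.1 + p.2)) (by fun_prop)
  refine intervalIntegral.tendsto_integral_filter_of_dominated_convergence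
    (fun _ => (‖β‖ + 1) * Z) ?_ ?_ (by simp) ?_
  · refine Eventually.of_forall fun θ => ?_
    exact ((ext hT (slope D θ₀ θ)).continuous.inner (by fun_prop)).aestronglyMeasurable
  · have h1 : ∀ᶠ θ in 𝓝[≠] θ₀, ‖slope D θ₀ θ‖ < ‖β‖ + 1 :=
      hD.norm.eventually_lt_const (by linarith)
    have h2 : ∀ᶠ θ in 𝓝[≠] θ₀, θ ∈ Metric.closedBall θ₀ 1 :=
      mem_nhdsWithin_of_mem_nhds (Metric.closedBall_mem_nhds _ one_pos)
    filter_upwards [h1, h2] with θ h1 h2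
    refine Eventually.of_forall fun t ht => ?_
    rw [uIoc_of_le hT.le] at ht
    refine (norm_inner_le_norm _ _).trans ?_
    gcongr
    · exact (ext_norm_le hT _ t).trans h1.le
    · exact hZ (t, θ) ⟨Ioc_subset_Icc_self ht, h2⟩
  · refine Eventually.of_forall fun t ht => ?_
    rw [uIoc_of_le hT.le] at ht
    have ht' := Ioc_subset_Icc_self ht
    refine Tendsto.inner ?_ ?_
    · rw [ext_of_mem hT _ ht']
      simp_rw [ext_of_mem hT _ ht']
      exact ((ev (⟨t, ht'⟩ : Icc (0:ℝ) T)).continuous.tendsto β).comp hD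
    · have : Continuous fun θ => z₀ (t + θ) := by fun_prop
      exact (this.tendsto θ₀).mono_left nhdsWithin_le_nhds

end key
end
end Malkin


namespace Malkin
noncomputable section

section fin
variable {E : Type*} [NormedAddCommGroup E] [InnerProductSpace ℝ E] [CompleteSpace E]
  [FiniteDimensional ℝ E] [ProperSpace E] {T : ℝ} (hT : 0 < T)
variable (f : E → E) (g : ℝ → E → ℝ → E) (x₀ : ℝ → E)

lemma phase (w z : E) (θ₀ : ℝ) (hx : HasDerivAt x₀ w θ₀) (hxc : Continuous x₀)
    (hwz : ⟪w, z⟫_ℝ = 1) (r : ℝ) (hr : 0 < r) :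
    ∃ δ > 0, ∀ v, ‖v - x₀ θ₀‖ ≤ δ → ∃ θ, |θ - θ₀| ≤ r ∧ ⟪v - x₀ θ, z⟫_ℝ = 0 := by
  have hφ : HasDerivAt (fun θ => ⟪x₀ θ - x₀ θ₀, z⟫_ℝ) 1 θ₀ := by
    have := (hx.sub_const (x₀ θ₀)).inner ℝ (hasDerivAt_const θ₀ z)
    simpa [hwz] using this
  have h1 := (hasDerivAt_iff_isLittleO.1 hφ).def (c := 1 / 2) (by norm_num)
  obtain ⟨r₂, hr₂, h2⟩ := Metric.eventually_nhds_iff.1 h1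
  obtain ⟨r₁, hr₁, hr₁r, hr₁₂⟩ : ∃ r₁ > 0, r₁ ≤ r ∧ r₁ < r₂ :=
    ⟨min r (r₂ / 2), by positivity, min_le_left _ _, lt_of_le_of_lt (min_le_right _ _) (by linarith)⟩
  have hp := h2 (y := θ₀ + r₁) (by rw [Real.dist_eq]; simpa [abs_of_pos hr₁] using hr₁₂)
  have hm := h2 (y := θ₀ - r₁) (by rw [Real.dist_eq]; simpa [abs_of_pos hr₁] using hr₁₂)
  simp only [sub_self, inner_zero_left, sub_zero, smul_eq_mul, mul_one, Real.norm_eq_abs,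
    add_sub_cancel_left, sub_sub_cancel_left, abs_neg, abs_of_pos hr₁] at hp hm
  rw [abs_le] at hp hm
  refine ⟨r₁ / (2 * (‖z‖ + 1)), by positivity, fun v hv => ?_⟩
  have hvz : |⟪v - x₀ θ₀, z⟫_ℝ| ≤ r₁ / 2 := by
    refine (abs_real_inner_le_norm _ _).trans ?_
    rw [le_div_iff₀ (by positivity)] at hv
    nlinarith [norm_nonneg (v - x₀ θ₀)]
  rw [abs_le] at hvz
  have hc : ContinuousOn (fun θ => ⟪x₀ θ - x₀ θ₀, z⟫_ℝ) (Icc (θ₀ - r₁) (θ₀ + r₁)) := by fun_prop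
  obtain ⟨θ, hθ, hθv⟩ := intermediate_value_Icc (by linarith) hc
    (show ⟪v - x₀ θ₀, z⟫_ℝ ∈ _ from ⟨by linarith, by linarith⟩)
  refine ⟨θ, ?_, ?_⟩
  · rw [abs_le]; constructor <;> linarith [hθ.1, hθ.2]
  · have : v - x₀ θ = (v - x₀ θ₀) - (x₀ θ - x₀ θ₀) := by abel
    rw [this, inner_sub_left, sub_eq_zero]; exact hθv.symm

lemma unif (hxc : Continuous x₀) (θ₀ η : ℝ) (hη : 0 < η) :
    ∀ᶠ θ in 𝓝 θ₀, ∀ s ∈ Icc (0:ℝ) T, ‖x₀ (s + θ) - x₀ (s + θ₀)‖ < η := by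
  refine isCompact_Icc.eventually_forall_of_forall_eventually fun s _ => ?_
  have hcont : Continuous fun p : ℝ × ℝ => ‖x₀ (p.2 + p.1) - x₀ (p.2 + θ₀)‖ := by fun_prop
  refine (hcont.tendsto _).eventually_lt_const ?_
  simpa using hη

lemma solve (hf : ContDiff ℝ 2 f)
    (hg : ContDiff ℝ 1 fun p : ℝ × E × ℝ => g p.1 p.2.1 p.2.2)
    (hx₀ : ∀ t, HasDerivAt x₀ (f (x₀ t)) t) (hx₀T : ∀ t, x₀ (t + T) = x₀ t)
    (hN : ContDiff ℝ 1 (NN f g x₀)) (θ : ℝ) (y : C(Icc (0:ℝ) T, E)) (ε : ℝ)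
    (hH : H hT (NN f g x₀) hN.continuous (θ, y, ε) = 0)
    (x : ℝ → E) (h0 : x 0 = x₀ θ + ε • y (i0 hT))
    (hx : ∀ t, HasDerivAt x (f (x t) + ε • g t (x t) ε) t) :
    (∀ t : Icc (0:ℝ) T, x t = x₀ (t + θ) + ε • y t) ∧ x T = x 0 := by
  have hxc : Continuous x₀ := continuous_iff_continuousAt.2 fun t => (hx₀ t).continuousAt
  have hac : Continuous fun t => x₀ (t + θ) := by fun_prop
  let F : ℝ × E → E := fun p => f p.2 + ε • g p.1 p.2 ε
  have hF : ContDiff ℝ 1 F := by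
    refine ContDiff.add ((hf.of_le (by norm_num)).comp contDiff_snd) (ContDiff.const_smul ε ?_)
    exact hg.comp (f := fun p : ℝ × E => (p.1, p.2, ε)) (by fun_prop)
  have hFc := hF.continuous
  let u : C(Icc (0:ℝ) T, E) := res T _ hac + ε • y
  let h : C(Icc (0:ℝ) T, E) := ⟨fun t => F (t, u t), by fun_prop⟩
  have h1 := corr f g x₀ hT hf hg hx₀ hx₀T hN θ ε y u h (fun t => rfl) (fun t => rfl)
  rw [hH, smul_zero] at h1
  have hper : u (i0 hT) = u (iT hT) := by
    have := congrArg (fun w => w (i0 hT)) h1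
    simpa [sub_eq_zero, J_zero] using this
  have hu0 : u (i0 hT) = x 0 := by
    rw [h0]
    change x₀ (0 + θ) + ε • y (i0 hT) = _
    rw [zero_add]
  have h2 : u = cst _ (u (iT hT)) + J hT h := by rw [sub_sub, sub_eq_zero] at h1; exact h1
  have h3 := eq_flow hT F hF u h _ (fun t => rfl) h2 x (by rw [← hper, hu0]) hx
  refine ⟨h3, ?_⟩
  rw [← hu0, hper]
  exact h3 (iT hT)

lemma unsolve (hf : ContDiff ℝ 2 f)
    (hg : ContDiff ℝ 1 fun p : ℝ × E × ℝ => g p.1 p.2.1 p.2.2)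
    (hx₀ : ∀ t, HasDerivAt x₀ (f (x₀ t)) t) (hx₀T : ∀ t, x₀ (t + T) = x₀ t)
    (hN : ContDiff ℝ 1 (NN f g x₀)) (θ : ℝ) (ε : ℝ) (hε : 0 < ε)
    (x : ℝ → E) (hxT : x T = x 0)
    (hx : ∀ t, HasDerivAt x (f (x t) + ε • g t (x t) ε) t) :
    ∃ y : C(Icc (0:ℝ) T, E), H hT (NN f g x₀) hN.continuous (θ, y, ε) = 0 ∧
      ∀ t : Icc (0:ℝ) T, ε • y t = x t - x₀ (t + θ) := by
  have hxc : Continuous x₀ := continuous_iff_continuousAt.2 fun t => (hx₀ t).continuousAt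
  have hxxc : Continuous x := continuous_iff_continuousAt.2 fun t => (hx t).continuousAt
  have hac : Continuous fun t => x₀ (t + θ) := by fun_prop
  have hhc : Continuous fun t => f (x t) + ε • g t (x t) ε := by
    refine (hf.continuous.comp hxxc).add (Continuous.const_smul ?_ ε)
    exact hg.continuous.comp (f := fun t : ℝ => (t, x t, ε)) (by fun_prop)
  let y : C(Icc (0:ℝ) T, E) := ε⁻¹ • (res T x hxxc - res T _ hac)
  have hy : ∀ t : Icc (0:ℝ) T, ε • y t = x t - x₀ (t + θ) := by
    intro t
    change ε • (ε⁻¹ • (x t - x₀ (t + θ))) = _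
    rw [smul_inv_smul₀ hε.ne']
  refine ⟨y, ?_, hy⟩
  have h1 := corr f g x₀ hT hf hg hx₀ hx₀T hN θ ε y (res T x hxxc) (res T _ hhc) (fun t => by
    rw [hy]; simp) (fun t => rfl)
  have h2 : res T x hxxc - cst _ (res T x hxxc (iT hT)) - J hT (res T _ hhc) = 0 := by
    ext1 t
    have := J_of_deriv hT x (res T _ hhc) (fun t => hx t) t
    change x t - x T - J hT (res T _ hhc) t = 0
    rw [this, hxT]; abel
  rw [h2] at h1
  exact (smul_eq_zero.1 h1.symm).resolve_left hε.ne'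

lemma x_contDiff (hf : ContDiff ℝ 2 f) (hx₀ : ∀ t, HasDerivAt x₀ (f (x₀ t)) t) :
    ContDiff ℝ 1 x₀ := by
  have hxc : Continuous x₀ := continuous_iff_continuousAt.2 fun t => (hx₀ t).continuousAt
  rw [contDiff_one_iff_deriv]
  refine ⟨fun t => (hx₀ t).differentiableAt, ?_⟩
  have : deriv x₀ = fun t => f (x₀ t) := funext fun t => (hx₀ t).deriv
  rw [this]; exact hf.continuous.comp hxc
end fin
end
end Malkin

/-- Theorem 3, existence and uniqueness: if `(𝒫₀)'(x₀(θ₀)) − I` has `n−1`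
eigenvalues with negative real parts, `M(θ₀) = 0` and `M'(θ₀) < 0`, then for all small
`ε > 0` the perturbed system has a unique `T`-periodic solution `x_ε` near `x₀(·+θ₀)`,
and `x_ε → x₀(·+θ₀)` uniformly on `[0,T]` as `ε → 0⁺`. -/
theorem stmt_13 {n : ℕ} (T : ℝ) (hT : 0 < T)
    (f : EuclideanSpace ℝ (Fin n) → EuclideanSpace ℝ (Fin n))
    (hf : ContDiff ℝ 2 f)
    (g : ℝ → EuclideanSpace ℝ (Fin n) → ℝ → EuclideanSpace ℝ (Fin n))
    (hg : ContDiff ℝ 1 fun p : ℝ × EuclideanSpace ℝ (Fin n) × ℝ => g p.1 p.2.1 p.2.2)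
    (hgT : ∀ t x e, g (t + T) x e = g t x e)
    (X : ℝ → EuclideanSpace ℝ (Fin n) → ℝ → EuclideanSpace ℝ (Fin n))
    (hX0 : ∀ v ε, X 0 v ε = v)
    (hXode : ∀ v ε t, HasDerivAt (fun s => X s v ε)
      (f (X t v ε) + ε • g t (X t v ε) ε) t)
    (hXuniq : ∀ v ε (u : ℝ → EuclideanSpace ℝ (Fin n)), u 0 = v →
      (∀ t, HasDerivAt u (f (u t) + ε • g t (u t) ε) t) → ∀ t, u t = X t v ε)
    (x₀ : ℝ → EuclideanSpace ℝ (Fin n))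
    (hx₀ : ∀ t, HasDerivAt x₀ (f (x₀ t)) t)
    (hx₀T : ∀ t, x₀ (t + T) = x₀ t)
    (z₀ : ℝ → EuclideanSpace ℝ (Fin n))
    (hz₀ : ∀ t, HasDerivAt z₀ (-(ContinuousLinearMap.adjoint (fderiv ℝ f (x₀ t)) (z₀ t))) t)
    (hz₀T : ∀ t, z₀ (t + T) = z₀ t)
    (hnorm : ∀ t, ⟪deriv x₀ t, z₀ t⟫_ℝ = 1)
    (θ₀ : ℝ) (hθ₀ : θ₀ ∈ Icc (0:ℝ) T)
    -- `(𝒫₀)'(x₀(θ₀)) − I` has `n−1` eigenvalues with negative real parts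
    (heig : Multiset.card
      (((Matrix.charpoly (fun i j : Fin n =>
          ⟪fderiv ℝ (fun v => X T v 0) (x₀ θ₀) (EuclideanSpace.single j 1),
            EuclideanSpace.single i 1⟫_ℝ - if i = j then (1:ℝ) else 0)).map
        (algebraMap ℝ ℂ)).roots.filter fun μ : ℂ => μ.re < 0) = n - 1)
    -- `M(θ₀) = 0`
    (hM0 : (∫ t in (0:ℝ)..T, ⟪g t (x₀ (t + θ₀)) 0, z₀ (t + θ₀)⟫_ℝ) = 0)
    -- `M'(θ₀) < 0`
    (m : ℝ) (hm : m < 0)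
    (hM' : HasDerivAt (fun θ => ∫ t in (0:ℝ)..T, ⟪g t (x₀ (t + θ)) 0, z₀ (t + θ)⟫_ℝ) m θ₀) :
    ∃ ε₀ > (0:ℝ), ∃ δ > (0:ℝ), ∃ sol : ℝ → ℝ → EuclideanSpace ℝ (Fin n),
      (∀ ε ∈ Ioc (0:ℝ) ε₀,
        ((∀ t, HasDerivAt (sol ε) (f (sol ε t) + ε • g t (sol ε t) ε) t) ∧
          (∀ t, sol ε (t + T) = sol ε t)) ∧
        (∀ t ∈ Icc (0:ℝ) T, ‖sol ε t - x₀ (t + θ₀)‖ ≤ δ) ∧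
        (∀ u : ℝ → EuclideanSpace ℝ (Fin n),
          (∀ t, HasDerivAt u (f (u t) + ε • g t (u t) ε) t) →
          (∀ t, u (t + T) = u t) →
          (∀ t ∈ Icc (0:ℝ) T, ‖u t - x₀ (t + θ₀)‖ ≤ δ) → u = sol ε)) ∧
      TendstoUniformlyOn (fun ε t => sol ε t) (fun t => x₀ (t + θ₀))
        (𝓝[>] (0:ℝ)) (Icc (0:ℝ) T) := by
  have hxc : Continuous x₀ := continuous_iff_continuousAt.2 fun t => (hx₀ t).continuousAt
  have hzc : Continuous z₀ := continuous_iff_continuousAt.2 fun t => (hz₀ t).continuousAt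
  have hN : ContDiff ℝ 1 (Malkin.NN f g x₀) :=
    Malkin.NN_contDiff f g x₀ hf hg (Malkin.x_contDiff f x₀ hf hx₀)
  have hA : Continuous fun t => fderiv ℝ f (x₀ (t + θ₀)) :=
    (hf.continuous_fderiv (by norm_num)).comp (by fun_prop)
  have hfz : ∀ t, ⟪f (x₀ t), z₀ t⟫_ℝ = 1 := fun t => by rw [← (hx₀ t).deriv]; exact hnorm t
  have hzθ : ∀ t, HasDerivAt (fun t => z₀ (t + θ₀))
      (-(ContinuousLinearMap.adjoint (fderiv ℝ f (x₀ (t + θ₀))) (z₀ (t + θ₀)))) t :=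
    fun t => (hz₀ (t + θ₀)).comp_add_const t θ₀
  have hzθT : z₀ (T + θ₀) = z₀ (0 + θ₀) := by rw [zero_add, ← hz₀T θ₀, add_comm]
  let ℓ : C(Icc (0:ℝ) T, EuclideanSpace ℝ (Fin n)) →L[ℝ] ℝ :=
    (innerSL ℝ (z₀ θ₀)) ∘L (Malkin.ev (Malkin.i0 hT))
  have hℓ : ∀ y, ℓ y = ⟪z₀ θ₀, y (Malkin.i0 hT)⟫_ℝ := fun y => rfl
  -- injectivity
  have hinj : ∀ β : C(Icc (0:ℝ) T, EuclideanSpace ℝ (Fin n)),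
      ∫ t in (0:ℝ)..T, ⟪Malkin.ext hT β t, z₀ (t + θ₀)⟫_ℝ ≠ 0 →
      ∀ (τ : ℝ) (y : C(Icc (0:ℝ) T, EuclideanSpace ℝ (Fin n))),
      y - Malkin.cst _ (y (Malkin.iT hT)) - Malkin.J hT (Malkin.mulOp (Malkin.res T _ hA) y) =
        τ • Malkin.J hT β → ℓ y = 0 → τ = 0 ∧ y = 0 := by
    intro β hβ τ y hy hℓy
    have hτ : τ = 0 := by
      have h1 := Malkin.pair_period hT _ hA (fun t => z₀ (t + θ₀)) hzθ hzθT y (τ • β)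
        (by rw [hy, map_smul])
      have h2 : ∫ t in (0:ℝ)..T, ⟪Malkin.ext hT (τ • β) t, z₀ (t + θ₀)⟫_ℝ =
          τ * ∫ t in (0:ℝ)..T, ⟪Malkin.ext hT β t, z₀ (t + θ₀)⟫_ℝ := by
        rw [← intervalIntegral.integral_const_mul]
        refine intervalIntegral.integral_congr fun t ht => ?_
        rw [uIcc_of_le hT.le] at ht
        change ⟪Malkin.ext hT (τ • β) t, z₀ (t + θ₀)⟫_ℝ = τ * ⟪Malkin.ext hT β t, z₀ (t + θ₀)⟫_ℝ
        rw [Malkin.ext_of_mem hT _ ht, Malkin.ext_of_mem hT _ ht, ContinuousMap.smul_apply,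
          real_inner_smul_left]
      rw [h2] at h1
      exact (mul_eq_zero.1 h1).resolve_right hβ
    refine ⟨hτ, ?_⟩
    rw [hτ, zero_smul] at hy
    refine Malkin.kernel_zero hT f (hf.of_le (by norm_num)) (fun t v => X t v 0)
      (fun v => hX0 v 0) (fun v t => by simpa using hXode v 0 t) (fun t => x₀ (t + θ₀))
      (fun t => (hx₀ (t + θ₀)).comp_add_const t θ₀)
      (by rw [zero_add, ← hx₀T θ₀, add_comm]) hA (by simpa only [zero_add] using heig) (z₀ θ₀)
      (by simpa only [zero_add] using hfz θ₀) y hy ?_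
    rw [real_inner_comm]; exact hℓy
  -- the function `y₀`
  have hfx : Continuous fun t => f (x₀ (t + θ₀)) := hf.continuous.comp (by fun_prop)
  have hgx : Continuous fun t => g t (x₀ (t + θ₀)) 0 :=
    hg.continuous.comp (f := fun t => (t, x₀ (t + θ₀), (0:ℝ))) (by fun_prop)
  have hβ₁ : ∫ t in (0:ℝ)..T, ⟪Malkin.ext hT (Malkin.res T _ hfx) t, z₀ (t + θ₀)⟫_ℝ = T := by
    refine (intervalIntegral.integral_congr (g := fun _ => (1:ℝ)) fun t ht => ?_).trans (by simp)
    rw [uIcc_of_le hT.le] at ht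
    change ⟪Malkin.ext hT _ t, z₀ (t + θ₀)⟫_ℝ = 1
    rw [Malkin.ext_of_mem hT _ ht]
    exact hfz _
  have hinj₁ := hinj (Malkin.res T _ hfx) (by rw [hβ₁]; exact hT.ne')
  obtain ⟨c, hc, hlow⟩ := Malkin.lower hT (Malkin.res T _ hA) ℓ _ hinj₁
  obtain ⟨y₀, h0, hℓ0⟩ : ∃ y₀ : C(Icc (0:ℝ) T, EuclideanSpace ℝ (Fin n)),
      Malkin.H hT (Malkin.NN f g x₀) hN.continuous (θ₀, y₀, 0) = 0 ∧ ℓ y₀ = 0 := by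
    obtain ⟨τ, y, h1, h2⟩ := Malkin.abs_surj
      ((Malkin.J (E := EuclideanSpace ℝ (Fin n)) hT) ∘L Malkin.mulOp (Malkin.res T _ hA))
      (Malkin.volterra hT _)
      (Malkin.cst (Icc (0:ℝ) T)) (Malkin.ev (Malkin.iT hT)) ℓ _ hinj₁
      (Malkin.J hT (Malkin.res T _ hgx)) 0
    replace h1 : y - Malkin.cst _ (y (Malkin.iT hT)) -
      Malkin.J hT (Malkin.mulOp (Malkin.res T _ hA) y) - τ • Malkin.J hT (Malkin.res T _ hfx) =
        Malkin.J hT (Malkin.res T _ hgx) := h1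
    have h3 := Malkin.pair_period hT _ hA (fun t => z₀ (t + θ₀)) hzθ hzθT y
      (τ • Malkin.res T _ hfx + Malkin.res T _ hgx) (by
        rw [map_add, map_smul, ← h1]; abel)
    have h4 : ∫ t in (0:ℝ)..T, ⟪Malkin.ext hT (τ • Malkin.res T _ hfx + Malkin.res T _ hgx) t,
        z₀ (t + θ₀)⟫_ℝ = ∫ t in (0:ℝ)..T, (τ + ⟪g t (x₀ (t + θ₀)) 0, z₀ (t + θ₀)⟫_ℝ) := by
      refine intervalIntegral.integral_congr fun t ht => ?_
      rw [uIcc_of_le hT.le] at ht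
      change ⟪Malkin.ext hT (τ • Malkin.res T _ hfx + Malkin.res T _ hgx) t, z₀ (t + θ₀)⟫_ℝ =
        τ + ⟪g t (x₀ (t + θ₀)) 0, z₀ (t + θ₀)⟫_ℝ
      rw [Malkin.ext_of_mem hT _ ht]
      change ⟪τ • f (x₀ (t + θ₀)) + g t (x₀ (t + θ₀)) 0, z₀ (t + θ₀)⟫_ℝ = _
      rw [inner_add_left, real_inner_smul_left, hfz, mul_one]
    rw [h4, intervalIntegral.integral_add (by simp)
      ((hgx.inner (by fun_prop)).intervalIntegrable _ _), hM0] at h3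
    have hτ : τ = 0 := by simpa [hT.ne'] using h3
    rw [hτ, zero_smul, sub_zero] at h1
    refine ⟨y, ?_, h2⟩
    have h5 : Malkin.Nem (Malkin.NN f g x₀) hN.continuous (θ₀, y, 0) =
        Malkin.mulOp (Malkin.res T _ hA) y + Malkin.res T _ hgx := by
      ext1 s
      exact Malkin.NN_zero f g x₀ s θ₀ (y s)
    change y - Malkin.cst _ (y (Malkin.iT hT)) - Malkin.J hT _ = 0
    rw [h5, map_add, ← h1]; abel
  obtain ⟨β, hβ, hβm⟩ := Malkin.key hT f g x₀ hf hg hxc hN θ₀ z₀ hz₀ hz₀T m hM' y₀ h0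
  obtain ⟨U, hU, Φ, hΦ, hΦe, hUuniq⟩ := Malkin.core hT (Malkin.NN f g x₀) hN θ₀ y₀
    (Malkin.res T _ hA) (fun s v => Malkin.NN_fderiv_y f g x₀ hN s θ₀ (y₀ s) v) ℓ β hβ
    (hinj β (by rw [hβm]; exact hm.ne)) h0 hℓ0
  obtain ⟨r, hr, hap⟩ := Malkin.ap2 hT f g x₀ hf hg hxc hN θ₀ hA ℓ c hc hlow z₀ hz₀ hz₀T hM0 m hm
    hM' y₀ h0 hℓ0
  obtain ⟨ε₁, hε₁, hapU⟩ := hap U hU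
  -- choice of `δ`
  obtain ⟨r', hr', hxr⟩ := Metric.eventually_nhds_iff.1
    (Malkin.unif (T := T) x₀ hxc θ₀ (r / 2) (by positivity))
  obtain ⟨δ', hδ', hph⟩ := Malkin.phase x₀ (f (x₀ θ₀)) (z₀ θ₀) θ₀ (hx₀ θ₀) hxc (hfz θ₀)
    (min r (r' / 2)) (by positivity)
  -- the solutions
  let sol : ℝ → ℝ → EuclideanSpace ℝ (Fin n) := fun ε t =>
    X t (x₀ (Φ ε).1 + ε • (Φ ε).2.1 (Malkin.i0 hT)) ε
  have hsol0 : ∀ ε, sol ε 0 = x₀ (Φ ε).1 + ε • (Φ ε).2.1 (Malkin.i0 hT) := fun ε => hX0 _ _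
  have hsol : ∀ ε, (Φ ε).2.2 = ε → Malkin.H hT (Malkin.NN f g x₀) hN.continuous (Φ ε) = 0 →
      (∀ t : Icc (0:ℝ) T, sol ε t = x₀ (t + (Φ ε).1) + ε • (Φ ε).2.1 t) ∧ sol ε T = sol ε 0 := by
    intro ε h1 h2
    refine Malkin.solve hT f g x₀ hf hg hx₀ hx₀T hN (Φ ε).1 (Φ ε).2.1 ε ?_ (sol ε) (hsol0 ε)
      (fun t => hXode _ _ t)
    have : Φ ε = ((Φ ε).1, (Φ ε).2.1, ε) :=
      Prod.ext rfl (Prod.ext rfl h1)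
    rwa [← this]
  have hconv : ∀ η > 0, ∀ᶠ ε in 𝓝 (0:ℝ), ∀ t ∈ Icc (0:ℝ) T, ‖sol ε t - x₀ (t + θ₀)‖ < η := by
    intro η hη
    have h1 : Tendsto (fun ε => (Φ ε).1) (𝓝 0) (𝓝 θ₀) := (continuous_fst.tendsto _).comp hΦ
    have h2 : Tendsto (fun ε => (Φ ε).2.1) (𝓝 0) (𝓝 y₀) :=
      ((continuous_fst.comp continuous_snd).tendsto _).comp hΦ
    have h3 : Tendsto (fun ε : ℝ => ‖ε • (Φ ε).2.1‖) (𝓝 0) (𝓝 0) := by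
      have := ((continuous_id.tendsto (0:ℝ)).smul h2).norm
      simpa using this
    filter_upwards [h1.eventually (Malkin.unif (T := T) x₀ hxc θ₀ (η / 2) (by positivity)),
      h3.eventually_lt_const (half_pos hη), hΦe] with ε e1 e2 e3 t ht
    have e4 := (hsol ε e3.1 e3.2.1).1 ⟨t, ht⟩
    simp only at e4
    rw [e4]
    have e5 := e1 t ht
    have e6 : ‖ε • (Φ ε).2.1 ⟨t, ht⟩‖ < η / 2 :=
      lt_of_le_of_lt ((ε • (Φ ε).2.1).norm_coe_le_norm ⟨t, ht⟩) e2
    calc _ = ‖(x₀ (t + (Φ ε).1) - x₀ (t + θ₀)) + ε • (Φ ε).2.1 ⟨t, ht⟩‖ := by congr 1; abel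
      _ ≤ _ := norm_add_le _ _
      _ < η := by linarith
  obtain ⟨ε₂, hε₂, hall⟩ := Metric.eventually_nhds_iff.1
    ((hconv (min δ' (r / 2)) (by positivity)).and (hΦe.and (hΦ.eventually hU)))
  refine ⟨min ε₁ (ε₂ / 2), by positivity, min δ' (r / 2), by positivity, sol, ?_, ?_⟩
  · rintro ε ⟨hε, hεle⟩
    obtain ⟨hclose, ⟨hΦ1, hΦ2, hΦ3⟩, hΦU⟩ := hall (y := ε) (by
      rw [Real.dist_eq, sub_zero, abs_of_pos hε]
      exact lt_of_le_of_lt (hεle.trans (min_le_right _ _)) (by linarith))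
    obtain ⟨-, hsT⟩ := hsol ε hΦ1 hΦ2
    have hode : ∀ t, HasDerivAt (sol ε) (f (sol ε t) + ε • g t (sol ε t) ε) t :=
      fun t => hXode _ _ t
    refine ⟨⟨hode, ?_⟩, fun t ht => (hclose t ht).le, ?_⟩
    · refine hXuniq _ ε (fun t => sol ε (t + T)) (by simp only [zero_add]; rw [hsT]; exact hsol0 ε)
        (fun t => ?_)
      have := (hode (t + T)).comp_add_const t T
      rwa [hgT] at this
    · intro u hu huT huδ
      have hu0 : ‖u 0 - x₀ θ₀‖ ≤ δ' := by
        have := huδ 0 ⟨le_rfl, hT.le⟩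
        rw [zero_add] at this
        exact this.trans (min_le_left _ _)
      obtain ⟨θ, hθ, hθz⟩ := hph (u 0) hu0
      obtain ⟨y, hyH, hy⟩ := Malkin.unsolve hT f g x₀ hf hg hx₀ hx₀T hN θ ε hε u
        (by simpa using huT 0) hu
      have hyr : ‖ε • y‖ ≤ r := by
        refine (ContinuousMap.norm_le _ hr.le).2 fun t => ?_
        rw [ContinuousMap.smul_apply, hy]
        have e1 := huδ t t.2
        have e2 := hxr (y := θ) (by
          rw [Real.dist_eq]
          exact lt_of_le_of_lt (hθ.trans (min_le_right _ _)) (by linarith)) t t.2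
        have e3 := e1.trans (min_le_right _ _)
        calc _ = ‖(u t - x₀ (t + θ₀)) - (x₀ (t + θ) - x₀ (t + θ₀))‖ := by congr 1; abel
          _ ≤ _ := norm_sub_le _ _
          _ ≤ r := by linarith
      have hy0 : ε • y (Malkin.i0 hT) = u 0 - x₀ θ := by
        have := hy (Malkin.i0 hT)
        rw [this]
        change u 0 - x₀ (0 + θ) = _
        rw [zero_add]
      have hℓy : ℓ y = 0 := by
        rw [hℓ, real_inner_comm]
        rw [← hy0, real_inner_smul_left] at hθz
        exact (mul_eq_zero.1 hθz).resolve_left hε.ne'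
      have hin := hapU θ y ε hε (hεle.trans (min_le_left _ _)) (hθ.trans (min_le_left _ _)) hyr
        hyH hℓy
      have heq := hUuniq _ hin _ hΦU hΦ1.symm hyH hΦ2 hℓy hΦ3
      have hu0' : u 0 = x₀ (Φ ε).1 + ε • (Φ ε).2.1 (Malkin.i0 hT) := by
        rw [← heq]
        simp only
        rw [hy0]; abel
      funext t
      exact hXuniq _ ε u hu0' hu t
  · rw [Metric.tendstoUniformlyOn_iff]
    intro η hη
    filter_upwards [mem_nhdsWithin_of_mem_nhds (hconv η hη)] with ε h t ht
    rw [dist_comm, dist_eq_norm]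
    exact h t ht
end
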